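/- arXiv:1506.08041 — 2 statements merged into one kernel-verified Lean document; each statement's English description precedes it below -/
import Mathlib

section
/- For every natural number N there exists a constant C = C(N) > 0 with the following property: if r > 0 and u, v are harmonic functions on the open disc B_r ⊂ ℝ² of radius r centered at the origin, neither identically zero, such that Z(u) = Z(v), the number of connected components of B_r ∖ Z(u) is less than N, and v(0) ≠ 0, then |∇(u/v)(0)| ≤ C · r⁻¹ · |u(0)/v(0)|. -/
open Metric Set Filter

noncomputable section

abbrev En (n : ℕ) : Type := EuclideanSpace ℝ (Fin n)

/-- The Laplacian of `u` at `x`, computed from the second iterated Fréchet derivative. -/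
def laplacianAt {n : ℕ} (u : En n → ℝ) (x : En n) : ℝ :=
  ∑ i : Fin n, iteratedFDeriv ℝ 2 u x ![EuclideanSpace.single i 1, EuclideanSpace.single i 1]

/-- `u` is harmonic on `Ω`: twice continuously differentiable with vanishing Laplacian. -/
def HarmonicOnSet {n : ℕ} (u : En n → ℝ) (Ω : Set (En n)) : Prop :=
  ContDiffOn ℝ 2 u Ω ∧ ∀ x ∈ Ω, laplacianAt u x = 0

/-- The zero set of `u` within `Ω`. -/
def zeroSet {n : ℕ} (u : En n → ℝ) (Ω : Set (En n)) : Set (En n) :=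
  {x ∈ Ω | u x = 0}

/-- The collection of nodal domains of `u` in `Ω`, i.e. the connected components of
`Ω \ Z(u)`. -/
def nodalComponents {n : ℕ} (u : En n → ℝ) (Ω : Set (En n)) : Set (Set (En n)) :=
  {C | ∃ x ∈ Ω \ zeroSet u Ω, C = connectedComponentIn (Ω \ zeroSet u Ω) x}

section

open Topology

theorem exists_continuousOn_log_sub {K : Set ℂ} (hK : IsCompact K) {F : ℂ → ℂ}
    (hF : ContinuousOn F (ball 0 1))
    (hopen : ∀ p ∈ ball (0 : ℂ) 1, 𝓝 (F p) ≤ map F (𝓝 p))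
    (hKb : K ⊆ ball 0 1) (hKF : ∀ z ∈ K, (F z).re ≠ 0 ∨ F z = 0)
    {a : ℂ} (har : (F a).re = 0) (hai : F a ≠ 0) :
    ∃ L : ℂ → ℂ, ContinuousOn L K ∧ ∀ z ∈ K, Complex.exp (L z) = z - a := by
  have haK : a ∉ K := fun h => by
    rcases hKF a h with h | h
    · exact h har
    · exact hai h
  obtain ⟨ρ, hρ1, hρ⟩ : ∃ ρ < 1, K ⊆ closedBall (0 : ℂ) ρ := by
    rcases K.eq_empty_or_nonempty with rfl | hne
    · exact ⟨0, by norm_num, by simp⟩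
    · obtain ⟨p, hp, hmax⟩ := hK.exists_isMaxOn hne continuous_norm.continuousOn
      refine ⟨‖p‖, by simpa using hKb hp, fun z hz => ?_⟩
      simpa using hmax hz
  set C := connectedComponentIn Kᶜ a with hC
  have hKo : IsOpen Kᶜ := hK.isClosed.isOpen_compl
  have hCK : C ⊆ Kᶜ := connectedComponentIn_subset _ _
  have haC : a ∈ C := mem_connectedComponentIn haK
  by_cases hout : ∃ c ∈ C, ρ < ‖c‖
  · obtain ⟨c, hcC, hc⟩ := hout
    let P : ℂ → ℂ → Prop := fun x y =>
      ∃ L : ℂ → ℂ, ContinuousOn L K ∧ ∀ z ∈ K, Complex.exp (L z) = (z - x) / (z - y)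
    have key : P a c := by
      refine IsPreconnected.induction₂ isPreconnected_connectedComponentIn P ?_ ?_ ?_ haC hcC
      · intro x hx
        have hxK := hCK hx
        obtain ⟨ε, hε, hb⟩ := Metric.isOpen_iff.1 hKo x hxK
        have : ∀ᶠ y in 𝓝 x, ‖y - x‖ < ε / 2 := by
          have := Metric.ball_mem_nhds x (half_pos hε)
          filter_upwards [this] with y hy
          simpa [dist_eq_norm] using hy
        refine (Filter.Eventually.filter_mono nhdsWithin_le_nhds this).mono fun y hy => ?_
        refine ⟨fun z => Complex.log ((z - x) / (z - y)), ?_, ?_⟩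
        · have hz0 : ∀ z ∈ K, ε ≤ ‖z - x‖ := fun z hz => by
            by_contra h
            push Not at h
            exact hb (by simpa [dist_eq_norm] using h) hz
          have hzy : ∀ z ∈ K, ‖y - x‖ < ‖z - y‖ := fun z hz => by
            have h1 := hz0 z hz
            have h2 : ‖z - x‖ ≤ ‖z - y‖ + ‖y - x‖ := by
              simpa using norm_add_le (z - y) (y - x)
            linarith
          have hne : ∀ z ∈ K, z - y ≠ 0 := fun z hz h => by
            have := hzy z hz
            rw [h, norm_zero] at this
            exact absurd this (not_lt.2 (norm_nonneg _))
          refine ContinuousOn.clog ?_ ?_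
          · exact ContinuousOn.div (by fun_prop) (by fun_prop) hne
          · intro z hz
            have : (z - x) / (z - y) = 1 + (y - x) / (z - y) := by
              field_simp [hne z hz]
              ring
            rw [this]
            refine Complex.mem_slitPlane_of_norm_lt_one ?_
            rw [norm_div, div_lt_one (norm_pos_iff.2 (hne z hz))]
            exact hzy z hz
        · intro z hz
          have hz0 : ε ≤ ‖z - x‖ := by
            by_contra h
            push Not at h
            exact hb (by simpa [dist_eq_norm] using h) hz
          refine Complex.exp_log (div_ne_zero ?_ ?_)
          · intro h
            rw [h, norm_zero] at hz0
            linarith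
          · intro h
            have h' : y - x = z - x := by linear_combination -h
            rw [h'] at hy
            linarith
      · rintro x y z hx hy hz ⟨L, hL, hL'⟩ ⟨M, hM, hM'⟩
        refine ⟨fun t => L t + M t, hL.add hM, fun t ht => ?_⟩
        have : t - y ≠ 0 := fun h => hCK hy (by rwa [sub_eq_zero.1 h] at ht)
        rw [Complex.exp_add, hL' t ht, hM' t ht]
        field_simp
      · rintro x y hx hy ⟨L, hL, hL'⟩
        refine ⟨fun t => - L t, hL.neg, fun t ht => ?_⟩
        rw [Complex.exp_neg, hL' t ht, inv_div]
    obtain ⟨L, hL, hL'⟩ := key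
    have hρ0 : c ≠ 0 ∨ K = ∅ := by
      by_cases h : c = 0
      · right
        refine Set.eq_empty_of_forall_notMem fun z hz => ?_
        have h1 : ‖z‖ ≤ ρ := by simpa using hρ hz
        have := norm_nonneg z
        rw [h, norm_zero] at hc
        linarith
      · exact Or.inl h
    rcases hρ0 with hc0 | hK0
    · refine ⟨fun z => L z + (Complex.log (1 - z / c) + Complex.log (-c)), ?_, ?_⟩
      · refine hL.add (ContinuousOn.add (ContinuousOn.clog (by fun_prop) ?_) continuousOn_const)
        intro z hz
        rw [sub_eq_add_neg]
        refine Complex.mem_slitPlane_of_norm_lt_one ?_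
        rw [norm_neg, norm_div, div_lt_one (norm_pos_iff.2 hc0)]
        exact lt_of_le_of_lt (by simpa using hρ hz) hc
      · intro z hz
        have h1 : z - c ≠ 0 := fun h => hCK hcC (by rwa [sub_eq_zero.1 h] at hz)
        have h2 : 1 - z / c ≠ 0 := by
          intro h
          apply h1
          field_simp at h
          linear_combination -h
        rw [Complex.exp_add, Complex.exp_add, hL' z hz, Complex.exp_log h2,
          Complex.exp_log (neg_ne_zero.2 hc0)]
        field_simp
        ring
    · exact ⟨0, by simp [hK0], by simp [hK0]⟩
  · push Not at hout
    exfalso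
    have hCρ : closure C ⊆ closedBall (0 : ℂ) ρ :=
      closure_minimal (fun c hc => by simpa using hout c hc) isClosed_closedBall
    have hCb : closure C ⊆ ball (0 : ℂ) 1 := hCρ.trans (closedBall_subset_ball hρ1)
    have hCc : IsCompact (closure C) := (isCompact_closedBall _ _).of_isClosed_subset
      isClosed_closure hCρ
    set y := (F a).im with hy
    have hy0 : y ≠ 0 := fun h => hai (Complex.ext har h)
    have hcont : ContinuousOn F (closure C) := hF.mono hCb
    let T : Set ℂ := closure C ∩ F ⁻¹' {w | w.re = 0 ∧ y * y ≤ w.im * y}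
    have hT : IsCompact T := by
      refine hCc.of_isClosed_subset ?_ inter_subset_left
      refine hcont.preimage_isClosed_of_isClosed isClosed_closure ?_
      refine IsClosed.inter ?_ ?_
      · exact isClosed_eq Complex.continuous_re continuous_const
      · exact isClosed_le continuous_const (Complex.continuous_im.mul continuous_const)
    have haT : a ∈ T := ⟨subset_closure haC, har, le_rfl⟩
    obtain ⟨p, hpT, hpmax⟩ := hT.exists_isMaxOn (f := fun z => (F z).im * y) ⟨a, haT⟩
      ((Complex.continuous_im.comp_continuousOn (hcont.mono inter_subset_left)).mul
        continuousOn_const)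
    have hpos : 0 < y * y := mul_self_pos.2 hy0
    have hpK : p ∉ K := fun h => by
      rcases hKF p h with h | h
      · exact h hpT.2.1
      · have := hpT.2.2
        rw [h] at this
        simp at this
        nlinarith
    have hpC : p ∈ C := by
      have hop : IsOpen (connectedComponentIn Kᶜ p) := hKo.connectedComponentIn
      obtain ⟨q, hq1, hq2⟩ := mem_closure_iff.1 hpT.1 _ hop (mem_connectedComponentIn hpK)
      have h1 := connectedComponentIn_eq hq1
      have h2 := connectedComponentIn_eq hq2
      rw [hC, h2, ← h1]
      exact mem_connectedComponentIn hpK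
    have hCo : IsOpen C := hKo.connectedComponentIn
    have hnh : F '' C ∈ 𝓝 (F p) :=
      hopen p (hCb hpT.1) (image_mem_map (hCo.mem_nhds hpC))
    have hlim : Tendsto (fun s : ℝ => F p + (s * y : ℝ) * Complex.I) (𝓝[>] 0) (𝓝 (F p)) := by
      have : Continuous fun s : ℝ => F p + (s * y : ℝ) * Complex.I := by fun_prop
      have h := this.tendsto 0
      simp only [zero_mul, Complex.ofReal_zero, add_zero] at h
      exact h.mono_left nhdsWithin_le_nhds
    obtain ⟨s, ⟨q, hqC, hq⟩, hs⟩ := ((hlim.eventually_mem hnh).and self_mem_nhdsWithin).exists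
    have hs : 0 < s := hs
    have hqre : (F q).re = 0 := by rw [hq]; simp [hpT.2.1]
    have hqim : (F q).im = (F p).im + s * y := by rw [hq]; simp
    have hm : (F q).im * y ≤ (F p).im * y := hpmax (a := q) ⟨subset_closure hqC, hqre, by
      show y * y ≤ (F q).im * y
      have h2 : y * y ≤ (F p).im * y := hpT.2.2
      rw [hqim]; nlinarith⟩
    rw [hqim] at hm
    nlinarith

theorem continuousOn_log_sub_eq {X : Type*} [TopologicalSpace X] {S : Set X}
    (hS : IsPreconnected S) {L M : X → ℂ}
    (hL : ContinuousOn L S) (hM : ContinuousOn M S) {c : ℂ} 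
    (h : ∀ z ∈ S, Complex.exp (L z) = c * Complex.exp (M z)) {x y : X} (hx : x ∈ S) (hy : y ∈ S) :
    L x - M x = L y - M y := by
  have hperiod : ∀ z ∈ S, ∃ n : ℤ, L z - M z = (L x - M x) + n * (2 * Real.pi * Complex.I) := by
    intro z hz
    rw [← Complex.exp_eq_exp_iff_exists_int, Complex.exp_sub, Complex.exp_sub, h z hz, h x hx]
    field_simp [Complex.exp_ne_zero]
  have hpi := Real.pi_pos
  set f : X → ℝ := fun z => (L z - M z - (L x - M x)).im / (2 * Real.pi) with hf
  have hfc : ContinuousOn f S :=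
    (Complex.continuous_im.comp_continuousOn ((hL.sub hM).sub continuousOn_const)).div_const _
  have hfm : MapsTo f S (range ((↑) : ℤ → ℝ)) := by
    intro z hz
    obtain ⟨n, hn⟩ := hperiod z hz
    refine ⟨n, ?_⟩
    simp only [hf, hn]
    simp
  have hd : IsDiscrete (range ((↑) : ℤ → ℝ)) := 
    Int.isClosedEmbedding_coe_real.isEmbedding.isDiscrete_range
  have := hS.constant_of_mapsTo hd hfc hfm hx hy
  obtain ⟨n, hn⟩ := hperiod y hy
  have h0 : f x = 0 := by simp [hf]
  have h1 : f y = n := by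
    simp only [hf, hn]
    simp
  have : (n : ℝ) = 0 := by rw [← h1, ← this, h0]
  have : n = 0 := by exact_mod_cast this
  rw [hn, this]; simp

theorem log_sub_log_ne {t : ℝ} {α β : ℂ} (hα : ‖α‖ < t) (hβ : ‖β‖ < t) (hαi : 0 < α.im)
    (hβi : β.im < 0) (hp : 0 < ((t - α) / (t - β)).re) (hm : 0 < ((-t - α) / (-t - β)).re) :
    Complex.log (t - α) - Complex.log (t - β) - Complex.log ((t - α) / (t - β)) ≠
      Complex.log (-t - α) - Complex.log (-t - β) - Complex.log ((-t - α) / (-t - β)) := by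
  intro h
  have hαr := (abs_le.1 (Complex.abs_re_le_norm α))
  have hβr := (abs_le.1 (Complex.abs_re_le_norm β))
  have h1 : (t - α : ℂ) ≠ 0 := fun h => by
    have := congrArg Complex.im h; simp at this; linarith
  have h2 : (t - β : ℂ) ≠ 0 := fun h => by
    have := congrArg Complex.im h; simp at this; linarith
  have hexp : Complex.exp (Complex.log (t - α) - Complex.log (t - β) -
      Complex.log ((t - α) / (t - β))) = 1 := by
    rw [Complex.exp_sub, Complex.exp_sub, Complex.exp_log h1, Complex.exp_log h2,
      Complex.exp_log (div_ne_zero h1 h2), div_self (div_ne_zero h1 h2)]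
  obtain ⟨n, hn⟩ := Complex.exp_eq_one_iff.1 hexp
  have hpi := Real.pi_pos
  have a1 := Complex.abs_arg_lt_pi_div_two_iff.2 (Or.inl hp)
  have a2 := Complex.abs_arg_lt_pi_div_two_iff.2 (Or.inl hm)
  have a3 : |(t - α : ℂ).arg| < Real.pi / 2 :=
    Complex.abs_arg_lt_pi_div_two_iff.2 (Or.inl (by simp; linarith))
  have a4 : |(t - β : ℂ).arg| < Real.pi / 2 :=
    Complex.abs_arg_lt_pi_div_two_iff.2 (Or.inl (by simp; linarith))
  have a5 : (-t - α : ℂ).arg < -(Real.pi / 2) := by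
    rw [← not_le, Complex.neg_pi_div_two_le_arg_iff]
    simp only [Complex.sub_re, Complex.neg_re, Complex.ofReal_re, Complex.sub_im, Complex.neg_im,
      Complex.ofReal_im]
    push Not
    constructor <;> linarith
  have a6 : Real.pi / 2 < (-t - β : ℂ).arg := by
    rw [← not_le, Complex.arg_le_pi_div_two_iff]
    simp only [Complex.sub_re, Complex.neg_re, Complex.ofReal_re, Complex.sub_im, Complex.neg_im,
      Complex.ofReal_im]
    push Not
    constructor <;> linarith
  have hL := congrArg Complex.im hn
  have hR := congrArg Complex.im (h.symm.trans hn)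
  simp only [Complex.sub_im, Complex.log_im] at hL hR
  simp at hL hR
  rw [abs_lt] at a1 a2 a3 a4
  have a7 : (t - α : ℂ).arg < 0 := Complex.arg_neg_iff.2 (by simpa using hαi)
  have a8 : 0 ≤ (t - β : ℂ).arg := Complex.arg_nonneg_iff.2 (by simp; linarith)
  have hn1 : -1 < n := by
    have : (-1 : ℝ) < n := by nlinarith
    exact_mod_cast this
  have hn2 : n < 0 := by
    have : (n : ℝ) < 0 := by nlinarith
    exact_mod_cast this
  omega

/-- A first-order zero of `F` separates, in the set `{re F ≠ 0} ∪ {F = 0}`, its two sides. -/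
theorem exists_segment_not_joinedIn {F : ℂ → ℂ} (hF : DifferentiableOn ℂ F (ball 0 1))
    (hopen : ∀ p ∈ ball (0 : ℂ) 1, 𝓝 (F p) ≤ map F (𝓝 p)) {p c : ℂ} (hp : p ∈ ball (0 : ℂ) 1)
    (h0 : F p = 0) (hd : deriv F p = c) (hc : c ≠ 0) :
    ∃ t₀ > 0, (∀ t : ℝ, |t| ≤ t₀ → p + t / c ∈ ball (0 : ℂ) 1 ∧
        (t ≠ 0 → (F (p + t / c)).re ≠ 0)) ∧
      ¬ JoinedIn ({z ∈ ball (0 : ℂ) 1 | (F z).re ≠ 0 ∨ F z = 0} \ {p})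
        (p + (t₀ : ℝ) / c) (p + (-t₀ : ℝ) / c) := by
  have hFan : AnalyticAt ℂ F p := hF.analyticAt (isOpen_ball.mem_nhds hp)
  have hstrict : HasStrictDerivAt F c p := hd ▸ hFan.hasStrictDerivAt
  have hder : HasDerivAt F c p := hstrict.hasDerivAt
  obtain ⟨δ, hδ, hδF⟩ : ∃ δ > 0, ∀ z, ‖z - p‖ < δ → z ∈ ball (0 : ℂ) 1 ∧
      ‖F z - c * (z - p)‖ ≤ (‖c‖ / 2) * ‖z - p‖ := by
    have h1 := (hasDerivAt_iff_isLittleO.1 hder).def (c := ‖c‖ / 2) (by positivity)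
    have h2 := h1.and (isOpen_ball.mem_nhds hp)
    obtain ⟨δ, hδ, h3⟩ := Metric.eventually_nhds_iff.1 h2
    refine ⟨δ, hδ, fun z hz => ⟨(h3 (by rwa [dist_eq_norm])).2, ?_⟩⟩
    have := (h3 (y := z) (by rwa [dist_eq_norm])).1
    rwa [h0, sub_zero, smul_eq_mul, mul_comm _ c] at this
  have hcn : 0 < ‖c‖ := norm_pos_iff.2 hc
  set t₀ : ℝ := δ * ‖c‖ / 2 with ht₀
  have ht₀p : 0 < t₀ := by positivity
  have hseg : ∀ t : ℝ, |t| ≤ t₀ → p + t / c ∈ ball (0 : ℂ) 1 ∧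
        (t ≠ 0 → (F (p + t / c)).re ≠ 0) := by
    intro t ht
    have hn : ‖(p + t / c) - p‖ = |t| / ‖c‖ := by simp
    have h1 := hδF (p + t / c) (by
      rw [hn, div_lt_iff₀ hcn]
      have : 0 < δ * ‖c‖ := by positivity
      linarith)
    refine ⟨h1.1, fun ht0 h2 => ?_⟩
    have h3 := h1.2
    have h4 : c * (p + t / c - p) = t := by field_simp; ring
    rw [hn, h4] at h3
    have h5 := (Complex.abs_re_le_norm _).trans h3
    rw [Complex.sub_re, h2, Complex.ofReal_re, zero_sub, abs_neg] at h5
    have h6 : ‖c‖ / 2 * (|t| / ‖c‖) = |t| / 2 := by field_simp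
    have := abs_pos.2 ht0
    linarith
  refine ⟨t₀, ht₀p, hseg, ?_⟩
  rintro ⟨γ, hγ⟩
  set ζ : ℂ → ℂ := fun z => c * (z - p) with hζ
  have hζc : Continuous ζ := by fun_prop
  have hζt : ∀ t : ℝ, ζ (p + t / c) = t := fun t => by simp only [hζ]; field_simp; ring
  have hΓc : IsCompact (range γ) := isCompact_range γ.continuous
  obtain ⟨d, hd0, hdΓ⟩ : ∃ d > 0, ∀ z ∈ range γ, d ≤ ‖ζ z‖ := by
    obtain ⟨z, hz, hmin⟩ := hΓc.exists_isMinOn (range_nonempty γ) hζc.norm.continuousOn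
    refine ⟨‖ζ z‖, ?_, fun w hw => hmin hw⟩
    obtain ⟨s, rfl⟩ := hz
    have : γ s ≠ p := (hγ s).2
    exact norm_pos_iff.2 (mul_ne_zero hc (sub_ne_zero.2 this))
  have hep : p + (t₀ : ℝ) / c ∈ range γ := ⟨0, by simp⟩
  have hem : p + (-t₀ : ℝ) / c ∈ range γ := ⟨1, by simp⟩
  have hdt : d ≤ t₀ := by
    have := hdΓ _ hep
    rwa [hζt, Complex.norm_real, Real.norm_of_nonneg ht₀p.le] at this
  -- points near `p` at which `F` is a small imaginary number
  obtain ⟨η, hη, hinv⟩ : ∃ η > 0, ∀ w : ℂ, ‖w‖ < η →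
      ∃ a, F a = w ∧ ‖ζ a - w‖ ≤ (1 / 2) * ‖w‖ := by
    have hl := hstrict.to_localInverse hc
    have he := hstrict.eventually_right_inverse hc
    rw [h0] at hl he
    have h1 := (hasDerivAt_iff_isLittleO.1 hl.hasDerivAt).def (c := 1 / (2 * ‖c‖)) (by positivity)
    obtain ⟨η, hη, h3⟩ := Metric.eventually_nhds_iff.1 (h1.and he)
    refine ⟨η, hη, fun w hw => ⟨_, (h3 (y := w) (by simpa using hw)).2, ?_⟩⟩
    have h4 := (h3 (y := w) (by simpa using hw)).1
    have h5 : hstrict.localInverse F c p hc 0 = p := by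
      have := (HasStrictDerivAt.eventually_left_inverse hstrict hc).self_of_nhds
      rwa [h0] at this
    rw [h5, sub_zero, smul_eq_mul] at h4
    have h6 : ζ (hstrict.localInverse F c p hc w) - w =
        c * (hstrict.localInverse F c p hc w - p - w * c⁻¹) := by
      simp only [hζ]; field_simp
    rw [h6, norm_mul]
    calc _ ≤ ‖c‖ * (1 / (2 * ‖c‖) * ‖w‖) := by gcongr
      _ = _ := by field_simp
  set y : ℝ := min (η / 2) (d / 16) with hy
  have hy0 : 0 < y := by positivity
  have hyη : y < η := (min_le_left _ _).trans_lt (by linarith)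
  have hyd : y ≤ d / 16 := min_le_right _ _
  have hny : ‖(y * Complex.I : ℂ)‖ = y := by simp [abs_of_pos hy0]
  obtain ⟨a, haF, ha⟩ := hinv (y * Complex.I) (by rwa [hny])
  obtain ⟨b, hbF, hb⟩ := hinv (-(y * Complex.I)) (by rwa [norm_neg, hny])
  rw [norm_neg] at hb
  rw [hny] at ha hb
  set α := ζ a with hα
  set β := ζ b with hβ
  have hαn : ‖α‖ < d / 4 := by
    have := norm_le_norm_add_norm_sub' α (y * Complex.I)
    rw [hny] at this; linarith
  have hβn : ‖β‖ < d / 4 := by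
    have := norm_le_norm_add_norm_sub' β (-(y * Complex.I))
    rw [norm_neg, hny] at this; linarith
  have hαi : 0 < α.im := by
    have := (abs_le.1 ((Complex.abs_im_le_norm _).trans ha)).1
    simp at this; linarith
  have hβi : β.im < 0 := by
    have := (abs_le.1 ((Complex.abs_im_le_norm _).trans hb)).2
    simp at this; linarith
  set V : Set ℂ := (fun t : ℝ => p + t / c) '' Icc (-t₀) t₀ with hV
  have hVc : IsCompact V := isCompact_Icc.image (by fun_prop)
  have hVp : IsPreconnected V := isPreconnected_Icc.image _ (by fun_prop)
  have hΓp : IsPreconnected (range γ) := isPreconnected_range γ.continuous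
  have hK : IsCompact (range γ ∪ V) := hΓc.union hVc
  have hKb : range γ ∪ V ⊆ ball 0 1 := by
    rintro z (⟨s, rfl⟩ | ⟨t, ht, rfl⟩)
    · exact (hγ s).1.1
    · exact (hseg t (abs_le.2 ht)).1
  have hKF : ∀ z ∈ range γ ∪ V, (F z).re ≠ 0 ∨ F z = 0 := by
    rintro z (⟨s, rfl⟩ | ⟨t, ht, rfl⟩)
    · exact (hγ s).1.2
    · by_cases h : t = 0
      · right; simp [h, h0]
      · left; exact (hseg t (abs_le.2 ht)).2 h
  have hyI : (y * Complex.I : ℂ) ≠ 0 := by rw [← norm_pos_iff, hny]; exact hy0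
  obtain ⟨La, hLac, hLa⟩ := exists_continuousOn_log_sub hK hF.continuousOn hopen hKb hKF
    (a := a) (by rw [haF]; simp) (by rwa [haF])
  obtain ⟨Lb, hLbc, hLb⟩ := exists_continuousOn_log_sub hK hF.continuousOn hopen hKb hKF
    (a := b) (by rw [hbF]; simp) (by rwa [hbF, neg_ne_zero])
  have hsub : ∀ z e, z - e = c⁻¹ * (ζ z - ζ e) := fun z e => by simp only [hζ]; field_simp; ring
  have hepV : p + (t₀ : ℝ) / c ∈ V := ⟨t₀, ⟨by linarith, le_rfl⟩, rfl⟩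
  have hemV : p + (-t₀ : ℝ) / c ∈ V := ⟨-t₀, ⟨le_rfl, by linarith⟩, by simp⟩
  have hVlog : ∀ (e : ℂ) (L : ℂ → ℂ), (ζ e).im ≠ 0 → ContinuousOn L (range γ ∪ V) →
      (∀ z ∈ range γ ∪ V, Complex.exp (L z) = z - e) →
      L (p + (t₀ : ℝ) / c) - Complex.log (t₀ - ζ e) =
        L (p + (-t₀ : ℝ) / c) - Complex.log (-t₀ - ζ e) := by
    intro e L he hLc hL
    have him : ∀ z ∈ V, (ζ z - ζ e).im ≠ 0 := by
      rintro z ⟨t, ht, rfl⟩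
      simp only [hζt]; simpa using he
    have := continuousOn_log_sub_eq hVp (L := L) (M := fun z => Complex.log (ζ z - ζ e)) (c := c⁻¹)
      (hLc.mono subset_union_right)
      (ContinuousOn.clog (by fun_prop) fun z hz => Or.inr (him z hz)) (fun z hz => by
        rw [hL z (Or.inr hz), Complex.exp_log, hsub]
        intro h; exact him z hz (by rw [h]; simp)) hepV hemV
    simp only [hζt] at this
    simpa using this
  have hVa := hVlog a La hαi.ne' hLac hLa
  have hVb := hVlog b Lb hβi.ne hLbc hLb
  have hq : ∀ z ∈ range γ, ζ z - β ≠ 0 ∧ 0 < ((ζ z - α) / (ζ z - β)).re := by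
    intro z hz
    have h1 := hdΓ z hz
    have h2 : d * (3 / 4) ≤ ‖ζ z - β‖ := by
      have := norm_sub_norm_le (ζ z) β; linarith
    have h3 : ζ z - β ≠ 0 := by rw [← norm_pos_iff]; linarith
    refine ⟨h3, ?_⟩
    have h4 : (ζ z - α) / (ζ z - β) - 1 = (β - α) / (ζ z - β) := by field_simp; ring
    have h5 : ‖(ζ z - α) / (ζ z - β) - 1‖ < 1 := by
      rw [h4, norm_div, div_lt_one (by linarith)]
      have := norm_sub_le β α; linarith
    have := (abs_lt.1 ((Complex.abs_re_le_norm _).trans_lt h5)).1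
    simp only [Complex.sub_re, Complex.one_re] at this; linarith
  have hΓ := continuousOn_log_sub_eq hΓp (L := fun z => La z - Lb z)
    (M := fun z => Complex.log ((ζ z - α) / (ζ z - β))) (c := 1)
    ((hLac.sub hLbc).mono subset_union_left)
    (ContinuousOn.clog (ContinuousOn.div (by fun_prop) (by fun_prop) fun z hz => (hq z hz).1)
      fun z hz => Or.inl (hq z hz).2) (fun z hz => by
        have hne : (ζ z - α) / (ζ z - β) ≠ 0 := fun h => by
          have := (hq z hz).2; rw [h] at this; simp at this
        rw [Complex.exp_sub, hLa z (Or.inl hz), hLb z (Or.inl hz), Complex.exp_log hne, one_mul,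
          hsub z a, hsub z b, mul_div_mul_left _ _ (inv_ne_zero hc)]) hep hem
  have hqp := (hq _ hep).2
  have hqm := (hq _ hem).2
  simp only [hζt] at hΓ hqp hqm
  push_cast at hΓ hqp hqm hVa hVb
  refine log_sub_log_ne (t := t₀) (by linarith) (by linarith) hαi hβi hqp hqm ?_
  linear_combination hΓ - hVa + hVb

/-- `F` is holomorphic on the unit disc, `re F` does not vanish identically, and
`{re F ≠ 0}` has at most `N` path components. -/
def Admissible (N : ℕ) (F : ℂ → ℂ) : Prop :=
  DifferentiableOn ℂ F (ball 0 1) ∧ (∃ z ∈ ball (0 : ℂ) 1, (F z).re ≠ 0) ∧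
    ∃ c : ℂ → Fin N, ∀ x ∈ ball (0 : ℂ) 1, ∀ y ∈ ball (0 : ℂ) 1, (F x).re ≠ 0 → (F y).re ≠ 0 →
      c x = c y → JoinedIn {z ∈ ball (0 : ℂ) 1 | (F z).re ≠ 0} x y

namespace Admissible

variable {N : ℕ} {F : ℂ → ℂ}

theorem sub_I (hA : Admissible N F) (y : ℝ) : Admissible N (fun z => F z - y * Complex.I) := by
  obtain ⟨h1, h2, h3⟩ := hA
  exact ⟨h1.sub_const _, by simpa using h2, by simpa using h3⟩

theorem not_eventually_const (hA : Admissible N F) {q : ℂ} (hq : q ∈ ball (0 : ℂ) 1)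
    (hq0 : (F q).re = 0) {p : ℂ} (hp : p ∈ ball (0 : ℂ) 1) : ¬ ∀ᶠ z in 𝓝 p, F z = F p := by
  intro h
  obtain ⟨w, hw, hwn⟩ := hA.2.1
  have h1 : EqOn F (fun _ => F p) (ball 0 1) :=
    (hA.1.analyticOnNhd isOpen_ball).eqOn_of_preconnected_of_eventuallyEq analyticOnNhd_const
      (convex_ball _ _).isPreconnected hp h
  rw [h1 hw] at hwn
  rw [h1 hq] at hq0
  exact hwn hq0

theorem nhds_le_map (hA : Admissible N F) {q : ℂ} (hq : q ∈ ball (0 : ℂ) 1)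
    (hq0 : (F q).re = 0) : ∀ p ∈ ball (0 : ℂ) 1, 𝓝 (F p) ≤ map F (𝓝 p) := fun _ hp =>
  ((hA.1.analyticAt (isOpen_ball.mem_nhds hp)).eventually_constant_or_nhds_le_map_nhds).resolve_left
    (hA.not_eventually_const hq hq0 hp)

theorem card_le_of_deriv_ne_zero (hA : Admissible N F) (S : Finset ℂ)
    (hS : ∀ z ∈ S, z ∈ ball (0 : ℂ) 1 ∧ F z = 0 ∧ deriv F z ≠ 0) : S.card ≤ N := by
  classical
  have key : ∀ z : S, ∃ t₀ > 0, (∀ t : ℝ, |t| ≤ t₀ → (z : ℂ) + t / deriv F z ∈ ball (0 : ℂ) 1 ∧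
        (t ≠ 0 → (F (z + t / deriv F z)).re ≠ 0)) ∧
      ¬ JoinedIn ({w ∈ ball (0 : ℂ) 1 | (F w).re ≠ 0 ∨ F w = 0} \ {(z : ℂ)})
        (z + (t₀ : ℝ) / deriv F z) (z + (-t₀ : ℝ) / deriv F z) := fun z =>
    exists_segment_not_joinedIn hA.1 (hA.nhds_le_map (hS z z.2).1 (by simp [(hS z z.2).2.1]))
      (hS z z.2).1 (hS z z.2).2.1 rfl (hS z z.2).2.2
  choose t ht hseg hnj using key
  obtain ⟨c, hc⟩ := hA.2.2
  set P : S → ℂ := fun z => z + (t z : ℝ) / deriv F z with hP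
  set M : S → ℂ := fun z => z + (-t z : ℝ) / deriv F z with hM
  have hPm : ∀ z, P z ∈ ball (0 : ℂ) 1 ∧ (F (P z)).re ≠ 0 := fun z =>
    ⟨(hseg z (t z) (abs_of_pos (ht z)).le).1, (hseg z (t z) (abs_of_pos (ht z)).le).2 (ht z).ne'⟩
  have hMm : ∀ z, M z ∈ ball (0 : ℂ) 1 ∧ (F (M z)).re ≠ 0 := fun z => by
    have h := hseg z (-t z) (by rw [abs_neg, abs_of_pos (ht z)])
    exact ⟨h.1, h.2 (by simpa using (ht z).ne')⟩
  let X : S → Set ℂ := fun z => {w ∈ ball (0 : ℂ) 1 | (F w).re ≠ 0 ∨ F w = 0} \ {(z : ℂ)}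
  have hsubX : ∀ z, {w ∈ ball (0 : ℂ) 1 | (F w).re ≠ 0} ⊆ X z := fun z w hw =>
    ⟨⟨hw.1, Or.inl hw.2⟩, fun h => hw.2 (by rw [h, (hS z z.2).2.1]; simp)⟩
  have hPM : ∀ i j, i ≠ j → JoinedIn (X j) (P i) (M i) := by
    intro i j hij
    have hpc : IsPathConnected
        ((fun s : ℝ => (i : ℂ) + s / deriv F i) '' Icc (-t i) (t i)) :=
      ((convex_Icc _ _).isPathConnected (nonempty_Icc.2 (by linarith [ht i]))).image' (by fun_prop)
    refine (hpc.joinedIn _ ⟨t i, ⟨by linarith [ht i], le_rfl⟩, rfl⟩ _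
      ⟨-t i, ⟨le_rfl, by linarith [ht i]⟩, rfl⟩).mono ?_
    rintro w ⟨s, hs, rfl⟩
    have h := hseg i s (abs_le.2 hs)
    by_cases hs0 : s = 0
    · subst hs0
      simp only [Complex.ofReal_zero, zero_div, add_zero]
      exact ⟨⟨(hS i i.2).1, Or.inr (hS i i.2).2.1⟩, fun h => hij (Subtype.ext h)⟩
    · exact hsubX j ⟨h.1, h.2 hs0⟩
  let φ : S → Fin N → Prop := fun j k =>
    ∃ x ∈ ball (0 : ℂ) 1, (F x).re ≠ 0 ∧ c x = k ∧ JoinedIn (X j) x (P j)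
  have hφ : ∀ j x, x ∈ ball (0 : ℂ) 1 → (F x).re ≠ 0 →
      (φ j (c x) ↔ JoinedIn (X j) x (P j)) := by
    intro j x hx hxr
    refine ⟨?_, fun h => ⟨x, hx, hxr, rfl, h⟩⟩
    rintro ⟨x', hx', hxr', hcx, h⟩
    exact ((hc x hx x' hx' hxr hxr' hcx.symm).mono (hsubX j)).trans h
  let w : S → Fin N → ℝ := fun i => Pi.single (c (P i)) 1 - Pi.single (c (M i)) 1
  let ψ : S → (Fin N → ℝ) →ₗ[ℝ] ℝ := fun j =>
    Fintype.linearCombination ℝ (fun k => if φ j k then (1 : ℝ) else 0)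
  have hψ : ∀ i j, ψ j (w i) = if i = j then 1 else 0 := by
    intro i j
    simp only [ψ, w, map_sub, Fintype.linearCombination_apply_single, one_smul]
    rw [if_congr (hφ j _ (hPm i).1 (hPm i).2) rfl rfl, if_congr (hφ j _ (hMm i).1 (hMm i).2) rfl rfl]
    by_cases hij : i = j
    · subst hij
      rw [if_pos (JoinedIn.refl (hsubX i (hPm i))), if_neg (fun h => hnj i h.symm), if_pos rfl,
        sub_zero]
    · have : JoinedIn (X j) (P i) (P j) ↔ JoinedIn (X j) (M i) (P j) :=
        ⟨fun h => (hPM i j hij).symm.trans h, fun h => (hPM i j hij).trans h⟩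
      rw [if_congr this rfl rfl, sub_self, if_neg hij]
  have hli : LinearIndependent ℝ w := by
    rw [Fintype.linearIndependent_iff]
    intro g hg j
    have := congrArg (ψ j) hg
    simpa [hψ] using this
  simpa using hli.fintype_card_le_finrank


theorem card_le_of_eq_zero (hA : Admissible N F) (S : Finset ℂ)
    (hS : ∀ z ∈ S, z ∈ ball (0 : ℂ) 1 ∧ F z = 0) : S.card ≤ N := by
  classical
  obtain ⟨U, hU, hdisj⟩ := S.finite_toSet.t2_separation
  have hder : ∀ z ∈ S, ∀ᶠ w in 𝓝 z, w ≠ z → deriv F w ≠ 0 := by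
    intro z hz
    have han := hA.1.analyticAt (isOpen_ball.mem_nhds (hS z hz).1)
    rcases han.deriv.eventually_eq_zero_or_eventually_ne_zero with h | h
    · exfalso
      refine hA.not_eventually_const (hS z hz).1 (by rw [(hS z hz).2]; simp) (hS z hz).1 ?_
      obtain ⟨δ, hδ, h1⟩ := Metric.eventually_nhds_iff_ball.1
        (h.and (isOpen_ball.mem_nhds (hS z hz).1))
      refine Metric.eventually_nhds_iff_ball.2 ⟨δ, hδ, fun w hw => ?_⟩
      exact isOpen_ball.is_const_of_deriv_eq_zero (convex_ball z δ).isPreconnected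
        (hA.1.mono fun x hx => (h1 x hx).2) (fun x hx => (h1 x hx).1) hw (mem_ball_self hδ)
    · exact eventually_nhdsWithin_iff.1 h
  have hev : ∀ z ∈ S, ∀ᶠ v in 𝓝 (0 : ℂ), v ∈ F '' (U z ∩ ball 0 1 ∩ {w | w ≠ z → deriv F w ≠ 0}) := by
    intro z hz
    have h1 := hA.nhds_le_map (hS z hz).1 (by rw [(hS z hz).2]; simp) z (hS z hz).1
    rw [(hS z hz).2] at h1
    exact h1 (image_mem_map (inter_mem (inter_mem ((hU z).2.mem_nhds (hU z).1)
      (isOpen_ball.mem_nhds (hS z hz).1)) (hder z hz)))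
  have hall : ∀ᶠ v in 𝓝 (0 : ℂ), ∀ z ∈ S, v ∈ F '' (U z ∩ ball 0 1 ∩ {w | w ≠ z → deriv F w ≠ 0}) :=
    (S.eventually_all).2 hev
  have htend : Tendsto (fun y : ℝ => (y * Complex.I : ℂ)) (𝓝[≠] 0) (𝓝 0) := by
    have : Tendsto (fun y : ℝ => (y * Complex.I : ℂ)) (𝓝 0) (𝓝 ((0 : ℝ) * Complex.I)) :=
      Continuous.tendsto (by fun_prop) 0
    simpa using this.mono_left nhdsWithin_le_nhds
  obtain ⟨y, hy, hy0⟩ := ((htend.eventually hall).and self_mem_nhdsWithin).exists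
  choose! w hw using hy
  have hinj : Set.InjOn w S := by
    intro a ha b hb hab
    by_contra hne
    exact Set.disjoint_left.1 (hdisj ha hb hne) (hw a ha).1.1.1 (hab ▸ (hw b hb).1.1.1)
  rw [← Finset.card_image_of_injOn hinj]
  refine (hA.sub_I y).card_le_of_deriv_ne_zero _ fun x hx => ?_
  obtain ⟨z, hz, rfl⟩ := Finset.mem_image.1 hx
  refine ⟨(hw z hz).1.1.2, by rw [(hw z hz).2, sub_self], ?_⟩
  rw [deriv_sub_const]
  refine (hw z hz).1.2 fun h => hy0 ?_
  have := (hw z hz).2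
  rw [h, (hS z hz).2] at this
  simpa using this.symm

theorem card_le_of_eq (hA : Admissible N F) (S : Finset ℂ) {y : ℝ}
    (hS : ∀ z ∈ S, z ∈ ball (0 : ℂ) 1 ∧ F z = y * Complex.I) : S.card ≤ N :=
  (hA.sub_I y).card_le_of_eq_zero S fun z hz => ⟨(hS z hz).1, by simp [(hS z hz).2]⟩

end Admissible

/-- A form of Bloch's theorem. -/
theorem exists_ball_subset_image {H : ℂ → ℂ} {c : ℂ} {ρ : ℝ} (hρ : 0 < ρ)
    (hH : DifferentiableOn ℂ H (ball c ρ)) :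
    ∃ w, ball w (ρ * ‖deriv H c‖ / 96) ⊆ H '' ball c ρ := by
  by_cases hd0 : deriv H c = 0
  · exact ⟨0, by simp [hd0]⟩
  have hH' : DifferentiableOn ℂ (deriv H) (ball c ρ) := hH.deriv isOpen_ball
  have hsub : closedBall c (ρ / 2) ⊆ ball c ρ := closedBall_subset_ball (by linarith)
  obtain ⟨z₀, hz₀, hmax⟩ := (isCompact_closedBall c (ρ / 2)).exists_isMaxOn
    (nonempty_closedBall.2 (by positivity))
    (f := fun z => ‖deriv H z‖ * (ρ / 2 - dist z c))
    ((hH'.continuousOn.mono hsub).norm.mul (by fun_prop))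
  have hA := hmax (mem_closedBall_self (by positivity : 0 ≤ ρ / 2))
  simp only [mem_ofPred_eq, dist_self, sub_zero] at hA
  have hpos : 0 < ‖deriv H c‖ * (ρ / 2) := by
    have := norm_pos_iff.2 hd0
    positivity
  set s := (ρ / 2 - dist z₀ c) / 2 with hs
  set a := deriv H z₀ with ha
  have hs0 : 0 < s := by
    by_contra h
    have : ‖a‖ * (ρ / 2 - dist z₀ c) ≤ 0 :=
      mul_nonpos_of_nonneg_of_nonpos (norm_nonneg _) (by linarith)
    linarith
  have ha0 : 0 < ‖a‖ := by
    by_contra h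
    have h1 : ‖a‖ = 0 := le_antisymm (not_lt.1 h) (norm_nonneg _)
    rw [h1, zero_mul] at hA
    linarith
  have hballs : ball z₀ s ⊆ ball c ρ := by
    intro z hz
    have := dist_triangle z z₀ c
    rw [mem_ball] at hz ⊢
    linarith
  have hbd : ∀ z ∈ ball z₀ s, ‖deriv H z‖ ≤ 2 * ‖a‖ := by
    intro z hz
    have h1 := dist_triangle z z₀ c
    rw [mem_ball] at hz
    have h2 := hmax (show z ∈ closedBall c (ρ / 2) by rw [mem_closedBall]; linarith)
    simp only [mem_ofPred_eq] at h2
    have h3 : ‖deriv H z‖ * s ≤ ‖a‖ * (2 * s) := by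
      refine le_trans ?_ (h2.trans_eq (by rw [hs]; ring))
      gcongr
      linarith
    nlinarith
  have hschw : ∀ z ∈ ball z₀ s, ‖deriv H z - a‖ ≤ 3 * ‖a‖ / s * dist z z₀ := by
    intro z hz
    rw [← dist_eq_norm]
    refine Complex.dist_le_div_mul_dist_of_mapsTo_ball (hH'.mono hballs) (fun w hw => ?_) hz
    rw [mem_closedBall, dist_eq_norm]
    have := norm_sub_le (deriv H w) a
    have := hbd w hw
    linarith
  set r := s / 6 with hr
  have hr0 : 0 < r := by positivity
  have hrs : closedBall z₀ r ⊆ ball z₀ s := closedBall_subset_ball (by linarith)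
  have hmv : ∀ z ∈ closedBall z₀ r, ‖(H z - a * z) - (H z₀ - a * z₀)‖ ≤ ‖a‖ / 2 * ‖z - z₀‖ := by
    intro z hz
    have hdf : ∀ x ∈ closedBall z₀ r, HasDerivAt (fun z => H z - a * z) (deriv H x - a) x := by
      intro x hx
      have h1 := (hH.differentiableAt (isOpen_ball.mem_nhds (hballs (hrs hx)))).hasDerivAt
      simpa using h1.fun_sub ((hasDerivAt_id x).const_mul a)
    refine (convex_closedBall z₀ r).norm_image_sub_le_of_norm_hasDerivWithin_le
      (fun x hx => (hdf x hx).hasDerivWithinAt) (fun x hx => ?_)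
      (mem_closedBall_self hr0.le) hz
    refine (hschw x (hrs hx)).trans ?_
    rw [mem_closedBall] at hx
    calc 3 * ‖a‖ / s * dist x z₀ ≤ 3 * ‖a‖ / s * r := by gcongr
      _ = ‖a‖ / 2 := by rw [hr]; field_simp; norm_num
  have hlow : ∀ z ∈ closedBall z₀ r, ‖a‖ / 2 * ‖z - z₀‖ ≤ ‖H z - H z₀‖ := by
    intro z hz
    have h1 := hmv z hz
    have h2 : H z - H z₀ = a * (z - z₀) + ((H z - a * z) - (H z₀ - a * z₀)) := by ring
    have h3 := norm_sub_le_norm_add (a * (z - z₀)) ((H z - a * z) - (H z₀ - a * z₀))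
    rw [← h2, norm_mul] at h3
    linarith
  refine ⟨H z₀, ?_⟩
  have himg := DiffContOnCl.ball_subset_image_closedBall (f := H) (z₀ := z₀) (r := r)
    (ε := ‖a‖ / 2 * r) ?_ hr0 (fun z hz => ?_) ?_
  · refine (ball_subset_ball ?_).trans (himg.trans (image_mono (hrs.trans hballs)))
    have : ‖a‖ * s * 2 = ‖a‖ * (ρ / 2 - dist z₀ c) := by rw [hs]; ring
    rw [hr]
    linarith
  · exact ((hH.mono (hrs.trans hballs)).mono closure_ball_subset_closedBall).diffContOnCl
  · rw [mem_sphere, dist_eq_norm] at hz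
    have := hlow z (by rw [mem_closedBall, dist_eq_norm, hz])
    rwa [hz] at this
  · have : ∀ᶠ z in 𝓝[≠] z₀, H z ≠ H z₀ := by
      filter_upwards [self_mem_nhdsWithin, nhdsWithin_le_nhds (closedBall_mem_nhds z₀ hr0)]
        with z hz hzr h
      have h1 := hlow z hzr
      rw [h, sub_self, norm_zero] at h1
      have : 0 < ‖z - z₀‖ := norm_pos_iff.2 (sub_ne_zero.2 hz)
      have : 0 < ‖a‖ / 2 * ‖z - z₀‖ := by positivity
      linarith
    exact this.frequently.filter_mono nhdsWithin_le_nhds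

theorem exists_exp_eq_on_ball {F : ℂ → ℂ} {c : ℂ} {ρ : ℝ} (hρ : 0 < ρ)
    (hF : DifferentiableOn ℂ F (ball c ρ)) (h0 : ∀ z ∈ ball c ρ, F z ≠ 0) :
    ∃ H : ℂ → ℂ, (∀ z ∈ ball c ρ, HasDerivAt H (deriv F z / F z) z) ∧
      ∀ z ∈ ball c ρ, F z = Complex.exp (H z) := by
  obtain ⟨G, hG⟩ := ((hF.deriv isOpen_ball).div hF h0).isExactOn_ball
  have hc : c ∈ ball c ρ := mem_ball_self hρ
  refine ⟨fun z => G z - G c + Complex.log (F c), fun z hz => ?_, fun z hz => ?_⟩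
  · exact ((hG z hz).sub_const (G c)).add_const (Complex.log (F c))
  · have hder : ∀ x ∈ ball c ρ, HasDerivAt (fun z => F z * Complex.exp (-G z)) 0 x := by
      intro x hx
      have h1 := (hF.differentiableAt (isOpen_ball.mem_nhds hx)).hasDerivAt
      have h2 := h1.fun_mul (hG x hx).fun_neg.cexp
      have h3 : deriv F x * Complex.exp (-G x) +
          F x * (Complex.exp (-G x) * -((deriv F / F) x)) = 0 := by
        have := h0 x hx
        rw [show (deriv F / F) x = deriv F x / F x from rfl]
        field_simp
        ring
      rwa [h3] at h2
    have h2 := isOpen_ball.is_const_of_deriv_eq_zero (convex_ball c ρ).isPreconnected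
      (fun x hx => (hder x hx).differentiableAt.differentiableWithinAt)
      (fun x hx => (hder x hx).deriv) hz hc
    simp only [Complex.exp_neg] at h2
    rw [Complex.exp_add, Complex.exp_sub, Complex.exp_log (h0 c hc)]
    have e1 := Complex.exp_ne_zero (G z)
    have e2 := Complex.exp_ne_zero (G c)
    field_simp at h2 ⊢
    linear_combination h2

theorem Admissible.norm_deriv_le {N : ℕ} {F : ℂ → ℂ} (hA : Admissible N F) {c : ℂ} {ρ : ℝ}
    (hρ : 0 < ρ) (hb : ball c ρ ⊆ ball 0 1) (h0 : ∀ z ∈ ball c ρ, F z ≠ 0) :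
    ρ * ‖deriv F c / F c‖ ≤ 96 * (2 * Real.pi * (N + 2)) := by
  classical
  by_contra! hlt
  obtain ⟨H, hH, hexp⟩ := exists_exp_eq_on_ball hρ (hA.1.mono hb) h0
  obtain ⟨w, hw⟩ := exists_ball_subset_image hρ
    (fun z hz => (hH z hz).differentiableAt.differentiableWithinAt : DifferentiableOn ℂ H (ball c ρ))
  rw [(hH c (mem_ball_self hρ)).deriv] at hw
  have hpi := Real.pi_pos
  set k₀ : ℤ := ⌊(w.im - Real.pi / 2) / (2 * Real.pi)⌋ with hk₀
  have hk1 : (k₀ : ℝ) * (2 * Real.pi) ≤ w.im - Real.pi / 2 := by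
    rw [← le_div_iff₀ (by positivity)]; exact Int.floor_le _
  have hk2 : w.im - Real.pi / 2 < ((k₀ : ℝ) + 1) * (2 * Real.pi) := by
    rw [← div_lt_iff₀ (by positivity)]; exact Int.lt_floor_add_one _
  have key : ∀ k : Fin (N + 1), ∃ z ∈ ball c ρ,
      H z = ⟨w.re, Real.pi / 2 + 2 * Real.pi * (k₀ + k)⟩ := by
    intro k
    refine hw ?_
    rw [mem_ball, dist_eq_norm]
    have h1 : (⟨w.re, Real.pi / 2 + 2 * Real.pi * (k₀ + k)⟩ : ℂ) - w =
        ((Real.pi / 2 + 2 * Real.pi * (k₀ + k) - w.im : ℝ) : ℂ) * Complex.I := by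
      apply Complex.ext <;> simp
    rw [h1, norm_mul, Complex.norm_I, mul_one, Complex.norm_real, Real.norm_eq_abs]
    have hk : (k : ℝ) ≤ N := by exact_mod_cast Nat.lt_succ_iff.1 k.2
    have hk' : (0 : ℝ) ≤ k := by positivity
    have : |Real.pi / 2 + 2 * Real.pi * (k₀ + k) - w.im| < 2 * Real.pi * (N + 2) := by
      rw [abs_lt]
      constructor <;> nlinarith
    linarith
  choose z hz hHz using key
  have hinj : Function.Injective z := by
    intro i j hij
    have h1 := congrArg Complex.im ((hHz i).symm.trans ((congrArg H hij).trans (hHz j)))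
    have h2 : (i : ℝ) = j := by
      simp only at h1
      have : 2 * Real.pi * (i : ℝ) = 2 * Real.pi * j := by linarith
      exact mul_left_cancel₀ (by positivity) this
    exact Fin.ext (by exact_mod_cast h2)
  have hval : ∀ k, F (z k) = (Real.exp w.re : ℝ) * Complex.I := by
    intro k
    rw [hexp _ (hz k), hHz k, Complex.exp_eq_exp_re_mul_sin_add_cos]
    have hc1 : Real.cos (Real.pi / 2 + 2 * Real.pi * (k₀ + k)) = 0 := by
      have := Real.cos_add_int_mul_two_pi (Real.pi / 2) (k₀ + (k : ℕ))
      rw [Real.cos_pi_div_two] at this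
      rw [← this]; push_cast; ring_nf
    have hs1 : Real.sin (Real.pi / 2 + 2 * Real.pi * (k₀ + k)) = 1 := by
      have := Real.sin_add_int_mul_two_pi (Real.pi / 2) (k₀ + (k : ℕ))
      rw [Real.sin_pi_div_two] at this
      rw [← this]; push_cast; ring_nf
    simp only
    rw [← Complex.ofReal_cos, ← Complex.ofReal_sin, hc1, hs1]
    simp
  have := hA.card_le_of_eq (Finset.univ.image z) (y := Real.exp w.re) (by
    intro x hx
    obtain ⟨k, -, rfl⟩ := Finset.mem_image.1 hx
    exact ⟨hb (hz k), hval k⟩)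
  rw [Finset.card_image_of_injective _ hinj] at this
  simp at this

/-- Montel's theorem for a bounded sequence on a disc. -/
theorem exists_subseq_tendstoLocallyUniformlyOn {f : ℕ → ℂ → ℂ} {R r M : ℝ} (hr : 0 < r)
    (hrR : r < R) (hf : ∀ k, DifferentiableOn ℂ (f k) (ball 0 R))
    (hM : ∀ k, ∀ z ∈ ball (0 : ℂ) R, ‖f k z‖ ≤ M) :
    ∃ (φ : ℕ → ℕ) (g : ℂ → ℂ), StrictMono φ ∧
      TendstoLocallyUniformlyOn (fun k => f (φ k)) g atTop (ball 0 r) := by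
  set a : ℕ → ℕ → ℂ := fun k n => (n.factorial : ℂ)⁻¹ * iteratedDeriv n (f k) 0 with ha
  have hM0 : 0 ≤ M := (norm_nonneg _).trans (hM 0 0 (mem_ball_self (hr.trans hrR)))
  have hab : ∀ k n, ‖a k n‖ ≤ M / r ^ n := by
    intro k n
    have h1 := Complex.norm_iteratedDeriv_le_of_forall_mem_sphere_norm_le (f := f k) (c := 0) n hr
      (((hf k).mono (closedBall_subset_ball hrR)).mono closure_ball_subset_closedBall).diffContOnCl
      (fun z hz => hM k z (closedBall_subset_ball hrR (sphere_subset_closedBall hz)))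
    have hfac : (0 : ℝ) < n.factorial := by exact_mod_cast n.factorial_pos
    simp only [ha, norm_mul, norm_inv, Complex.norm_natCast]
    rw [inv_mul_le_iff₀ hfac]
    exact h1.trans_eq (by ring)
  have hsum : ∀ k, ∀ z ∈ ball (0 : ℂ) r, HasSum (fun n => a k n * z ^ n) (f k z) := by
    intro k z hz
    have h1 := Complex.hasSum_taylorSeries_on_ball (hf k) (ball_subset_ball hrR.le hz)
    refine h1.congr_fun fun n => ?_
    simp only [ha, sub_zero, smul_eq_mul]
    ring
  obtain ⟨b, hb, φ, hφ, hlim⟩ := (isCompact_univ_pi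
    (fun n => isCompact_closedBall (0 : ℂ) (M / r ^ n))).tendsto_subseq
    (x := a) (fun k n _ => by simpa using hab k n)
  have hbb : ∀ n, ‖b n‖ ≤ M / r ^ n := fun n => by simpa using hb n (mem_univ n)
  have hlimn : ∀ n, Tendsto (fun k => a (φ k) n) atTop (𝓝 (b n)) := fun n =>
    (tendsto_pi_nhds.1 hlim) n
  refine ⟨φ, fun z => ∑' n, b n * z ^ n, hφ, ?_⟩
  refine tendstoLocallyUniformlyOn_of_forall_exists_nhds fun x hx => ?_
  obtain ⟨r', hxr', hr'⟩ := exists_between (mem_ball_zero_iff.1 hx)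
  have hr'0 : 0 ≤ r' := (norm_nonneg _).trans hxr'.le
  refine ⟨ball 0 r', mem_nhdsWithin_of_mem_nhds (isOpen_ball.mem_nhds (by simpa using hxr')), ?_⟩
  have hgeo : Summable fun n => 2 * M * (r' / r) ^ n :=
    (summable_geometric_of_lt_one (by positivity) ((div_lt_one hr).2 hr')).mul_left _
  have hdom : ∀ k n, ‖‖a (φ k) n - b n‖ * r' ^ n‖ ≤ 2 * M * (r' / r) ^ n := by
    intro k n
    rw [norm_mul, norm_norm, norm_pow, Real.norm_of_nonneg hr'0, div_pow]
    have h1 : ‖a (φ k) n - b n‖ ≤ 2 * (M / r ^ n) := by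
      have := norm_sub_le (a (φ k) n) (b n)
      linarith [hab (φ k) n, hbb n]
    calc _ ≤ 2 * (M / r ^ n) * r' ^ n := by gcongr
      _ = _ := by ring
  have hS : Tendsto (fun k => ∑' n, ‖a (φ k) n - b n‖ * r' ^ n) atTop (𝓝 0) := by
    have := tendsto_tsum_of_dominated_convergence (𝓕 := atTop)
      (f := fun k n => ‖a (φ k) n - b n‖ * r' ^ n) (g := fun _ => 0) hgeo (fun n => by
        simpa using (((hlimn n).sub_const (b n)).norm).mul_const (r' ^ n))
      (Eventually.of_forall fun k n => hdom k n)
    simpa using this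
  rw [Metric.tendstoUniformlyOn_iff]
  intro ε hε
  filter_upwards [hS.eventually_lt_const hε] with k hk z hz
  refine lt_of_le_of_lt ?_ hk
  have hz' : ‖z‖ < r' := by simpa using hz
  have hbs : Summable fun n => b n * z ^ n := by
    refine Summable.of_norm_bounded (hgeo.mul_left 1) fun n => ?_
    rw [norm_mul, norm_pow, div_pow]
    calc _ ≤ M / r ^ n * r' ^ n := by
          gcongr
          exact hbb n
      _ ≤ 1 * (2 * M * (r' ^ n / r ^ n)) := by
          have : 0 ≤ M * (r' ^ n / r ^ n) := by positivity
          have e : M / r ^ n * r' ^ n = M * (r' ^ n / r ^ n) := by ring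
          linarith
  have h1 := (hsum (φ k) z (by rw [mem_ball_zero_iff]; linarith)).sub hbs.hasSum
  rw [dist_comm, dist_eq_norm, ← h1.tsum_eq]
  refine tsum_of_norm_bounded (Summable.hasSum (Summable.of_norm_bounded hgeo (hdom k)))
    fun n => ?_
  rw [← sub_mul, norm_mul, norm_pow]
  gcongr

namespace Admissible

variable {N : ℕ} {F : ℂ → ℂ}

theorem norm_le_exp_mul (hA : Admissible N F) {a b τ : ℝ} (ha : 1 / 4 ≤ a) (hb : b ≤ 1 / 2)
    (hτ : 0 < τ) (h0 : ∀ z : ℂ, a < ‖z‖ → ‖z‖ < b → F z ≠ 0) {z w : ℂ} (hz : a + τ ≤ ‖z‖)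
    (hz' : ‖z‖ ≤ b - τ) (hw : a + τ ≤ ‖w‖) (hw' : ‖w‖ ≤ b - τ) :
    ‖F w‖ ≤ Real.exp (10 * (96 * (2 * Real.pi * (N + 2))) / τ) * ‖F z‖ := by
  have hC0 : 0 ≤ 96 * (2 * Real.pi * (N + 2)) := by have := Real.pi_pos; positivity
  set C : ℝ := 96 * (2 * Real.pi * (N + 2)) with hC
  have hz0 : 0 < ‖z‖ := by linarith
  have hw0 : 0 < ‖w‖ := by linarith
  set δ := Complex.log w - Complex.log z with hδ
  have hlogb : ∀ x : ℂ, a + τ ≤ ‖x‖ → ‖x‖ ≤ b - τ → -3 ≤ Real.log ‖x‖ ∧ Real.log ‖x‖ ≤ 0 := by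
    intro x hx hx'
    have hx0 : 0 < ‖x‖ := by linarith
    refine ⟨?_, Real.log_nonpos hx0.le (by linarith)⟩
    have h1 := Real.one_sub_inv_le_log_of_pos hx0
    have : ‖x‖⁻¹ ≤ 4 := by
      rw [inv_le_comm₀ hx0 (by norm_num)]; linarith
    linarith
  have hδn : ‖δ‖ ≤ 10 := by
    have h1 := Complex.norm_le_abs_re_add_abs_im δ
    have h2 : |δ.re| ≤ 3 := by
      simp only [hδ, Complex.sub_re, Complex.log_re]
      have := hlogb z hz hz'
      have := hlogb w hw hw'
      rw [abs_le]; constructor <;> linarith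
    have h3 : |δ.im| ≤ 7 := by
      simp only [hδ, Complex.sub_im, Complex.log_im]
      have := Complex.arg_mem_Ioc z
      have := Complex.arg_mem_Ioc w
      have := Real.pi_lt_d2
      rw [abs_le]; constructor <;> linarith [this, (Complex.arg_mem_Ioc z).1,
        (Complex.arg_mem_Ioc z).2, (Complex.arg_mem_Ioc w).1, (Complex.arg_mem_Ioc w).2]
    linarith
  set γ : ℝ → ℂ := fun t => Complex.exp (Complex.log z + t * δ) with hγ
  have hγ0 : γ 0 = z := by simp [hγ, Complex.exp_log (norm_pos_iff.1 hz0)]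
  have hγ1 : γ 1 = w := by simp [hγ, hδ, Complex.exp_log (norm_pos_iff.1 hw0)]
  have hγd : ∀ t, HasDerivAt γ (γ t * δ) t := by
    intro t
    have h1 : HasDerivAt (fun t : ℝ => Complex.log z + t * δ) δ t := by
      simpa using ((Complex.ofRealCLM.hasDerivAt (x := t)).mul_const δ).const_add (Complex.log z)
    exact h1.cexp
  have hγn : ∀ t ∈ Icc (0 : ℝ) 1, a + τ ≤ ‖γ t‖ ∧ ‖γ t‖ ≤ b - τ := by
    intro t ht
    have h1 : ‖γ t‖ = Real.exp ((1 - t) * Real.log ‖z‖ + t * Real.log ‖w‖) := by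
      simp only [hγ, hδ, Complex.norm_exp]
      simp [Complex.log_re]
      ring
    rw [h1]
    have h1t : 0 ≤ 1 - t := by linarith [ht.2]
    have h0t : 0 ≤ t := ht.1
    constructor
    · rw [← Real.log_le_iff_le_exp (by linarith)]
      have e1 := Real.log_le_log (by linarith) hz
      have e2 := Real.log_le_log (by linarith) hw
      calc Real.log (a + τ) = (1 - t) * Real.log (a + τ) + t * Real.log (a + τ) := by ring
        _ ≤ _ := by gcongr
    · rw [← Real.le_log_iff_exp_le (by linarith)]
      have e1 := Real.log_le_log hz0 hz'
      have e2 := Real.log_le_log hw0 hw'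
      calc _ ≤ (1 - t) * Real.log (b - τ) + t * Real.log (b - τ) := by gcongr
        _ = _ := by ring
  have hball : ∀ t ∈ Icc (0 : ℝ) 1, ∀ x ∈ ball (γ t) τ, a < ‖x‖ ∧ ‖x‖ < b := by
    intro t ht x hx
    rw [mem_ball, dist_eq_norm] at hx
    have h1 := hγn t ht
    have h2 := norm_le_norm_add_norm_sub' x (γ t)
    have h3 := norm_le_norm_add_norm_sub (x) (γ t)
    constructor <;> linarith
  have hmem : ∀ t ∈ Icc (0 : ℝ) 1, γ t ∈ ball (0 : ℂ) 1 := fun t ht => by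
    rw [mem_ball_zero_iff]; linarith [(hγn t ht).2]
  have hder : ∀ t ∈ Icc (0 : ℝ) 1,
      HasDerivAt (fun t => F (γ t)) (deriv F (γ t) * (γ t * δ)) t := by
    intro t ht
    exact (hA.1.differentiableAt (isOpen_ball.mem_nhds (hmem t ht))).hasDerivAt.comp t (hγd t)
  have hgr := norm_le_gronwallBound_of_norm_deriv_right_le (f := fun t => F (γ t))
    (f' := fun t => deriv F (γ t) * (γ t * δ)) (δ := ‖F z‖) (K := 10 * C / τ) (ε := 0) (a := 0)
    (b := 1) (fun t ht => (hder t ht).continuousAt.continuousWithinAt)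
    (fun t ht => (hder t (Ico_subset_Icc_self ht)).hasDerivWithinAt) (by simp [hγ0])
    (fun t ht => by
      have ht' := Ico_subset_Icc_self ht
      have hγt := hγn t ht'
      have h1 := hA.norm_deriv_le (c := γ t) hτ (fun x hx => by
        rw [mem_ball_zero_iff]; linarith [(hball t ht' x hx).2])
        (fun x hx => h0 x (hball t ht' x hx).1 (hball t ht' x hx).2)
      have h2 : F (γ t) ≠ 0 := h0 _ (by linarith) (by linarith)
      have h3 : 0 < ‖F (γ t)‖ := norm_pos_iff.2 h2
      have h4 : ‖deriv F (γ t)‖ ≤ C / τ * ‖F (γ t)‖ := by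
        rw [norm_div, mul_div_assoc', div_le_iff₀ h3] at h1
        rw [div_mul_eq_mul_div, le_div_iff₀ hτ]
        linarith
      rw [norm_mul, norm_mul, add_zero]
      calc _ ≤ (C / τ * ‖F (γ t)‖) * (1 * 10) := by
            gcongr
            linarith
        _ = _ := by ring) 1 (by simp)
  rw [gronwallBound_ε0, hγ1] at hgr
  simp only [sub_zero, mul_one] at hgr
  linarith

theorem exists_annulus_ne_zero (hA : Admissible N F) : ∃ j : Fin (N + 1), ∀ z : ℂ,
    1 / 4 + j / (4 * (N + 1)) < ‖z‖ → ‖z‖ < 1 / 4 + (j + 1) / (4 * (N + 1) : ℝ) → F z ≠ 0 := by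
  classical
  by_contra! h
  choose z hz1 hz2 hz0 using h
  have hN : (0 : ℝ) < 4 * (N + 1) := by positivity
  have hlt : ∀ i j : Fin (N + 1), i < j → ‖z i‖ < ‖z j‖ := by
    intro i j hij
    refine (hz2 i).trans (lt_of_le_of_lt ?_ (hz1 j))
    have : (i : ℝ) + 1 ≤ j := by exact_mod_cast hij
    gcongr
  have hinj : Function.Injective z := by
    intro i j hij
    rcases lt_trichotomy i j with h | h | h
    · exact absurd (hlt i j h) (by rw [hij]; exact lt_irrefl _)
    · exact h
    · exact absurd (hlt j i h) (by rw [hij]; exact lt_irrefl _)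
  have := hA.card_le_of_eq_zero (Finset.univ.image z) (by
    intro x hx
    obtain ⟨k, -, rfl⟩ := Finset.mem_image.1 hx
    refine ⟨?_, hz0 k⟩
    rw [mem_ball_zero_iff]
    refine (hz2 k).trans_le ?_
    have : ((k : ℝ) + 1) / (4 * (N + 1)) ≤ 1 / 4 := by
      have : (k : ℝ) + 1 ≤ N + 1 := by exact_mod_cast k.2
      rw [div_le_iff₀ hN]; linarith
    linarith)
  rw [Finset.card_image_of_injective _ hinj] at this
  simp at this

end Admissible

theorem Admissible.exists_subseq {N : ℕ} {F : ℕ → ℂ → ℂ} (hF : ∀ k, Admissible N (F k))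
    (h0 : ∀ k, (F k 0).im = 0) : ∃ (φ : ℕ → ℕ) (l : ℕ → ℝ) (f : ℂ → ℂ), StrictMono φ ∧
      (∀ k, 0 < l k) ∧
      TendstoLocallyUniformlyOn (fun k z => l k * F (φ k) z) f atTop (ball 0 (1 / 4)) ∧
      DifferentiableOn ℂ f (ball 0 (1 / 4)) ∧ (f 0).im = 0 ∧
      ∃ z ∈ ball (0 : ℂ) (1 / 4), (f z).re ≠ 0 := by
  choose j hj using fun k => (hF k).exists_annulus_ne_zero
  obtain ⟨i, hi⟩ := Finite.exists_infinite_fiber j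
  obtain ⟨φ₁, hφ₁, hφ₁i⟩ := Filter.extraction_of_frequently_atTop
    (Nat.frequently_atTop_iff_infinite.2 (Set.infinite_coe_iff.1 hi))
  have hφ₁i : ∀ k, j (φ₁ k) = i := hφ₁i
  have hN : (0 : ℝ) < 4 * (N + 1) := by positivity
  set a : ℝ := 1 / 4 + i / (4 * (N + 1)) with ha
  set b : ℝ := 1 / 4 + (i + 1) / (4 * (N + 1) : ℝ) with hb
  set τ : ℝ := (b - a) / 3 with hτ
  have hba : b - a = 1 / (4 * (N + 1)) := by rw [ha, hb]; ring
  have hτ0 : 0 < τ := by rw [hτ, hba]; positivity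
  have ha4 : 1 / 4 ≤ a := by rw [ha]; simp; positivity
  have hb2 : b ≤ 1 / 2 := by
    have : ((i : ℝ) + 1) / (4 * (N + 1)) ≤ 1 / 4 := by
      have : (i : ℝ) + 1 ≤ N + 1 := by exact_mod_cast i.2
      rw [div_le_iff₀ hN]; linarith
    linarith
  have hnz : ∀ k, ∀ z : ℂ, a < ‖z‖ → ‖z‖ < b → F (φ₁ k) z ≠ 0 := fun k z h1 h2 =>
    hj (φ₁ k) z (by rwa [hφ₁i]) (by rwa [hφ₁i])
  set z₁ : ℂ := ((a + τ : ℝ) : ℂ) with hz₁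
  have hz₁n : ‖z₁‖ = a + τ := by rw [hz₁, Complex.norm_real, Real.norm_of_nonneg (by linarith)]
  have hz₁F : ∀ k, 0 < ‖F (φ₁ k) z₁‖ := fun k =>
    norm_pos_iff.2 (hnz k _ (by linarith) (by linarith))
  set K := Real.exp (10 * (96 * (2 * Real.pi * (N + 2))) / τ) with hK
  set G : ℕ → ℂ → ℂ := fun k z => ((‖F (φ₁ k) z₁‖⁻¹ : ℝ) : ℂ) * F (φ₁ k) z with hG
  have hGd : ∀ k, DifferentiableOn ℂ (G k) (ball 0 1) := fun k => (hF (φ₁ k)).1.const_mul _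
  have hsub : closedBall (0 : ℂ) (b - τ) ⊆ ball 0 1 := closedBall_subset_ball (by linarith)
  have hGb : ∀ k, ∀ z ∈ ball (0 : ℂ) (b - τ), ‖G k z‖ ≤ K := by
    intro k z hz
    refine Complex.norm_le_of_forall_mem_frontier_norm_le (U := ball 0 (b - τ)) isBounded_ball
      (((hGd k).mono hsub).mono closure_ball_subset_closedBall).diffContOnCl (fun w hw => ?_)
      (subset_closure hz)
    rw [frontier_ball _ (by linarith), mem_sphere_zero_iff_norm] at hw
    simp only [hG, norm_mul, Complex.norm_real, norm_inv, norm_norm]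
    rw [inv_mul_le_iff₀ (hz₁F k), mul_comm]
    exact (hF (φ₁ k)).norm_le_exp_mul ha4 hb2 hτ0 (hnz k) hz₁n.ge (by linarith)
      (by linarith) hw.le
  have hrR : a + 3 / 2 * τ < b - τ := by linarith
  obtain ⟨φ₂, f, hφ₂, hlim⟩ := exists_subseq_tendstoLocallyUniformlyOn (r := a + 3 / 2 * τ)
    (by linarith) hrR (fun k => (hGd k).mono (ball_subset_ball (by linarith))) hGb
  have hfd : DifferentiableOn ℂ f (ball 0 (a + 3 / 2 * τ)) := hlim.differentiableOn
    (Eventually.of_forall fun k => (hGd _).mono (ball_subset_ball (by linarith))) isOpen_ball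
  have hfz₁ : ‖f z₁‖ = 1 := by
    have h1 := (hlim.tendsto_at (a := z₁) (by rw [mem_ball_zero_iff]; linarith)).norm
    refine tendsto_nhds_unique h1 (tendsto_const_nhds.congr fun k => ?_)
    simp only [hG, norm_mul, Complex.norm_real, norm_inv, norm_norm]
    rw [inv_mul_cancel₀ (hz₁F _).ne']
  have h0r : (0 : ℂ) ∈ ball (0 : ℂ) (a + 3 / 2 * τ) := mem_ball_self (by linarith)
  have hf0 : (f 0).im = 0 := by
    have h1 := (Complex.continuous_im.tendsto _).comp (hlim.tendsto_at h0r)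
    refine tendsto_nhds_unique h1 (tendsto_const_nhds.congr fun k => ?_)
    simp only [hG, Function.comp, Complex.im_ofReal_mul, h0, mul_zero]
  have hsub4 : ball (0 : ℂ) (1 / 4) ⊆ ball 0 (a + 3 / 2 * τ) := ball_subset_ball (by linarith)
  refine ⟨φ₁ ∘ φ₂, fun k => ‖F (φ₁ (φ₂ k)) z₁‖⁻¹, f, hφ₁.comp hφ₂,
    fun k => inv_pos.2 (hz₁F _), hlim.mono hsub4, hfd.mono hsub4, hf0, ?_⟩
  by_contra! hre
  have han := hfd.analyticAt (isOpen_ball.mem_nhds h0r)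
  have hf00 : f 0 = 0 := Complex.ext (hre 0 (mem_ball_self (by norm_num))) hf0
  rcases han.eventually_constant_or_nhds_le_map_nhds with h | h
  · have h1 : EqOn f (fun _ => f 0) (ball 0 (a + 3 / 2 * τ)) :=
      (hfd.analyticOnNhd isOpen_ball).eqOn_of_preconnected_of_eventuallyEq analyticOnNhd_const
        (convex_ball _ _).isPreconnected h0r h
    have h2 := h1 (show z₁ ∈ ball (0 : ℂ) (a + 3 / 2 * τ) by rw [mem_ball_zero_iff]; linarith)
    simp only [hf00] at h2
    rw [h2, norm_zero] at hfz₁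
    norm_num at hfz₁
  · rw [hf00] at h
    have h1 := h (image_mem_map (isOpen_ball.mem_nhds (mem_ball_self (by norm_num) :
      (0 : ℂ) ∈ ball (0 : ℂ) (1 / 4))))
    obtain ⟨ε, hε, h2⟩ := Metric.mem_nhds_iff.1 h1
    obtain ⟨z, hz, hz2⟩ := h2 (show ((ε / 2 : ℝ) : ℂ) ∈ ball (0 : ℂ) ε by
      rw [mem_ball_zero_iff, Complex.norm_real, Real.norm_of_nonneg (by positivity)]; linarith)
    have h3 := hre z hz
    rw [hz2, Complex.ofReal_re] at h3
    linarith

theorem re_eq_zero_of_tendstoLocallyUniformlyOn {ι : Type*} {p : Filter ι} [p.NeBot]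
    {f g : ι → ℂ → ℂ} {F G : ℂ → ℂ} {U : Set ℂ} (hU : IsOpen U) (hUc : IsPreconnected U)
    (hf : TendstoLocallyUniformlyOn f F p U) (hg : TendstoLocallyUniformlyOn g G p U)
    (hfc : ∀ᶠ k in p, ContinuousOn (f k) U) (hGc : ContinuousOn G U)
    (hF : DifferentiableOn ℂ F U) (hF0 : ∃ z ∈ U, (F z).re ≠ 0)
    (hz : ∀ᶠ k in p, ∀ z ∈ U, (f k z).re = 0 → (g k z).re = 0) :
    ∀ x ∈ U, (F x).re = 0 → (G x).re = 0 := by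
  intro x hx hFx
  by_contra hGx
  have hε : 0 < |(G x).re| / 2 := by positivity
  have hxU : U ∈ 𝓝 x := hU.mem_nhds hx
  obtain ⟨t, ht, hkt⟩ := Metric.tendstoLocallyUniformlyOn_iff.1 hg _ hε x hx
  rw [hU.nhdsWithin_eq hx] at ht
  have hGn : ∀ᶠ y in 𝓝 x, dist (G y) (G x) < |(G x).re| / 2 :=
    Metric.tendsto_nhds.1 (hGc.continuousAt hxU) _ hε
  obtain ⟨δ, hδ, hδs⟩ := Metric.mem_nhds_iff.1 (inter_mem (inter_mem ht hGn) hxU)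
  have hFn : ¬ ∀ᶠ z in 𝓝 x, F z = F x := by
    intro h
    obtain ⟨z, hzU, hz0⟩ := hF0
    apply hz0
    rw [(hF.analyticOnNhd hU).eqOn_of_preconnected_of_eventuallyEq analyticOnNhd_const hUc hx h
      hzU, hFx]
  have hop := ((hF.analyticAt hxU).eventually_constant_or_nhds_le_map_nhds).resolve_left hFn
  have him : F '' ball x δ ∈ 𝓝 (F x) := hop (image_mem_map (ball_mem_nhds x hδ))
  obtain ⟨ρ, hρ, hρs⟩ := Metric.mem_nhds_iff.1 him
  have hmem : ∀ s : ℝ, |s| < ρ → F x + s ∈ F '' ball x δ := fun s hs => hρs (by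
    simpa [mem_ball, dist_eq_norm] using hs)
  obtain ⟨a, ha, haF⟩ := hmem (ρ / 2) (by rw [abs_of_pos (by positivity)]; linarith)
  obtain ⟨b, hb, hbF⟩ := hmem (-(ρ / 2)) (by rw [abs_neg, abs_of_pos (by positivity)]; linarith)
  have hre : ∀ y ∈ U, Tendsto (fun k => (f k y).re) p (𝓝 (F y).re) := fun y hy =>
    (Complex.continuous_re.tendsto _).comp (hf.tendsto_at hy)
  have hak : ∀ᶠ k in p, 0 < (f k a).re := (hre a (hδs ha).2).eventually
    (lt_mem_nhds (by rw [haF]; simp [hFx]; positivity))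
  have hbk : ∀ᶠ k in p, (f k b).re < 0 := (hre b (hδs hb).2).eventually
    (gt_mem_nhds (by rw [hbF]; simp [hFx]; positivity))
  obtain ⟨k, h1, h2, h3, h4, h5⟩ := (hak.and (hbk.and (hfc.and (hz.and hkt)))).exists
  have hsub : ball x δ ⊆ U := fun y hy => (hδs hy).2
  obtain ⟨c, hc, hc0⟩ := (convex_ball x δ).isPreconnected.intermediate_value hb ha
    (Complex.continuous_re.comp_continuousOn (h3.mono hsub)) ⟨h2.le, h1.le⟩
  have hg0 := h4 c (hsub hc) hc0
  have e1 := h5 c (hδs hc).1.1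
  have e2 : dist (G c) (G x) < _ := (hδs hc).1.2
  have e3 : |(G x).re - (g k c).re| ≤ dist (G x) (g k c) := by
    rw [← Complex.sub_re, dist_eq_norm]; exact Complex.abs_re_le_norm _
  rw [hg0, sub_zero] at e3
  have := dist_triangle (G x) (G c) (g k c)
  rw [dist_comm] at e2
  linarith

theorem exists_eq_mul_of_simple_zeros {Φ Ψ : ℂ → ℂ} {U : Set ℂ} (hU : IsOpen U)
    (hΦ : DifferentiableOn ℂ Φ U) (hΨ : DifferentiableOn ℂ Ψ U)
    (h : ∀ z ∈ U, Ψ z = 0 → Φ z = 0 ∧ deriv Ψ z ≠ 0) :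
    ∃ Q : ℂ → ℂ, DifferentiableOn ℂ Q U ∧ ∀ z ∈ U, Φ z = Q z * Ψ z := by
  classical
  refine ⟨fun z => if Ψ z = 0 then deriv Φ z / deriv Ψ z else Φ z / Ψ z, ?_, ?_⟩
  · intro x hx
    apply DifferentiableAt.differentiableWithinAt
    have hxU := hU.mem_nhds hx
    by_cases h0 : Ψ x = 0
    · obtain ⟨hΦ0, hΨ'⟩ := h x hx h0
      have hd1 : DifferentiableAt ℂ (dslope Φ x) x :=
        ((Complex.differentiableOn_dslope hxU).2 hΦ).differentiableAt hxU
      have hd2 : DifferentiableAt ℂ (dslope Ψ x) x :=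
        ((Complex.differentiableOn_dslope hxU).2 hΨ).differentiableAt hxU
      have hne : dslope Ψ x x ≠ 0 := by rwa [dslope_same]
      refine (hd1.div hd2 hne).congr_of_eventuallyEq ?_
      filter_upwards [hd2.continuousAt.eventually_ne hne] with y hy
      show _ = dslope Φ x y / dslope Ψ x y
      rcases eq_or_ne y x with rfl | hyx
      · simp [h0]
      · have hyx' : y - x ≠ 0 := sub_ne_zero.2 hyx
        rw [dslope_of_ne _ hyx, slope_def_field, h0, sub_zero] at hy
        have hΨy : Ψ y ≠ 0 := fun h => hy (by simp [h])
        rw [if_neg hΨy, dslope_of_ne _ hyx, dslope_of_ne _ hyx, slope_def_field, slope_def_field,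
          h0, hΦ0, sub_zero, sub_zero, div_div_div_cancel_right₀ hyx']
    · have hd := (hΦ.differentiableAt hxU).div (hΨ.differentiableAt hxU) h0
      refine hd.congr_of_eventuallyEq ?_
      filter_upwards [(hΨ.differentiableAt hxU).continuousAt.eventually_ne h0] with y hy
      simp [hy]
  · intro z hz
    by_cases h0 : Ψ z = 0
    · simp [h0, (h z hz h0).1]
    · simp [h0]

theorem add_conj_comp_reflection_eq_zero {h : ℂ → ℂ} {U : Set ℂ} {α β z₀ : ℂ} (hU : IsOpen U)
    (hUc : IsPreconnected U) (hh : DifferentiableOn ℂ h U)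
    (hσ : ∀ z ∈ U, α * starRingEnd ℂ z + β ∈ U) (hz₀ : z₀ ∈ U)
    (hfr : ∃ᶠ z in 𝓝[≠] z₀, α * starRingEnd ℂ z + β = z ∧ (h z).re = 0) :
    ∀ z ∈ U, h z + starRingEnd ℂ (h (α * starRingEnd ℂ z + β)) = 0 := by
  have hd : DifferentiableOn ℂ
      (fun z => h z + starRingEnd ℂ (h (α * starRingEnd ℂ z + β))) U := by
    intro z hz
    have h1 : DifferentiableAt ℂ (fun w => h (α * w + β)) (starRingEnd ℂ z) :=
      DifferentiableAt.comp (starRingEnd ℂ z) (hh.differentiableAt (hU.mem_nhds (hσ z hz)))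
        (by fun_prop)
    have h2 := h1.conj_conj
    rw [Complex.conj_conj] at h2
    exact ((hh.differentiableAt (hU.mem_nhds hz)).add h2).differentiableWithinAt
  refine (hd.analyticOnNhd hU).eqOn_zero_of_preconnected_of_frequently_eq_zero hUc hz₀ ?_
  refine hfr.mono fun z ⟨hz, hz0⟩ => ?_
  rw [hz]
  apply Complex.ext <;> simp [hz0]

theorem differentiableOn_circleIntegral_div_sub {φ γ : ℂ → ℂ} {c : ℂ} {R ρ : ℝ} (hR : 0 ≤ R)
    (hφ : ContinuousOn φ (sphere c R)) (hγ : ContinuousOn γ (sphere c R))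
    (hρ : ∀ z ∈ sphere c R, ρ ≤ ‖γ z‖) :
    DifferentiableOn ℂ (fun ξ => ∮ z in C(c, R), φ z / (γ z - ξ)) (ball 0 ρ) := by
  intro ξ hξ
  apply DifferentiableAt.differentiableWithinAt
  rw [mem_ball_zero_iff] at hξ
  obtain ⟨ρ', h1, h2⟩ := exists_between hξ
  have hm : ∀ θ, circleMap c R θ ∈ sphere c R := circleMap_mem_sphere c hR
  have hφc : Continuous fun θ => φ (circleMap c R θ) :=
    hφ.comp_continuous (continuous_circleMap c R) hm
  have hγc : Continuous fun θ => γ (circleMap c R θ) :=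
    hγ.comp_continuous (continuous_circleMap c R) hm
  have hge : ∀ x ∈ ball (0 : ℂ) ρ', ∀ θ, ρ - ρ' ≤ ‖γ (circleMap c R θ) - x‖ := fun x hx θ => by
    have := norm_sub_norm_le (γ (circleMap c R θ)) x
    have := hρ _ (hm θ)
    rw [mem_ball_zero_iff] at hx
    linarith
  have hne : ∀ x ∈ ball (0 : ℂ) ρ', ∀ θ, γ (circleMap c R θ) - x ≠ 0 := fun x hx θ => by
    rw [← norm_pos_iff]; linarith [hge x hx θ]
  have hmem : ball (0 : ℂ) ρ' ∈ 𝓝 ξ := isOpen_ball.mem_nhds (mem_ball_zero_iff.2 h1)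
  have hd : Continuous fun θ => deriv (circleMap c R) θ := by
    simp only [deriv_circleMap]; fun_prop
  have hF : ∀ x ∈ ball (0 : ℂ) ρ', Continuous fun θ =>
      deriv (circleMap c R) θ * (φ (circleMap c R θ) / (γ (circleMap c R θ) - x)) :=
    fun x hx => hd.mul (hφc.div (hγc.sub continuous_const) (hne x hx))
  have hF' : ∀ x ∈ ball (0 : ℂ) ρ', Continuous fun θ =>
      deriv (circleMap c R) θ * φ (circleMap c R θ) / (γ (circleMap c R θ) - x) ^ 2 :=
    fun x hx => (hd.mul hφc).div ((hγc.sub continuous_const).pow 2)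
      fun θ => pow_ne_zero 2 (hne x hx θ)
  have hbc : Continuous fun θ => ‖deriv (circleMap c R) θ * φ (circleMap c R θ)‖ /
      (ρ - ρ') ^ 2 := ((hd.mul hφc).norm).div_const _
  have hξ' : ξ ∈ ball (0 : ℂ) ρ' := mem_ball_zero_iff.2 h1
  have := intervalIntegral.hasDerivAt_integral_of_dominated_loc_of_deriv_le
    (μ := MeasureTheory.volume) (a := 0) (b := 2 * Real.pi)
    (F := fun x θ => deriv (circleMap c R) θ * (φ (circleMap c R θ) / (γ (circleMap c R θ) - x)))
    (F' := fun x θ => deriv (circleMap c R) θ * φ (circleMap c R θ) /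
      (γ (circleMap c R θ) - x) ^ 2)
    (bound := fun θ => ‖deriv (circleMap c R) θ * φ (circleMap c R θ)‖ / (ρ - ρ') ^ 2)
    hmem (by filter_upwards [hmem] with x hx using (hF x hx).aestronglyMeasurable)
    ((hF ξ hξ').intervalIntegrable _ _) (hF' ξ hξ').aestronglyMeasurable
    (Eventually.of_forall fun θ _ x hx => by
      rw [norm_div, norm_pow]
      have : 0 < ρ - ρ' := by linarith
      gcongr
      exact hge x hx θ) (hbc.intervalIntegrable _ _)
    (Eventually.of_forall fun θ _ x hx => by
      have h0 := (((hasDerivAt_id x).const_sub (γ (circleMap c R θ))).fun_inv (hne x hx θ)).const_mul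
        (deriv (circleMap c R) θ * φ (circleMap c R θ))
      refine (h0.congr_deriv ?_).congr_of_eventuallyEq (Eventually.of_forall fun y => ?_)
      · simp [div_eq_mul_inv]
      · simp only [div_eq_mul_inv, id, mul_assoc])
  refine DifferentiableAt.congr_of_eventuallyEq this.2.differentiableAt ?_
  exact Eventually.of_forall fun y => by simp [circleIntegral]

/-- The vertical strip `a < Re t < b`. -/
def verticalStrip (a b : ℝ) : Set ℂ := {t | a < t.re ∧ t.re < b}

theorem isOpen_verticalStrip (a b : ℝ) : IsOpen (verticalStrip a b) :=
  (isOpen_lt continuous_const Complex.continuous_re).inter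
    (isOpen_lt Complex.continuous_re continuous_const)

theorem convex_verticalStrip (a b : ℝ) : Convex ℝ (verticalStrip a b) :=
  (convex_halfSpace_re_gt a).inter (convex_halfSpace_re_lt b)

theorem exp_three_fifths_lt_two : Real.exp (3 / 5) < 2 := by
  have h1 : Real.exp (3 / 5) ^ 5 = Real.exp 1 ^ 3 := by
    rw [← Real.exp_nat_mul, ← Real.exp_nat_mul]; norm_num
  have h2 : Real.exp 1 ^ 3 < 2.7182818286 ^ 3 := by
    gcongr; exact Real.exp_one_lt_d9
  by_contra! h
  have : (2 : ℝ) ^ 5 ≤ Real.exp (3 / 5) ^ 5 := by gcongr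
  rw [h1] at this
  have h3 : (2.7182818286 : ℝ) ^ 3 < 2 ^ 5 := by norm_num
  linarith

theorem exp_mem_of_mem_verticalStrip {t : ℂ} (ht : t ∈ verticalStrip (-(6 / 5)) (3 / 5)) :
    1 / 4 < ‖Complex.exp t‖ ∧ ‖Complex.exp t‖ < 2 := by
  rw [Complex.norm_exp]
  refine ⟨?_, (Real.exp_lt_exp.2 ht.2).trans exp_three_fifths_lt_two⟩
  refine lt_trans ?_ (Real.exp_lt_exp.2 ht.1)
  have h := exp_three_fifths_lt_two
  have h0 := Real.exp_pos (3 / 5)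
  have : Real.exp (-(6 / 5)) = (Real.exp (3 / 5) ^ 2)⁻¹ := by
    rw [← Real.exp_nat_mul, ← Real.exp_neg]; norm_num
  rw [this, lt_inv_comm₀ (by norm_num) (by positivity)]
  norm_num
  nlinarith

theorem exists_log_lift {g : ℂ → ℂ} {m : ℕ} {η : ℝ} (hm : 1 ≤ m) (hη : η * 4 ^ m ≤ 1 / 200)
    (hg : DifferentiableOn ℂ g (ball 0 2)) (hgm : ∀ z ∈ ball (0 : ℂ) 2, ‖g z - z ^ m‖ ≤ η) :
    ∃ G : ℂ → ℂ, DifferentiableOn ℂ G (verticalStrip (-(6 / 5)) (3 / 5)) ∧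
      (∀ t ∈ verticalStrip (-(6 / 5)) (3 / 5), g (Complex.exp t) = Complex.exp (m * G t)) ∧
      ∀ t ∈ verticalStrip (-(6 / 5)) (3 / 5), ‖G t - t‖ ≤ 1 / 100 := by
  set S := verticalStrip (-(6 / 5)) (3 / 5) with hS
  set w : ℂ → ℂ := fun t => (g (Complex.exp t) - Complex.exp t ^ m) / Complex.exp t ^ m with hw
  have hmem : ∀ t ∈ S, Complex.exp t ∈ ball (0 : ℂ) 2 := fun t ht =>
    mem_ball_zero_iff.2 (exp_mem_of_mem_verticalStrip ht).2
  have hne : ∀ t, Complex.exp t ^ m ≠ 0 := fun t => pow_ne_zero _ (Complex.exp_ne_zero t)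
  have hwn : ∀ t ∈ S, ‖w t‖ ≤ 1 / 200 := by
    intro t ht
    rw [hw]
    simp only [norm_div, norm_pow]
    rw [div_le_iff₀ (pow_pos (norm_pos_iff.2 (Complex.exp_ne_zero t)) m)]
    refine (hgm _ (hmem t ht)).trans ?_
    have h4 : (1 / 4 : ℝ) ^ m ≤ ‖Complex.exp t‖ ^ m :=
      pow_le_pow_left₀ (by norm_num) (exp_mem_of_mem_verticalStrip ht).1.le m
    have h5 : η ≤ 1 / 200 * (1 / 4) ^ m := by
      rw [one_div_pow, ← div_eq_mul_one_div, le_div_iff₀ (by positivity)]; exact hη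
    linarith
  have hwd : DifferentiableOn ℂ w S :=
    ((hg.comp Complex.differentiable_exp.differentiableOn hmem).sub
      (by fun_prop)).div (by fun_prop) fun t _ => hne t
  have hsl : ∀ t ∈ S, 1 + w t ∈ Complex.slitPlane := fun t ht =>
    Complex.mem_slitPlane_of_norm_lt_one ((hwn t ht).trans_lt (by norm_num))
  have hm0 : (m : ℂ) ≠ 0 := by exact_mod_cast (by omega : m ≠ 0)
  refine ⟨fun t => t + Complex.log (1 + w t) / m, ?_, ?_, ?_⟩
  · exact differentiableOn_id.add (((hwd.const_add 1).clog hsl).div_const _)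
  · intro t ht
    have : 1 + w t ≠ 0 := Complex.slitPlane_ne_zero (hsl t ht)
    rw [mul_add, mul_div_cancel₀ _ hm0, Complex.exp_add, Complex.exp_nat_mul, Complex.exp_log this,
      hw]
    field_simp [hne t]
    ring
  · intro t ht
    rw [add_sub_cancel_left, norm_div, Complex.norm_natCast]
    have h1 := Complex.norm_log_one_add_half_le_self (z := w t) ((hwn t ht).trans (by norm_num))
    have h2 := hwn t ht
    have h3 : (1 : ℝ) ≤ m := by exact_mod_cast hm
    rw [div_le_iff₀ (by linarith)]
    linarith

theorem deriv_close_of_close_id {G : ℂ → ℂ}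
    (hG : DifferentiableOn ℂ G (verticalStrip (-(6 / 5)) (3 / 5)))
    (hGt : ∀ t ∈ verticalStrip (-(6 / 5)) (3 / 5), ‖G t - t‖ ≤ 1 / 100)
    {t : ℂ} (ht : t ∈ verticalStrip (-(11 / 10)) (1 / 2)) :
    DifferentiableAt ℂ G t ∧ ‖deriv G t - 1‖ ≤ 1 / 2 := by
  have hsub : closedBall t (1 / 20) ⊆ verticalStrip (-(6 / 5)) (3 / 5) := by
    intro s hs
    have h1 : |(s - t).re| ≤ 1 / 20 :=
      (Complex.abs_re_le_norm _).trans (by simpa [dist_eq_norm] using hs)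
    rw [Complex.sub_re, abs_le] at h1
    exact ⟨by linarith [ht.1], by linarith [ht.2]⟩
  have hn : verticalStrip (-(6 / 5)) (3 / 5) ∈ 𝓝 t :=
    (isOpen_verticalStrip _ _).mem_nhds (hsub (mem_closedBall_self (by norm_num)))
  have hd : DifferentiableAt ℂ G t := hG.differentiableAt hn
  refine ⟨hd, ?_⟩
  have hdiff : DifferentiableOn ℂ (fun s => G s - s) (closedBall t (1 / 20)) :=
    (hG.mono hsub).sub differentiableOn_id
  have h1 := Complex.norm_deriv_le_of_forall_mem_sphere_norm_le (c := t) (R := 1 / 20)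
    (C := 1 / 100) (f := fun s => G s - s) (by norm_num)
    (hdiff.diffContOnCl_ball subset_rfl)
    fun z hz => hGt z (hsub (sphere_subset_closedBall hz))
  have h2 : deriv (fun s => G s - s) t = deriv G t - 1 :=
    (hd.hasDerivAt.fun_sub (hasDerivAt_id t)).deriv
  rw [h2] at h1
  linarith

theorem norm_sub_le_two_mul_of_close_id {G : ℂ → ℂ}
    (hG : DifferentiableOn ℂ G (verticalStrip (-(6 / 5)) (3 / 5)))
    (hGt : ∀ t ∈ verticalStrip (-(6 / 5)) (3 / 5), ‖G t - t‖ ≤ 1 / 100)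
    {a b : ℂ} (ha : a ∈ verticalStrip (-(11 / 10)) (1 / 2))
    (hb : b ∈ verticalStrip (-(11 / 10)) (1 / 2)) : ‖a - b‖ ≤ 2 * ‖G a - G b‖ := by
  have h := Convex.norm_image_sub_le_of_norm_deriv_le (𝕜 := ℂ) (f := fun s => G s - s)
    (s := verticalStrip (-(11 / 10)) (1 / 2)) (C := 1 / 2)
    (fun x hx => (deriv_close_of_close_id hG hGt hx).1.sub differentiableAt_id)
    (fun x hx => by
      rw [((deriv_close_of_close_id hG hGt hx).1.hasDerivAt.fun_sub (hasDerivAt_id' x)).deriv]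
      exact (deriv_close_of_close_id hG hGt hx).2) (convex_verticalStrip _ _) hb ha
  have h2 := norm_sub_le (G a - G b) ((G a - a) - (G b - b))
  have h3 : G a - G b - ((G a - a) - (G b - b)) = a - b := by ring
  rw [h3] at h2
  linarith

theorem exists_inverse_of_close_id {G : ℂ → ℂ}
    (hG : DifferentiableOn ℂ G (verticalStrip (-(6 / 5)) (3 / 5)))
    (hGt : ∀ t ∈ verticalStrip (-(6 / 5)) (3 / 5), ‖G t - t‖ ≤ 1 / 100) :
    ∃ K : ℂ → ℂ, DifferentiableOn ℂ K (verticalStrip (-(1 / 2)) 0) ∧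
      ∀ τ ∈ verticalStrip (-(1 / 2)) 0,
        K τ ∈ verticalStrip (-(11 / 10)) (1 / 2) ∧ G (K τ) = τ := by
  have hcl : ∀ τ ∈ verticalStrip (-(1 / 2)) 0,
      closedBall τ (1 / 20) ⊆ verticalStrip (-(11 / 10)) (1 / 2) := by
    intro τ hτ s hs
    have h1 : |(s - τ).re| ≤ 1 / 20 :=
      (Complex.abs_re_le_norm _).trans (by simpa [dist_eq_norm] using hs)
    rw [Complex.sub_re, abs_le] at h1
    exact ⟨by linarith [hτ.1], by linarith [hτ.2]⟩
  have hss : verticalStrip (-(11 / 10)) (1 / 2) ⊆ verticalStrip (-(6 / 5)) (3 / 5) :=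
    fun s hs => ⟨by linarith [hs.1], by linarith [hs.2]⟩
  have hex : ∀ τ ∈ verticalStrip (-(1 / 2)) 0,
      ∃ s ∈ verticalStrip (-(11 / 10)) (1 / 2), G s = τ := by
    intro τ hτ
    have hτ' := hcl τ hτ (mem_closedBall_self (by norm_num))
    have h1 := DiffContOnCl.ball_subset_image_closedBall (f := G) (z₀ := τ) (ε := 1 / 40)
      (r := 1 / 20) ((hG.mono ((hcl τ hτ).trans hss)).diffContOnCl_ball subset_rfl) (by norm_num)
      (fun z hz => by
        have h2 := norm_sub_le_two_mul_of_close_id hG hGt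
          (hcl τ hτ (sphere_subset_closedBall hz)) hτ'
        rw [mem_sphere, dist_eq_norm] at hz
        linarith) ?_
    · obtain ⟨s, hs, hsτ⟩ := h1 (show τ ∈ ball (G τ) (1 / 40 / 2) by
        rw [mem_ball_comm, mem_ball, dist_eq_norm]
        exact (hGt τ (hss hτ')).trans_lt (by norm_num))
      exact ⟨s, hcl τ hτ hs, hsτ⟩
    · have hmem : ∀ᶠ z in 𝓝[≠] τ, G z ≠ G τ := by
        filter_upwards [self_mem_nhdsWithin,
          mem_nhdsWithin_of_mem_nhds ((isOpen_verticalStrip _ _).mem_nhds hτ')] with z hz1 hz2 h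
        have h2 := norm_sub_le_two_mul_of_close_id hG hGt hz2 hτ'
        rw [h, sub_self, norm_zero, mul_zero] at h2
        exact hz1 (sub_eq_zero.1 (norm_le_zero_iff.1 h2))
      exact hmem.frequently.filter_mono nhdsWithin_le_nhds
  choose! K hK1 hK2 using hex
  refine ⟨K, fun τ hτ => ?_, fun τ hτ => ⟨hK1 τ hτ, hK2 τ hτ⟩⟩
  apply DifferentiableAt.differentiableWithinAt
  have hn : verticalStrip (-(1 / 2)) 0 ∈ 𝓝 τ := (isOpen_verticalStrip _ _).mem_nhds hτ
  obtain ⟨hd, hd1⟩ := deriv_close_of_close_id hG hGt (hK1 τ hτ)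
  refine (HasDerivAt.of_local_left_inverse ?_ hd.hasDerivAt ?_ ?_).differentiableAt
  · have hlip : LipschitzOnWith 2 K (verticalStrip (-(1 / 2)) 0) := by
      refine LipschitzOnWith.of_dist_le_mul fun x hx y hy => ?_
      have h2 := norm_sub_le_two_mul_of_close_id hG hGt (hK1 x hx) (hK1 y hy)
      rw [hK2 x hx, hK2 y hy] at h2
      simpa [dist_eq_norm] using h2
    exact hlip.continuousOn.continuousAt hn
  · intro h0
    rw [h0] at hd1
    norm_num at hd1
  · filter_upwards [hn] with y hy using hK2 y hy

theorem frequently_nhdsWithin_ne_of_curve {P : ℂ → Prop} {ψ : ℝ → ℂ} {z₀ : ℂ} (h0 : ψ 0 = z₀)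
    (hc : ContinuousAt ψ 0) (hne : ∀ᶠ t in 𝓝[≠] (0 : ℝ), ψ t ≠ z₀)
    (hP : ∀ᶠ t in 𝓝[≠] (0 : ℝ), P (ψ t)) : ∃ᶠ z in 𝓝[≠] z₀, P z := by
  have ht : Tendsto ψ (𝓝[≠] (0 : ℝ)) (𝓝[≠] z₀) := by
    refine tendsto_nhdsWithin_iff.2 ⟨?_, hne⟩
    rw [← h0]
    exact hc.tendsto.mono_left nhdsWithin_le_nhds
  exact ht.frequently hP.frequently

theorem periodic_of_re_eq_zero {S : ℂ → ℂ} {m : ℕ} (hm : 1 ≤ m)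
    (hS : DifferentiableOn ℂ S (verticalStrip (-(1 / 2)) 0))
    (h0 : ∀ τ ∈ verticalStrip (-(1 / 2)) 0, (Complex.exp (m * τ)).re = 0 → (S τ).re = 0)
    {τ : ℂ} (hτ : τ ∈ verticalStrip (-(1 / 2)) 0) (n : ℤ) :
    S (τ + n * (2 * Real.pi * Complex.I) / m) = S τ := by
  have key : ∀ b : ℝ, Real.cos (m * b) = 0 → ∀ z ∈ verticalStrip (-(1 / 2)) 0,
      S z + starRingEnd ℂ (S (1 * starRingEnd ℂ z + 2 * b * Complex.I)) = 0 := by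
    intro b hb
    refine add_conj_comp_reflection_eq_zero (z₀ := ((-(1 / 4) : ℝ) : ℂ) + b * Complex.I)
      (isOpen_verticalStrip _ _) (convex_verticalStrip _ _).isPreconnected hS
      (fun z hz => ?_) ?_ ?_
    · simpa [verticalStrip] using hz
    · simp [verticalStrip]; norm_num
    · refine frequently_nhdsWithin_ne_of_curve
        (ψ := fun t : ℝ => ((-(1 / 4) + t : ℝ) : ℂ) + b * Complex.I) (by simp)
        (by fun_prop) ?_ ?_
      · filter_upwards [self_mem_nhdsWithin] with t ht h
        have := congrArg Complex.re h
        simp at this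
        exact ht this
      · have : ∀ᶠ t in 𝓝[≠] (0 : ℝ), |t| < 1 / 8 := by
          refine mem_nhdsWithin_of_mem_nhds ?_
          filter_upwards [Metric.ball_mem_nhds (0 : ℝ) (show (0 : ℝ) < 1 / 8 by norm_num)] with t ht
          simpa using ht
        filter_upwards [this] with t ht
        rw [abs_lt] at ht
        refine ⟨?_, h0 _ ?_ ?_⟩
        · apply Complex.ext <;> simp; ring
        · simp only [verticalStrip, Set.mem_ofPred_eq, Complex.add_re, Complex.ofReal_re,
            Complex.mul_re, Complex.I_re, Complex.I_im, Complex.ofReal_im]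
          constructor <;> linarith
        · rw [Complex.exp_re]
          simp [hb]
  have hm0 : (m : ℝ) ≠ 0 := by exact_mod_cast (by omega : m ≠ 0)
  have hb : ∀ n : ℤ, Real.cos (m * ((Real.pi / 2 + n * Real.pi) / m)) = 0 := fun n => by
    rw [mul_div_cancel₀ _ hm0, Real.cos_add_int_mul_pi, Real.cos_pi_div_two, mul_zero]
  have hσ : 1 * starRingEnd ℂ τ + 2 * ((Real.pi / 2 + ((0 : ℤ) : ℝ) * Real.pi) / m : ℝ) * Complex.I
      ∈ verticalStrip (-(1 / 2)) 0 := by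
    simpa [verticalStrip] using hτ
  have e1 := key _ (hb 0) τ hτ
  have e2 := key _ (hb n) _ hσ
  have e3 : 1 * starRingEnd ℂ (1 * starRingEnd ℂ τ +
      2 * ((Real.pi / 2 + ((0 : ℤ) : ℝ) * Real.pi) / m : ℝ) * Complex.I) +
      2 * ((Real.pi / 2 + n * Real.pi) / m : ℝ) * Complex.I
      = τ + n * (2 * Real.pi * Complex.I) / m := by
    simp only [map_add, map_mul, map_one, Complex.conj_conj, Complex.conj_ofReal, Complex.conj_I,
      map_ofNat]
    push_cast
    ring
  rw [e3] at e2
  have e4 := congrArg (starRingEnd ℂ) e2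
  simp only [map_add, Complex.conj_conj, map_zero] at e4
  have e5 := congrArg (starRingEnd ℂ) e1
  simp only [map_add, Complex.conj_conj, map_zero] at e5
  linear_combination e4 - e1

theorem circleIntegral_mul_deriv_div_sub {g d : ℂ → ℂ} {m : ℕ} {η : ℝ} {ξ s : ℂ} (hm : 1 ≤ m)
    (hη : η ≤ 1 / 10) (hg : DifferentiableOn ℂ g (ball 0 2))
    (hgm : ∀ z ∈ ball (0 : ℂ) 2, ‖g z - z ^ m‖ ≤ η) (hd : DifferentiableOn ℂ d (ball 0 2))
    (hξ : ‖ξ‖ < 1)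
    (h : ∀ z ∈ ball (0 : ℂ) (7 / 4), g z = ξ → d z = s ∧ deriv g z ≠ 0) :
    (∮ z in C(0, 3 / 2), d z * deriv g z / (g z - ξ)) = 2 * Real.pi * Complex.I * m * s := by
  have hsub : ball (0 : ℂ) (7 / 4) ⊆ ball 0 2 := ball_subset_ball (by norm_num)
  have hsub' : closedBall (0 : ℂ) (3 / 2) ⊆ ball 0 2 := closedBall_subset_ball (by norm_num)
  have hg' : DifferentiableOn ℂ (deriv g) (ball 0 2) := hg.deriv isOpen_ball
  obtain ⟨Q, hQ, hQe⟩ := exists_eq_mul_of_simple_zeros (U := ball (0 : ℂ) (7 / 4))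
    (Φ := fun z => d z - s) (Ψ := fun z => g z - ξ) isOpen_ball ((hd.mono hsub).sub_const s)
    ((hg.mono hsub).sub_const ξ) (fun z hz hz0 => by
      have h1 := h z hz (sub_eq_zero.1 hz0)
      refine ⟨sub_eq_zero.2 h1.1, ?_⟩
      rw [deriv_sub_const]; exact h1.2)
  have hsph : ∀ z ∈ sphere (0 : ℂ) (3 / 2), z ∈ ball (0 : ℂ) 2 := fun z hz =>
    hsub' (sphere_subset_closedBall hz)
  have hpow : (3 / 2 : ℝ) ≤ (3 / 2) ^ m := le_self_pow₀ (by norm_num) (by omega)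
  have hratio : ∀ z ∈ sphere (0 : ℂ) (3 / 2), ‖(g z - ξ - z ^ m) / z ^ m‖ < 1 := by
    intro z hz
    have hzn : ‖z‖ = 3 / 2 := by simpa using hz
    rw [norm_div, norm_pow, hzn, div_lt_one (by positivity)]
    have h1 := norm_sub_le (g z - z ^ m) ξ
    have h2 := hgm z (hsph z hz)
    rw [sub_right_comm] at h1
    linarith
  have hz0 : ∀ z ∈ sphere (0 : ℂ) (3 / 2), z ≠ 0 := by
    rintro z hz rfl
    norm_num at hz
  have hne : ∀ z ∈ sphere (0 : ℂ) (3 / 2), g z - ξ ≠ 0 := by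
    intro z hz h0
    have := hratio z hz
    rw [h0, zero_sub, neg_div, div_self (pow_ne_zero _ (hz0 z hz))] at this
    norm_num at this
  have hprim : (∮ z in C(0, 3 / 2), (deriv g z / (g z - ξ) - m / z)) = 0 := by
    refine circleIntegral.integral_eq_zero_of_hasDerivWithinAt (by norm_num)
      (f := fun z => Complex.log (1 + (g z - ξ - z ^ m) / z ^ m)) fun z hz => ?_
    have hgd : HasDerivAt g (deriv g z) z :=
      (hg.differentiableAt (isOpen_ball.mem_nhds (hsph z hz))).hasDerivAt
    have hp := hasDerivAt_pow m z
    have hpz : z ^ m ≠ 0 := pow_ne_zero _ (hz0 z hz)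
    have hsl := Complex.mem_slitPlane_of_norm_lt_one (hratio z hz)
    have h1 := ((((hgd.sub_const ξ).fun_sub hp).fun_div hp hpz).const_add 1).clog hsl
    refine HasDerivAt.hasDerivWithinAt (h1.congr_deriv ?_)
    have h2 : 1 + (g z - ξ - z ^ m) / z ^ m = (g z - ξ) / z ^ m := by field_simp; ring
    have hz0' := hz0 z hz
    have hne' := hne z hz
    rw [h2]
    obtain ⟨j, rfl⟩ : ∃ j, m = j + 1 := ⟨m - 1, by omega⟩
    simp only [Nat.add_sub_cancel]
    push_cast
    field_simp
    ring
  have hc1 : ContinuousOn (fun z => deriv g z / (g z - ξ)) (sphere 0 (3 / 2)) :=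
    (hg'.continuousOn.mono hsph).div ((hg.continuousOn.mono hsph).sub continuousOn_const) hne
  have hc2 : ContinuousOn (fun z : ℂ => (m : ℂ) / z) (sphere 0 (3 / 2)) :=
    continuousOn_const.div continuousOn_id hz0
  have hc3 : DifferentiableOn ℂ (fun z => Q z * deriv g z) (ball 0 (7 / 4)) :=
    hQ.mul (hg'.mono hsub)
  have hcb : closedBall (0 : ℂ) (3 / 2) ⊆ ball 0 (7 / 4) := closedBall_subset_ball (by norm_num)
  have h32 : (0 : ℝ) ≤ 3 / 2 := by norm_num
  have hlog : (∮ z in C(0, 3 / 2), deriv g z / (g z - ξ)) = 2 * Real.pi * Complex.I * m := by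
    rw [circleIntegral.integral_sub (hc1.circleIntegrable h32) (hc2.circleIntegrable h32),
      sub_eq_zero] at hprim
    rw [hprim]
    have := circleIntegral.integral_sub_center_inv (0 : ℂ) (show (3 / 2 : ℝ) ≠ 0 by norm_num)
    simp only [sub_zero] at this
    have hmz : (fun z : ℂ => (m : ℂ) / z) = fun z => (m : ℂ) * z⁻¹ :=
      funext fun z => div_eq_mul_inv _ _
    rw [hmz, circleIntegral.integral_const_mul, this]
    ring
  have hQ0 : (∮ z in C(0, 3 / 2), Q z * deriv g z) = 0 :=
    (hc3.diffContOnCl_ball hcb).circleIntegral_eq_zero h32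
  have hsplit : (∮ z in C(0, 3 / 2), d z * deriv g z / (g z - ξ)) =
      ∮ z in C(0, 3 / 2), (Q z * deriv g z + s * (deriv g z / (g z - ξ))) := by
    refine circleIntegral.integral_congr h32 fun z hz => ?_
    have h1 := hQe z (hcb (sphere_subset_closedBall hz))
    have h2 : d z = Q z * (g z - ξ) + s := by linear_combination h1
    have hne' := hne z hz
    rw [h2]
    field_simp
  have hc4 : ContinuousOn (fun z => s * (deriv g z / (g z - ξ))) (sphere 0 (3 / 2)) :=
    continuousOn_const.mul hc1
  rw [hsplit, circleIntegral.integral_add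
    ((hc3.continuousOn.mono (sphere_subset_closedBall.trans hcb)).circleIntegrable h32)
    (hc4.circleIntegrable h32), hQ0,
    circleIntegral.integral_const_mul, hlog]
  ring

theorem exists_eq_comp_of_re_eq_zero {g d : ℂ → ℂ} {m : ℕ} {η κ : ℝ} (hm : 1 ≤ m)
    (hη : η * 4 ^ m ≤ 1 / 10000) (hg : DifferentiableOn ℂ g (ball 0 2))
    (hgm : ∀ z ∈ ball (0 : ℂ) 2, ‖g z - z ^ m‖ ≤ η) (hd : DifferentiableOn ℂ d (ball 0 2))
    (hdκ : ∀ z ∈ ball (0 : ℂ) 2, ‖d z‖ ≤ κ)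
    (h0 : ∀ z ∈ ball (0 : ℂ) 2, (g z).re = 0 → (d z).re = 0) :
    ∃ e : ℂ → ℂ, DifferentiableOn ℂ e (ball 0 1) ∧ (∀ ξ ∈ ball (0 : ℂ) 1, ‖e ξ‖ ≤ κ) ∧
      (∀ z ∈ ball (0 : ℂ) (9 / 10), d z = e (g z)) ∧
      ∀ ξ ∈ ball (0 : ℂ) 1, e ξ + starRingEnd ℂ (e (-starRingEnd ℂ ξ)) = 0 := by
  obtain ⟨G, hGd, hGe, hGt⟩ := exists_log_lift hm (hη.trans (by norm_num)) hg hgm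
  obtain ⟨K, hKd, hK⟩ := exists_inverse_of_close_id hGd hGt
  have hss : verticalStrip (-(11 / 10)) (1 / 2) ⊆ verticalStrip (-(6 / 5)) (3 / 5) :=
    fun s hs => ⟨by linarith [hs.1], by linarith [hs.2]⟩
  have hη4 : η ≤ 1 / 10000 * (1 / 4) ^ m := by
    rw [one_div_pow, ← div_eq_mul_one_div, le_div_iff₀ (by positivity)]; exact hη
  have hη1 : η ≤ 1 / 10000 := by
    have : (1 / 4 : ℝ) ^ m ≤ 1 := pow_le_one₀ (by norm_num) (by norm_num)
    linarith
  have hm0 : (m : ℂ) ≠ 0 := by exact_mod_cast (by omega : m ≠ 0)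
  have hmR : (0 : ℝ) < m := by exact_mod_cast hm
  set S : ℂ → ℂ := fun τ => d (Complex.exp (K τ)) with hS
  have hKmem : ∀ τ ∈ verticalStrip (-(1 / 2)) 0, Complex.exp (K τ) ∈ ball (0 : ℂ) 2 :=
    fun τ hτ => mem_ball_zero_iff.2 (exp_mem_of_mem_verticalStrip (hss (hK τ hτ).1)).2
  have hgK : ∀ τ ∈ verticalStrip (-(1 / 2)) 0, g (Complex.exp (K τ)) = Complex.exp (m * τ) :=
    fun τ hτ => by rw [hGe _ (hss (hK τ hτ).1), (hK τ hτ).2]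
  have hSd : DifferentiableOn ℂ S (verticalStrip (-(1 / 2)) 0) :=
    hd.comp hKd.cexp hKmem
  have hS0 : ∀ τ ∈ verticalStrip (-(1 / 2)) 0, (Complex.exp (m * τ)).re = 0 → (S τ).re = 0 :=
    fun τ hτ h => h0 _ (hKmem τ hτ) (by rw [hgK τ hτ]; exact h)
  have hpow : (3 / 2 : ℝ) ≤ (3 / 2) ^ m := le_self_pow₀ (by norm_num) (by omega)
  have hbig : ∀ z ∈ ball (0 : ℂ) 2, 3 / 2 ≤ ‖z‖ → 1 < ‖g z‖ := by
    intro z hz h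
    have h1 := norm_sub_norm_le (z ^ m) (g z)
    rw [norm_sub_rev] at h1
    have h2 := hgm z hz
    have h3 : (3 / 2 : ℝ) ^ m ≤ ‖z ^ m‖ := by rw [norm_pow]; gcongr
    linarith
  have hnexp : ∀ τ : ℂ, ‖Complex.exp (m * τ)‖ = Real.exp (m * τ.re) := fun τ => by
    rw [Complex.norm_exp]; simp
  have hlt1 : ∀ τ ∈ verticalStrip (-(1 / 2)) 0, ‖Complex.exp (m * τ)‖ < 1 := fun τ hτ => by
    rw [hnexp, Real.exp_lt_one_iff]; exact mul_neg_of_pos_of_neg hmR hτ.2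
  have hsmall : ∀ z ∈ ball (0 : ℂ) 2, ∀ τ ∈ verticalStrip (-(1 / 2)) 0,
      g z = Complex.exp (m * τ) → Real.exp (-1) < ‖z‖ := by
    intro z hz τ hτ hgz
    by_contra! hle
    set x := Real.exp (-(1 / 2)) with hx
    have hx2 : x ^ 2 = Real.exp (-1) := by rw [hx, ← Real.exp_nat_mul]; norm_num
    have hx0 : 0 < x := Real.exp_pos _
    have hx3 : x ^ 2 * Real.exp 1 = 1 := by rw [hx2, ← Real.exp_add]; simp
    have hxl : x < 7 / 10 := by
      have := Real.exp_one_gt_d9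
      by_contra! h
      nlinarith [mul_self_nonneg (x - 7 / 10)]
    have hxg : 1 / 2 < x := by
      have := Real.exp_one_lt_d9
      by_contra! h
      nlinarith
    have h1 : x ^ m < ‖g z‖ := by
      rw [hgz, hnexp, hx, ← Real.exp_nat_mul, Real.exp_lt_exp]
      exact mul_lt_mul_of_pos_left hτ.1 hmR
    have h2 : ‖g z‖ ≤ η + ‖z‖ ^ m := by
      have := norm_add_le (g z - z ^ m) (z ^ m)
      rw [sub_add_cancel, norm_pow] at this
      linarith [hgm z hz]
    have h3 : ‖z‖ ^ m ≤ x ^ m * x ^ m := by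
      rw [← mul_pow, ← sq, hx2]; gcongr
    have h4 : x ^ m ≤ x := pow_le_of_le_one hx0.le (by linarith) (by omega)
    have h5 : (1 / 4 : ℝ) ^ m ≤ x ^ m := by gcongr; linarith
    have h6 : 0 < x ^ m := pow_pos hx0 m
    nlinarith
  have hroot : ∀ τ ∈ verticalStrip (-(1 / 2)) 0, ∀ z ∈ ball (0 : ℂ) (7 / 4),
      g z = Complex.exp (m * τ) → d z = S τ ∧ deriv g z ≠ 0 := by
    intro τ hτ z hz hgz
    have hz2 : z ∈ ball (0 : ℂ) 2 := ball_subset_ball (by norm_num) hz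
    have hl := hsmall z hz2 τ hτ hgz
    have hz0 : 0 < ‖z‖ := (Real.exp_pos _).trans hl
    have hu : ‖z‖ < 3 / 2 := by
      by_contra! h
      have := hbig z hz2 h
      rw [hgz] at this
      linarith [hlt1 τ hτ]
    have ht : Complex.log z ∈ verticalStrip (-(11 / 10)) (1 / 2) := by
      refine ⟨?_, ?_⟩ <;> rw [Complex.log_re]
      · have := (Real.lt_log_iff_exp_lt hz0).2 hl
        linarith
      · rw [Real.log_lt_iff_lt_exp hz0]
        linarith [Real.add_one_le_exp (1 / 2 : ℝ)]
    have hexp : Complex.exp (Complex.log z) = z := Complex.exp_log (norm_pos_iff.1 hz0)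
    constructor
    · have h1 := hGe _ (hss ht)
      rw [hexp, hgz, Complex.exp_eq_exp_iff_exists_int] at h1
      obtain ⟨n, hn⟩ := h1
      have h2 : G (Complex.log z) = τ + (-n : ℤ) * (2 * Real.pi * Complex.I) / m := by
        field_simp
        push_cast
        linear_combination -hn
      have h3 : τ + (-n : ℤ) * (2 * Real.pi * Complex.I) / m ∈ verticalStrip (-(1 / 2)) 0 := by
        have : ((-n : ℤ) * (2 * Real.pi * Complex.I) / m : ℂ).re = 0 := by
          rw [show ((-n : ℤ) * (2 * Real.pi * Complex.I) / m : ℂ)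
            = ((-n * (2 * Real.pi) / m : ℝ) : ℂ) * Complex.I by push_cast; ring]
          simp
        simp only [verticalStrip, Set.mem_ofPred_eq, Complex.add_re, this, add_zero]
        exact hτ
      rw [← periodic_of_re_eq_zero hm hSd hS0 hτ (-n)]
      have h4 := norm_sub_le_two_mul_of_close_id hGd hGt (hK _ h3).1 ht
      rw [(hK _ h3).2, h2, sub_self, norm_zero, mul_zero] at h4
      rw [hS]
      simp only
      rw [sub_eq_zero.1 (norm_le_zero_iff.1 h4), hexp]
    · intro hder
      obtain ⟨hGdiff, hG1⟩ := deriv_close_of_close_id hGd hGt ht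
      have hgd : HasDerivAt g 0 (Complex.exp (Complex.log z)) := by
        rw [hexp, ← hder]
        exact (hg.differentiableAt (isOpen_ball.mem_nhds hz2)).hasDerivAt
      have h1 : HasDerivAt (fun t => g (Complex.exp t)) 0 (Complex.log z) :=
        (hgd.comp _ (Complex.hasDerivAt_exp _)).congr_deriv (by simp)
      have h2 : HasDerivAt (fun t => g (Complex.exp t))
          (Complex.exp (m * G (Complex.log z)) * (m * deriv G (Complex.log z)))
          (Complex.log z) := by
        refine (hGdiff.hasDerivAt.const_mul (m : ℂ)).cexp.congr_of_eventuallyEq ?_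
        filter_upwards [(isOpen_verticalStrip _ _).mem_nhds (hss ht)] with t ht' using hGe t ht'
      have h3 := h2.unique h1
      simp only [mul_eq_zero, Complex.exp_ne_zero, hm0, false_or] at h3
      rw [h3] at hG1
      norm_num at hG1
  set e : ℂ → ℂ := fun ξ => (2 * Real.pi * Complex.I * m)⁻¹ *
    ∮ z in C(0, 3 / 2), d z * deriv g z / (g z - ξ) with he
  have h2pi : (2 * Real.pi * Complex.I * m : ℂ) ≠ 0 :=
    mul_ne_zero Complex.two_pi_I_ne_zero hm0
  have heS : ∀ τ ∈ verticalStrip (-(1 / 2)) 0, e (Complex.exp (m * τ)) = S τ := by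
    intro τ hτ
    rw [he]
    simp only
    rw [circleIntegral_mul_deriv_div_sub hm (hη1.trans (by norm_num)) hg hgm hd (hlt1 τ hτ)
      (hroot τ hτ), inv_mul_cancel_left₀ h2pi]
  have hsph : ∀ z ∈ sphere (0 : ℂ) (3 / 2), z ∈ ball (0 : ℂ) 2 := fun z hz =>
    mem_ball_zero_iff.2 (by rw [mem_sphere_zero_iff_norm.1 hz]; norm_num)
  have hed : DifferentiableOn ℂ e (ball 0 1) := by
    refine (differentiableOn_circleIntegral_div_sub (by norm_num)
      ((hd.continuousOn.mul (hg.deriv isOpen_ball).continuousOn).mono hsph)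
      (hg.continuousOn.mono hsph) fun z hz => ?_).const_mul _
    exact (hbig z (hsph z hz) (mem_sphere_zero_iff_norm.1 hz).ge).le
  refine ⟨e, hed, ?_, ?_, ?_⟩
  · intro ξ hξ
    obtain ⟨ρ, hρ1, hρ2⟩ := exists_between (max_lt (mem_ball_zero_iff.1 hξ)
      (Real.exp_lt_one_iff.2 (show (m : ℝ) * (-(1 / 2)) < 0 by
        exact mul_neg_of_pos_of_neg hmR (by norm_num))))
    obtain ⟨hρξ, hρe⟩ := max_lt_iff.1 hρ1
    have hρ0 : 0 < ρ := (Real.exp_pos _).trans hρe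
    refine Complex.norm_le_of_forall_mem_frontier_norm_le (U := ball (0 : ℂ) ρ) isBounded_ball
      (hed.diffContOnCl_ball (closedBall_subset_ball hρ2)) (fun z hz => ?_)
      (subset_closure (mem_ball_zero_iff.2 hρξ))
    rw [frontier_ball _ hρ0.ne', mem_sphere_zero_iff_norm] at hz
    have hτ : Complex.log z / m ∈ verticalStrip (-(1 / 2)) 0 := by
      have : (Complex.log z / m).re = Real.log ρ / m := by
        rw [Complex.div_natCast_re, Complex.log_re, hz]
      refine ⟨?_, ?_⟩ <;> rw [this]
      · rw [lt_div_iff₀ hmR, mul_comm]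
        exact (Real.lt_log_iff_exp_lt hρ0).2 hρe
      · exact div_neg_of_neg_of_pos (Real.log_neg hρ0 hρ2) hmR
    have h1 := heS _ hτ
    rw [mul_div_cancel₀ _ hm0, Complex.exp_log (norm_pos_iff.1 (by rw [hz]; exact hρ0))] at h1
    rw [h1]
    exact hdκ _ (hKmem _ hτ)
  · have hsub : ball (0 : ℂ) (9 / 10) ⊆ ball 0 2 := ball_subset_ball (by norm_num)
    have hmap : ∀ z ∈ ball (0 : ℂ) (9 / 10), g z ∈ ball (0 : ℂ) 1 := by
      intro z hz
      have h1 := norm_add_le (g z - z ^ m) (z ^ m)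
      rw [sub_add_cancel, norm_pow] at h1
      have h2 := hgm z (hsub hz)
      rw [mem_ball_zero_iff] at hz ⊢
      have h3 : ‖z‖ ^ m ≤ ‖z‖ := pow_le_of_le_one (norm_nonneg _) (by linarith) (by omega)
      linarith
    have h25 : Real.exp (-(2 / 5)) < 9 / 10 := by
      rw [Real.exp_neg, inv_lt_comm₀ (Real.exp_pos _) (by norm_num)]
      linarith [Real.add_one_le_exp (2 / 5 : ℝ)]
    set z₀ : ℂ := ((Real.exp (-(2 / 5)) : ℝ) : ℂ) with hz₀
    have hz₀m : z₀ ∈ ball (0 : ℂ) (9 / 10) := by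
      rw [mem_ball_zero_iff, hz₀, Complex.norm_real, Real.norm_of_nonneg (Real.exp_pos _).le]
      exact h25
    have hlogz : Complex.log z₀ = ((-(2 / 5) : ℝ) : ℂ) := by
      rw [hz₀, ← Complex.ofReal_log (Real.exp_pos _).le, Real.log_exp]
    have hcl : ContinuousAt Complex.log z₀ :=
      continuousAt_clog (Complex.ofReal_mem_slitPlane.2 (Real.exp_pos _))
    refine (hd.mono hsub).analyticOnNhd isOpen_ball |>.eqOn_of_preconnected_of_eventuallyEq
      ((hed.comp (hg.mono hsub) hmap).analyticOnNhd isOpen_ball)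
      (convex_ball _ _).isPreconnected hz₀m ?_
    have hev : ∀ᶠ z in 𝓝 z₀, Complex.log z ∈ verticalStrip (-(49 / 100)) (-(1 / 100)) := by
      refine hcl ((isOpen_verticalStrip _ _).mem_nhds ?_)
      rw [hlogz]
      constructor <;> simp only [Complex.ofReal_re] <;> norm_num
    have hne : ∀ᶠ z in 𝓝 z₀, z ≠ 0 := (continuousAt_id (x := z₀)).eventually_ne (by
      simp only [id, hz₀, ne_eq, Complex.ofReal_eq_zero]; exact (Real.exp_pos _).ne')
    filter_upwards [hev, hne, isOpen_ball.mem_nhds hz₀m] with z hz hz0 hzb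
    have hzS : Complex.log z ∈ verticalStrip (-(6 / 5)) (3 / 5) :=
      ⟨by linarith [hz.1], by linarith [hz.2]⟩
    have hGV : G (Complex.log z) ∈ verticalStrip (-(1 / 2)) 0 := by
      have h1 := (Complex.abs_re_le_norm _).trans (hGt _ hzS)
      rw [Complex.sub_re, abs_le] at h1
      exact ⟨by linarith [hz.1], by linarith [hz.2]⟩
    have h1 := hGe _ hzS
    rw [Complex.exp_log hz0] at h1
    show d z = e (g z)
    rw [h1, heS _ hGV]
    exact (hroot _ hGV z (ball_subset_ball (by norm_num) hzb) h1).1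
  · intro ξ hξ
    have hz₀ : Complex.I * Complex.exp (m * ((-(1 / 4) : ℝ) : ℂ)) ∈ ball (0 : ℂ) 1 := by
      rw [mem_ball_zero_iff, norm_mul, Complex.norm_I, one_mul]
      refine hlt1 _ ⟨?_, ?_⟩ <;> simp only [Complex.ofReal_re] <;> norm_num
    have := add_conj_comp_reflection_eq_zero (α := -1) (β := 0) isOpen_ball
      (convex_ball (0 : ℂ) 1).isPreconnected hed (fun z hz => by simpa using hz) hz₀ ?_ ξ hξ
    · simpa using this
    · refine frequently_nhdsWithin_ne_of_curve
        (ψ := fun t : ℝ => Complex.I * Complex.exp (m * ((-(1 / 4) + t : ℝ) : ℂ))) (by simp)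
        (by fun_prop) ?_ ?_
      · filter_upwards [self_mem_nhdsWithin] with t ht h
        have := congrArg norm h
        rw [norm_mul, norm_mul, hnexp, hnexp] at this
        simp only [Complex.norm_I, one_mul, Real.exp_eq_exp, Complex.ofReal_re] at this
        have h2 := mul_left_cancel₀ hmR.ne' this
        exact ht (by simpa using h2)
      · have : ∀ᶠ t in 𝓝[≠] (0 : ℝ), |t| < 1 / 8 := by
          refine mem_nhdsWithin_of_mem_nhds ?_
          filter_upwards [Metric.ball_mem_nhds (0 : ℝ) (show (0 : ℝ) < 1 / 8 by norm_num)] with t ht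
          simpa using ht
        filter_upwards [this] with t ht
        rw [abs_lt] at ht
        set x : ℝ := -(1 / 4) + t with hx
        have hexp : Complex.exp (m * (x : ℂ)) = ((Real.exp (m * x) : ℝ) : ℂ) := by push_cast; rfl
        refine ⟨?_, ?_⟩
        · rw [hexp, map_mul, Complex.conj_I, Complex.conj_ofReal]; ring
        · have hτ : (x : ℂ) + (Real.pi / 2 / m : ℝ) * Complex.I ∈ verticalStrip (-(1 / 2)) 0 := by
            simp only [verticalStrip, Set.mem_ofPred_eq, Complex.add_re, Complex.ofReal_re,
              Complex.mul_re, Complex.I_re, Complex.I_im, Complex.ofReal_im]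
            constructor <;> linarith
          have h1 : Complex.exp (m * ((x : ℂ) + (Real.pi / 2 / m : ℝ) * Complex.I)) =
              Complex.I * Complex.exp (m * (x : ℂ)) := by
            rw [mul_add, Complex.exp_add, mul_comm]
            congr 1
            rw [show (m : ℂ) * ((Real.pi / 2 / m : ℝ) * Complex.I) = Real.pi / 2 * Complex.I by
              push_cast; field_simp]
            exact Complex.exp_pi_div_two_mul_I
          rw [← h1, heS _ hτ]
          refine hS0 _ hτ ?_
          rw [h1, hexp, Complex.re_mul_ofReal, Complex.I_re, zero_mul]

theorem norm_deriv_le_of_norm_le_on_ball {f : ℂ → ℂ} {R C r : ℝ}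
    (hf : DifferentiableOn ℂ f (ball 0 R)) (hC : ∀ z ∈ ball (0 : ℂ) R, ‖f z‖ ≤ C) (hr : 0 < r)
    {z : ℂ} (hz : ‖z‖ + r < R) : ‖deriv f z‖ ≤ C / r := by
  have hsub : closedBall z r ⊆ ball 0 R := closedBall_subset_ball' (by
    rw [dist_zero_right]; linarith)
  exact Complex.norm_deriv_le_of_forall_mem_sphere_norm_le hr
    ((hf.mono hsub).diffContOnCl_ball subset_rfl) fun w hw => hC w (hsub (sphere_subset_closedBall hw))

theorem norm_deriv_sub_re_div_le {e : ℂ → ℂ} {w : ℂ} (he : DifferentiableOn ℂ e (ball 0 1))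
    (heb : ∀ ξ ∈ ball (0 : ℂ) 1, ‖e ξ‖ ≤ 1 / 100)
    (her : ∀ ξ ∈ ball (0 : ℂ) 1, e ξ + starRingEnd ℂ (e (-starRingEnd ℂ ξ)) = 0)
    (hw : ‖w‖ ≤ 1 / 10) (hw0 : w.re ≠ 0) :
    ‖deriv e w‖ ≤ 1 / 8 ∧ ‖deriv e w - ((e w).re / w.re : ℝ)‖ ≤ |w.re| := by
  have hed : DifferentiableOn ℂ (deriv e) (ball 0 1) := he.deriv isOpen_ball
  have h1 : ∀ z ∈ ball (0 : ℂ) (3 / 4), ‖deriv e z‖ ≤ 1 / 20 := fun z hz => by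
    have := norm_deriv_le_of_norm_le_on_ball he heb (r := 1 / 5) (by norm_num) (z := z)
      (by rw [mem_ball_zero_iff] at hz; linarith)
    linarith
  have h2 : ∀ z ∈ ball (0 : ℂ) (1 / 4), ‖deriv (deriv e) z‖ ≤ 1 / 8 := fun z hz => by
    have := norm_deriv_le_of_norm_le_on_ball
      (hed.mono (ball_subset_ball (show (3 / 4 : ℝ) ≤ 1 by norm_num))) h1 (r := 2 / 5)
      (by norm_num) (z := z) (by rw [mem_ball_zero_iff] at hz; linarith)
    linarith
  set w' : ℂ := -starRingEnd ℂ w with hw'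
  have hwn' : ‖w'‖ ≤ 1 / 10 := by simpa [hw'] using hw
  have hww : w - w' = ((2 * w.re : ℝ) : ℂ) := by
    rw [hw', sub_neg_eq_add, Complex.add_conj]
  have hwb : w ∈ ball (0 : ℂ) (1 / 4) := mem_ball_zero_iff.2 (by linarith)
  have hwb' : w' ∈ ball (0 : ℂ) (1 / 4) := mem_ball_zero_iff.2 (by linarith)
  have hsub1 : ball (0 : ℂ) (1 / 4) ⊆ ball 0 1 := ball_subset_ball (by norm_num)
  have hda : ∀ z ∈ ball (0 : ℂ) (1 / 4), DifferentiableAt ℂ e z := fun z hz =>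
    he.differentiableAt (isOpen_ball.mem_nhds (hsub1 hz))
  have hlip : ∀ z ∈ ball (0 : ℂ) (1 / 4), ‖deriv e z - deriv e w‖ ≤ 1 / 8 * ‖z - w‖ :=
    fun z hz => Convex.norm_image_sub_le_of_norm_deriv_le (fun x hx =>
      hed.differentiableAt (isOpen_ball.mem_nhds (hsub1 hx))) h2 (convex_ball _ _) hwb hz
  have hmv := Convex.norm_image_sub_le_of_norm_deriv_le (𝕜 := ℂ)
    (f := fun z => e z - deriv e w * z) (s := ball 0 (1 / 4) ∩ closedBall w ‖w - w'‖)
    (C := 1 / 8 * ‖w - w'‖) (x := w') (y := w)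
    (fun x hx => (hda x hx.1).sub (by fun_prop))
    (fun x hx => by
      rw [((hda x hx.1).hasDerivAt.fun_sub ((hasDerivAt_id' x).const_mul (deriv e w))).deriv,
        mul_one]
      refine (hlip x hx.1).trans ?_
      have := mem_closedBall.1 hx.2
      rw [dist_eq_norm] at this
      gcongr) ((convex_ball _ _).inter (convex_closedBall _ _))
    ⟨hwb', by rw [mem_closedBall, dist_eq_norm, norm_sub_rev]⟩
    ⟨hwb, mem_closedBall_self (norm_nonneg _)⟩
  have h3 : e w - e w' = ((2 * (e w).re : ℝ) : ℂ) := by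
    have h4 := her w (hsub1 hwb)
    have h5 := congrArg (starRingEnd ℂ) h4
    simp only [map_add, Complex.conj_conj, map_zero] at h5
    have h6 := Complex.add_conj (e w)
    push_cast at h6 ⊢
    rw [← h6, hw']
    linear_combination -h5
  have h4 : e w - deriv e w * w - (e w' - deriv e w * w') =
      -(((2 * w.re : ℝ) : ℂ) * (deriv e w - ((e w).re / w.re : ℝ))) := by
    have : e w - deriv e w * w - (e w' - deriv e w * w') = (e w - e w') - deriv e w * (w - w') := by
      ring
    rw [this, h3, hww]
    have hw0' : (w.re : ℂ) ≠ 0 := by exact_mod_cast hw0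
    push_cast
    field_simp
    ring
  rw [h4, norm_neg, norm_mul, hww, Complex.norm_real, Real.norm_eq_abs, abs_mul, abs_two] at hmv
  have hpos : 0 < |w.re| := abs_pos.2 hw0
  refine ⟨(h1 w (ball_subset_ball (by norm_num) hwb)).trans (by norm_num), ?_⟩
  nlinarith [norm_nonneg (deriv e w - ((e w).re / w.re : ℝ))]

theorem norm_deriv_div_re_sub_le_of_close_pow {f g : ℂ → ℂ} {m : ℕ} {η : ℝ} (hm : 1 ≤ m)
    (hη : η * 4 ^ m ≤ 1 / 10000) (hf : DifferentiableOn ℂ f (ball 0 2))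
    (hg : DifferentiableOn ℂ g (ball 0 2))
    (hfm : ∀ z ∈ ball (0 : ℂ) 2, ‖f z - z ^ m‖ ≤ η)
    (hgm : ∀ z ∈ ball (0 : ℂ) 2, ‖g z - z ^ m‖ ≤ η)
    (h0 : ∀ z ∈ ball (0 : ℂ) 2, (g z).re = 0 → (f z).re = 0) (hg0 : (g 0).re ≠ 0) :
    ‖deriv f 0 / (f 0).re - deriv g 0 / (g 0).re‖ ≤ 100 := by
  have hη4 : η ≤ 1 / 10000 * (1 / 4) ^ m := by
    rw [one_div_pow, ← div_eq_mul_one_div, le_div_iff₀ (by positivity)]; exact hη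
  have hη1 : η ≤ 1 / 10000 := by
    have : (1 / 4 : ℝ) ^ m ≤ 1 := pow_le_one₀ (by norm_num) (by norm_num)
    linarith
  obtain ⟨e, hed, heb, hec, her⟩ := exists_eq_comp_of_re_eq_zero (d := fun z => f z - g z)
    (κ := 1 / 100) hm hη hg hgm (hf.sub hg) (fun z hz => by
      have h1 := norm_sub_le (f z - z ^ m) (g z - z ^ m)
      rw [sub_sub_sub_cancel_right] at h1
      linarith [hfm z hz, hgm z hz]) (fun z hz h => by
      rw [Complex.sub_re, h, h0 z hz h, sub_zero])
  have h2 : (0 : ℂ) ∈ ball (0 : ℂ) 2 := mem_ball_self (by norm_num)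
  have hgn : ‖g 0‖ ≤ 1 / 10 := by
    have := hgm 0 h2
    rw [zero_pow (by omega), sub_zero] at this
    linarith
  obtain ⟨hd1, hd2⟩ := norm_deriv_sub_re_div_le hed heb her hgn hg0
  set A := (g 0).re with hA
  set q : ℝ := (e (g 0)).re / A with hq
  have hA1 : |A| ≤ 1 / 10 := (Complex.abs_re_le_norm _).trans hgn
  have hq2 : |q| ≤ 1 / 2 := by
    have h3 := norm_sub_norm_le (q : ℂ) (deriv e (g 0))
    rw [norm_sub_rev, Complex.norm_real, Real.norm_eq_abs] at h3
    linarith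
  have hgd : DifferentiableAt ℂ g 0 := hg.differentiableAt (isOpen_ball.mem_nhds h2)
  have hg' : ‖deriv g 0‖ ≤ 2 := by
    have := norm_deriv_le_of_norm_le_on_ball (f := g) (R := 1) (C := 1 + 1 / 10) (r := 9 / 10)
      (hg.mono (ball_subset_ball (by norm_num))) (fun z hz => by
        have h3 := norm_add_le (g z - z ^ m) (z ^ m)
        rw [sub_add_cancel, norm_pow] at h3
        have h4 := hgm z (ball_subset_ball (by norm_num) hz)
        rw [mem_ball_zero_iff] at hz
        have h5 : ‖z‖ ^ m ≤ 1 := pow_le_one₀ (norm_nonneg _) hz.le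
        linarith) (by norm_num) (z := 0) (by norm_num)
    linarith
  have hfe : f =ᶠ[𝓝 0] fun z => g z + e (g z) := by
    filter_upwards [ball_mem_nhds (0 : ℂ) (show (0 : ℝ) < 9 / 10 by norm_num)] with z hz
    linear_combination hec z hz
  have hea : DifferentiableAt ℂ e (g 0) :=
    hed.differentiableAt (isOpen_ball.mem_nhds (mem_ball_zero_iff.2 (by linarith)))
  have hf' : deriv f 0 = deriv g 0 * (1 + deriv e (g 0)) := by
    have hcomp : HasDerivAt (fun z => e (g z)) (deriv e (g 0) * deriv g 0) 0 :=
      hea.hasDerivAt.comp 0 hgd.hasDerivAt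
    rw [hfe.deriv_eq, (hgd.hasDerivAt.fun_add hcomp).deriv]
    ring
  have hf0 : (f 0).re = A * (1 + q) := by
    rw [hfe.eq_of_nhds, Complex.add_re, hq, ← hA]
    field_simp
  have hq1 : 1 / 2 ≤ 1 + q := by linarith [(abs_le.1 hq2).1]
  have hAc : (A : ℂ) ≠ 0 := by exact_mod_cast hg0
  have hqc : ((1 + q : ℝ) : ℂ) ≠ 0 := by
    rw [Ne, Complex.ofReal_eq_zero]; linarith
  have hfin : deriv f 0 / (f 0).re - deriv g 0 / A =
      deriv g 0 * (deriv e (g 0) - q) / (A * (1 + q : ℝ)) := by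
    rw [hf', hf0]
    push_cast at hqc ⊢
    field_simp
    ring
  rw [hfin, norm_div, norm_mul, norm_mul, Complex.norm_real, Complex.norm_real, Real.norm_eq_abs,
    Real.norm_of_nonneg (by linarith : 0 ≤ 1 + q), div_le_iff₀ (by
      have := abs_pos.2 hg0
      positivity)]
  have hpos := abs_pos.2 hg0
  calc ‖deriv g 0‖ * ‖deriv e (g 0) - q‖ ≤ 2 * |A| := by gcongr
    _ ≤ 100 * (|A| * (1 + q)) := by nlinarith

theorem TendstoLocallyUniformlyOn.comp_tendsto {α β ι κ : Type*} [TopologicalSpace α]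
    [UniformSpace β] {F : ι → α → β} {f : α → β} {p : Filter ι} {s : Set α}
    (h : TendstoLocallyUniformlyOn F f p s) {q : Filter κ} {φ : κ → ι} (hφ : Tendsto φ q p) :
    TendstoLocallyUniformlyOn (fun k => F (φ k)) f q s := fun u hu x hx =>
  let ⟨t, ht, hk⟩ := h u hu x hx
  ⟨t, ht, hφ.eventually hk⟩

theorem deriv_div_re_mul_comp_mul (a : ℂ → ℂ) (c : ℂ) {s : ℝ} (hs : s ≠ 0) :
    deriv (fun z => (s : ℂ) * a (c * z)) 0 / (((s : ℂ) * a (c * 0)).re : ℂ) =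
      c * (deriv a 0 / (a 0).re) := by
  have hsc : (s : ℂ) ≠ 0 := by exact_mod_cast hs
  rw [deriv_const_mul_field, deriv_comp_mul_left, mul_zero, smul_eq_mul, Complex.re_ofReal_mul]
  push_cast
  rw [mul_div_mul_left _ _ hsc, mul_div_assoc]

theorem dvd_of_re_mul_pow_eq_zero {c c' : ℂ} {n m : ℕ} (hn : 1 ≤ n) (hc : c ≠ 0) (hc' : c' ≠ 0)
    (h : ∀ z : ℂ, (c * z ^ n).re = 0 → (c' * z ^ m).re = 0) : n ∣ m := by
  obtain ⟨w, hw⟩ := IsAlgClosed.exists_pow_nat_eq (Complex.I / c) (n := n) (by omega)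
  have hcw : c * w ^ n = Complex.I := by rw [hw]; field_simp
  have hw0 : w ≠ 0 := by
    rintro rfl
    rw [zero_pow (by omega), mul_zero] at hcw
    exact Complex.I_ne_zero hcw.symm
  have hn0 : (n : ℂ) ≠ 0 := by exact_mod_cast (by omega : n ≠ 0)
  have hnR : (n : ℝ) ≠ 0 := by exact_mod_cast (by omega : n ≠ 0)
  set ω : ℂ := Complex.exp (Real.pi * Complex.I / n) with hω
  have hωn : ω ^ n = -1 := by
    rw [hω, ← Complex.exp_nat_mul, mul_div_cancel₀ _ hn0, Complex.exp_pi_mul_I]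
  have h1 := h w (by rw [hcw, Complex.I_re])
  have h2 := h (w * ω) (by rw [mul_pow, hωn, ← mul_assoc, hcw]; simp)
  rw [mul_pow, ← mul_assoc, Complex.mul_re, h1, zero_mul, zero_sub, neg_eq_zero, mul_eq_zero] at h2
  have h3 : (ω ^ m).im = 0 := h2.resolve_left fun h4 =>
    mul_ne_zero hc' (pow_ne_zero m hw0) (Complex.ext h1 h4)
  have h4 : ω ^ m = Complex.exp ((m * (Real.pi / n) : ℝ) * Complex.I) := by
    rw [hω, ← Complex.exp_nat_mul]; congr 1; push_cast; ring
  rw [h4, Complex.exp_ofReal_mul_I_im, Real.sin_eq_zero_iff] at h3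
  obtain ⟨j, hj⟩ := h3
  have h5 : (j : ℝ) * n = m := by
    have := Real.pi_pos.ne'
    field_simp at hj
    linarith
  have h6 : j * (n : ℤ) = m := by exact_mod_cast h5
  exact Int.natCast_dvd_natCast.1 ⟨j, by rw [← h6]; ring⟩

theorem eventually_norm_rescale_sub_le {F c : ℂ → ℂ} {n : ℕ} (hc : ContinuousAt c 0)
    (hF : ∀ᶠ z in 𝓝 0, F z = z ^ n * c z) (κ : ℂ) {ε : ℝ} (hε : 0 < ε) :
    ∀ᶠ δ in 𝓝[>] (0 : ℝ), ∀ z ∈ ball (0 : ℂ) 2,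
      ‖((δ ^ n)⁻¹ : ℝ) * F (δ * κ * z) - c 0 * κ ^ n * z ^ n‖ ≤ ε := by
  set M : ℝ := (2 * ‖κ‖) ^ n + 1 with hM
  have hM0 : 0 < M := by positivity
  have h1 : ∀ᶠ w in 𝓝 (0 : ℂ), F w = w ^ n * c w ∧ dist (c w) (c 0) < ε / M :=
    hF.and (Metric.tendsto_nhds.1 hc _ (by positivity))
  obtain ⟨ρ, hρ, hρs⟩ := Metric.eventually_nhds_iff_ball.1 h1
  have h2 : ∀ᶠ δ in 𝓝[>] (0 : ℝ), δ * (2 * ‖κ‖) < ρ := by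
    have : Tendsto (fun δ : ℝ => δ * (2 * ‖κ‖)) (𝓝 0) (𝓝 (0 * (2 * ‖κ‖))) :=
      tendsto_id.mul_const _
    rw [zero_mul] at this
    exact nhdsWithin_le_nhds (this.eventually (gt_mem_nhds hρ))
  filter_upwards [h2, self_mem_nhdsWithin] with δ hδ (hδ0 : 0 < δ) z hz
  rw [mem_ball_zero_iff] at hz
  have hzm : δ * κ * z ∈ ball (0 : ℂ) ρ := by
    rw [mem_ball_zero_iff, norm_mul, norm_mul, Complex.norm_real, Real.norm_of_nonneg hδ0.le]
    refine lt_of_le_of_lt ?_ hδ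
    rw [mul_assoc, mul_comm 2]
    gcongr
  obtain ⟨h3, h4⟩ := hρs _ hzm
  have hδc : (δ : ℂ) ≠ 0 := by exact_mod_cast hδ0.ne'
  have h5 : ((δ ^ n)⁻¹ : ℝ) * F (δ * κ * z) - c 0 * κ ^ n * z ^ n =
      (κ * z) ^ n * (c (δ * κ * z) - c 0) := by
    rw [h3]
    push_cast
    field_simp
    ring
  rw [h5, norm_mul, norm_pow, norm_mul]
  rw [dist_eq_norm] at h4
  calc (‖κ‖ * ‖z‖) ^ n * ‖c (δ * κ * z) - c 0‖ ≤ M * (ε / M) := by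
        gcongr
        rw [hM, mul_comm 2]
        have : (‖κ‖ * ‖z‖) ^ n ≤ (‖κ‖ * 2) ^ n := by gcongr
        linarith
    _ = ε := by field_simp

theorem exists_eventually_eq_pow_mul {F : ℂ → ℂ} {R : ℝ} (hR : 0 < R)
    (hF : DifferentiableOn ℂ F (ball 0 R)) (h0 : F 0 = 0) (hF0 : ∃ z ∈ ball (0 : ℂ) R, F z ≠ 0) :
    ∃ (n : ℕ) (c : ℂ → ℂ), 1 ≤ n ∧ ContinuousAt c 0 ∧ c 0 ≠ 0 ∧
      ∀ᶠ z in 𝓝 0, F z = z ^ n * c z := by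
  have han := hF.analyticOnNhd isOpen_ball
  have hm : (0 : ℂ) ∈ ball 0 R := mem_ball_self hR
  have h1 : ¬∀ᶠ z in 𝓝 (0 : ℂ), F z = 0 := fun h => by
    obtain ⟨z, hz, hz0⟩ := hF0
    exact hz0 (han.eqOn_zero_of_preconnected_of_eventuallyEq_zero
      (convex_ball (0 : ℂ) R).isPreconnected hm h hz)
  obtain ⟨n, c, hc, hc0, he⟩ := (han 0 hm).exists_eventuallyEq_pow_smul_nonzero_iff.2 h1
  refine ⟨n, c, ?_, hc.continuousAt, hc0, by simpa using he⟩
  by_contra hn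
  have h2 := he.self_of_nhds
  simp [show n = 0 by omega, h0] at h2
  exact hc0 h2.symm

theorem re_leading_term_eq_zero {F G c c' : ℂ → ℂ} {n m : ℕ} {R : ℝ} (hR : 0 < R)
    (hF : ContinuousOn F (ball 0 R)) (hn : 1 ≤ n) (hc : ContinuousAt c 0) (hc0 : c 0 ≠ 0)
    (hFc : ∀ᶠ z in 𝓝 0, F z = z ^ n * c z) (hc' : ContinuousAt c' 0)
    (hGc : ∀ᶠ z in 𝓝 0, G z = z ^ m * c' z)
    (h : ∀ z ∈ ball (0 : ℂ) R, (F z).re = 0 → (G z).re = 0) (z : ℂ)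
    (hz : (c 0 * z ^ n).re = 0) : (c' 0 * z ^ m).re = 0 := by
  have key : ∀ {F c : ℂ → ℂ} {n : ℕ}, ContinuousAt c 0 → (∀ᶠ z in 𝓝 0, F z = z ^ n * c z) →
      TendstoLocallyUniformlyOn (fun (δ : ℝ) z => ((δ ^ n)⁻¹ : ℝ) * F (δ * 1 * z))
        (fun z => c 0 * 1 ^ n * z ^ n) (𝓝[>] (0 : ℝ)) (ball 0 2) := fun {F c n} hc hF => by
    refine TendstoUniformlyOn.tendstoLocallyUniformlyOn ?_
    rw [Metric.tendstoUniformlyOn_iff]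
    intro ε hε
    filter_upwards [eventually_norm_rescale_sub_le hc hF 1 (half_pos hε)] with δ hδ z hz
    rw [dist_comm, dist_eq_norm]
    linarith [hδ z hz]
  have hsmall : ∀ᶠ δ : ℝ in 𝓝[>] (0 : ℝ), ∀ z ∈ ball (0 : ℂ) 2, (δ : ℂ) * 1 * z ∈ ball (0 : ℂ) R := by
    filter_upwards [Ioo_mem_nhdsGT (half_pos hR)] with δ hδ z hz
    rw [mem_ball_zero_iff] at hz ⊢
    rw [mul_one, norm_mul, Complex.norm_real, Real.norm_of_nonneg hδ.1.le]
    nlinarith [hδ.1, hδ.2, norm_nonneg z]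
  have hlim := re_eq_zero_of_tendstoLocallyUniformlyOn isOpen_ball
    (convex_ball (0 : ℂ) 2).isPreconnected (key hc hFc) (key hc' hGc) ?_ (by fun_prop)
    (by fun_prop) ?_ ?_
  · have hex : ∃ t : ℝ, 0 < t ∧ (t : ℂ) * z ∈ ball (0 : ℂ) 2 := by
      refine ⟨1 / (1 + ‖z‖), by positivity, ?_⟩
      rw [mem_ball_zero_iff, norm_mul, Complex.norm_real, Real.norm_of_nonneg (by positivity),
        div_mul_eq_mul_div, div_lt_iff₀ (by positivity)]
      linarith [norm_nonneg z]
    obtain ⟨t, ht, htz⟩ := hex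
    have hs : ∀ (a : ℂ) (k : ℕ), (a * 1 ^ k * (t * z) ^ k).re = t ^ k * (a * z ^ k).re := by
      intro a k
      rw [← Complex.re_ofReal_mul]
      congr 1
      push_cast
      ring
    have h1 := hlim _ htz (by rw [hs, hz, mul_zero])
    rw [hs] at h1
    exact (mul_eq_zero.1 h1).resolve_left (by positivity)
  · filter_upwards [hsmall] with δ hδ
    exact continuousOn_const.mul (hF.comp (by fun_prop) hδ)
  · obtain ⟨w, hw⟩ := IsAlgClosed.exists_pow_nat_eq (c 0)⁻¹ (n := n) (by omega)
    have hw0 : c 0 * w ^ n = 1 := by rw [hw, mul_inv_cancel₀ hc0]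
    refine ⟨((1 + ‖w‖)⁻¹ : ℝ) * w, ?_, ?_⟩
    · rw [mem_ball_zero_iff, norm_mul, Complex.norm_real, Real.norm_of_nonneg (by positivity),
        inv_mul_lt_iff₀ (by positivity)]
      linarith [norm_nonneg w]
    · have : c 0 * 1 ^ n * (((1 + ‖w‖)⁻¹ : ℝ) * w) ^ n = (((1 + ‖w‖)⁻¹ ^ n : ℝ) : ℂ) := by
        push_cast
        linear_combination ((1 + (‖w‖ : ℂ))⁻¹) ^ n * hw0
      rw [this, Complex.ofReal_re]
      positivity
  · filter_upwards [hsmall, self_mem_nhdsWithin] with δ hδ (hδ0 : 0 < δ) w hw h0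
    rw [Complex.re_ofReal_mul] at h0 ⊢
    rw [h _ (hδ w hw) ((mul_eq_zero.1 h0).resolve_left (by positivity)), mul_zero]

theorem norm_rescale_sub_pow_le {x y z : ℂ} {n : ℕ} {δ ρ η : ℝ} (hδ : 0 < δ) (hρ : ρ ≠ 0)
    (h1 : ‖((δ ^ n)⁻¹ : ℝ) * x - ρ * z ^ n‖ ≤ |ρ| * (η / 2)) (h2 : ‖x - y‖ ≤ |ρ| * (η / 2) * δ ^ n) :
    ‖((δ ^ n * ρ)⁻¹ : ℝ) * y - z ^ n‖ ≤ η := by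
  have hρc : (ρ : ℂ) ≠ 0 := by exact_mod_cast hρ
  have hδc : (δ : ℂ) ≠ 0 := by exact_mod_cast hδ.ne'
  have e : ((δ ^ n * ρ)⁻¹ : ℝ) * y - z ^ n =
      ((ρ⁻¹ : ℝ) : ℂ) * ((((δ ^ n)⁻¹ : ℝ) * x - ρ * z ^ n) - ((δ ^ n)⁻¹ : ℝ) * (x - y)) := by
    push_cast
    field_simp
    ring
  rw [e, norm_mul, Complex.norm_real, norm_inv, Real.norm_eq_abs, inv_mul_le_iff₀ (abs_pos.2 hρ)]
  refine (norm_sub_le _ _).trans ?_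
  have h3 : ‖(((δ ^ n)⁻¹ : ℝ) : ℂ) * (x - y)‖ ≤ |ρ| * (η / 2) := by
    rw [norm_mul, Complex.norm_real, Real.norm_of_nonneg (by positivity),
      inv_mul_le_iff₀ (by positivity)]
    linarith
  linarith

theorem exists_eventually_norm_deriv_div_re_sub_le {a b : ℕ → ℂ → ℂ} {F G : ℂ → ℂ} {R : ℝ}
    (hR : 0 < R) (ha : ∀ k, DifferentiableOn ℂ (a k) (ball 0 R))
    (hb : ∀ k, DifferentiableOn ℂ (b k) (ball 0 R))
    (haF : TendstoLocallyUniformlyOn a F atTop (ball 0 R))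
    (hbG : TendstoLocallyUniformlyOn b G atTop (ball 0 R))
    (hF : DifferentiableOn ℂ F (ball 0 R)) (hG : DifferentiableOn ℂ G (ball 0 R))
    (hFi : (F 0).im = 0) (hGi : (G 0).im = 0)
    (hF0 : ∃ z ∈ ball (0 : ℂ) R, (F z).re ≠ 0) (hG0 : ∃ z ∈ ball (0 : ℂ) R, (G z).re ≠ 0)
    (hz : ∀ k, ∀ z ∈ ball (0 : ℂ) R, (a k z).re = 0 ↔ (b k z).re = 0)
    (h0 : ∀ k, (b k 0).re ≠ 0) :
    ∃ C, ∀ᶠ k in atTop, ‖deriv (a k) 0 / (a k 0).re - deriv (b k) 0 / (b k 0).re‖ ≤ C := by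
  have hm : (0 : ℂ) ∈ ball 0 R := mem_ball_self hR
  have hFG : ∀ x ∈ ball (0 : ℂ) R, (F x).re = 0 → (G x).re = 0 :=
    re_eq_zero_of_tendstoLocallyUniformlyOn isOpen_ball (convex_ball (0 : ℂ) R).isPreconnected
      haF hbG (.of_forall fun k => (ha k).continuousOn) hG.continuousOn hF hF0
      (.of_forall fun k z hzm => (hz k z hzm).1)
  have hGF : ∀ x ∈ ball (0 : ℂ) R, (G x).re = 0 → (F x).re = 0 :=
    re_eq_zero_of_tendstoLocallyUniformlyOn isOpen_ball (convex_ball (0 : ℂ) R).isPreconnected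
      hbG haF (.of_forall fun k => (hb k).continuousOn) hF.continuousOn hG hG0
      (.of_forall fun k z hzm => (hz k z hzm).2)
  by_cases hF00 : (F 0).re = 0
  swap
  · have hG00 : (G 0).re ≠ 0 := fun h => hF00 (hGF 0 hm h)
    have lim : ∀ {a : ℕ → ℂ → ℂ} {F : ℂ → ℂ}, (∀ k, DifferentiableOn ℂ (a k) (ball 0 R)) →
        TendstoLocallyUniformlyOn a F atTop (ball 0 R) → (F 0).re ≠ 0 →
        Tendsto (fun k => deriv (a k) 0 / ((a k 0).re : ℂ)) atTop
          (𝓝 (deriv F 0 / ((F 0).re : ℂ))) := fun {a F} ha haF h => by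
      have h1 := (haF.deriv (.of_forall ha) isOpen_ball).tendsto_at hm
      have h2 : Tendsto (fun k => ((a k 0).re : ℂ)) atTop (𝓝 ((F 0).re : ℂ)) :=
        ((Complex.continuous_ofReal.comp Complex.continuous_re).tendsto _).comp
          (haF.tendsto_at hm)
      exact h1.div h2 (by exact_mod_cast h)
    have h3 := ((lim ha haF hF00).sub (lim hb hbG hG00)).norm
    exact ⟨_, (h3.eventually (gt_mem_nhds (lt_add_one _))).mono fun k hk => hk.le⟩
  have hFz : F 0 = 0 := Complex.ext hF00 hFi
  have hGz : G 0 = 0 := Complex.ext (hFG 0 hm hF00) hGi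
  have hne : ∀ {F : ℂ → ℂ}, (∃ z ∈ ball (0 : ℂ) R, (F z).re ≠ 0) →
      ∃ z ∈ ball (0 : ℂ) R, F z ≠ 0 :=
    fun ⟨z, hz, h⟩ => ⟨z, hz, fun h' => h (by rw [h', Complex.zero_re])⟩
  obtain ⟨n, c, hn, hc, hc0, hFc⟩ := exists_eventually_eq_pow_mul hR hF hFz (hne hF0)
  obtain ⟨m, c', hm', hc', hc0', hGc⟩ := exists_eventually_eq_pow_mul hR hG hGz (hne hG0)
  have hl := re_leading_term_eq_zero hR hF.continuousOn hn hc hc0 hFc hc' hGc hFG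
  have hl' := re_leading_term_eq_zero hR hG.continuousOn hm' hc' hc0' hGc hc hFc hGF
  obtain rfl : n = m := Nat.dvd_antisymm (dvd_of_re_mul_pow_eq_zero hn hc0 hc0' hl)
    (dvd_of_re_mul_pow_eq_zero hm' hc0' hc0 hl')
  obtain ⟨κ, hκ⟩ := IsAlgClosed.exists_pow_nat_eq (c 0)⁻¹ (n := n) (by omega)
  have hκ1 : c 0 * κ ^ n = 1 := by rw [hκ, mul_inv_cancel₀ hc0]
  have hκ0 : κ ≠ 0 := by
    rintro rfl
    rw [zero_pow (by omega), mul_zero] at hκ1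
    exact zero_ne_one hκ1
  obtain ⟨ι, hι⟩ := IsAlgClosed.exists_pow_nat_eq Complex.I (n := n) (by omega)
  have hρi : (c' 0 * κ ^ n).im = 0 := by
    have := hl (κ * ι) (by rw [mul_pow, ← mul_assoc, hκ1, hι, one_mul, Complex.I_re])
    rw [mul_pow, ← mul_assoc, hι, Complex.mul_I_re, neg_eq_zero] at this
    exact this
  obtain ⟨ρ, hρ⟩ : ∃ ρ : ℝ, c' 0 * κ ^ n = ρ := ⟨_, (Complex.conj_eq_iff_re.1
    (Complex.conj_eq_iff_im.2 hρi)).symm⟩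
  have hρ0 : ρ ≠ 0 := by
    rintro rfl
    exact mul_ne_zero hc0' (pow_ne_zero n hκ0) (by simpa using hρ)
  set η : ℝ := 1 / (10000 * 4 ^ n) with hη
  have hη0 : 0 < η := by positivity
  have hsmall : ∀ᶠ δ in 𝓝[>] (0 : ℝ), δ * ‖κ‖ < R / 4 := by
    have : Tendsto (fun δ : ℝ => δ * ‖κ‖) (𝓝 0) (𝓝 (0 * ‖κ‖)) := tendsto_id.mul_const _
    rw [zero_mul] at this
    exact nhdsWithin_le_nhds (this.eventually (gt_mem_nhds (by positivity)))
  obtain ⟨δ, h1, h2, h3, hδ : 0 < δ⟩ :=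
    ((eventually_norm_rescale_sub_le hc hFc κ (by positivity : 0 < |(1 : ℝ)| * (η / 2))).and
      ((eventually_norm_rescale_sub_le hc' hGc κ (by positivity : 0 < |ρ| * (η / 2))).and
        (hsmall.and self_mem_nhdsWithin))).exists
  rw [hκ1] at h1
  rw [hρ] at h2
  have hmap : ∀ z ∈ ball (0 : ℂ) 2, (δ : ℂ) * κ * z ∈ closedBall (0 : ℂ) (R / 2) := by
    intro z hz
    rw [mem_ball_zero_iff] at hz
    rw [mem_closedBall_zero_iff, norm_mul, norm_mul, Complex.norm_real, Real.norm_of_nonneg hδ.le]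
    have : 0 ≤ δ * ‖κ‖ := by positivity
    nlinarith [norm_nonneg z]
  have hsub : closedBall (0 : ℂ) (R / 2) ⊆ ball 0 R := closedBall_subset_ball (by linarith)
  have hua := Metric.tendstoUniformlyOn_iff.1
    ((tendstoLocallyUniformlyOn_iff_forall_isCompact isOpen_ball).1 haF _ hsub
      (isCompact_closedBall _ _)) (|(1 : ℝ)| * (η / 2) * δ ^ n) (by positivity)
  have hub := Metric.tendstoUniformlyOn_iff.1
    ((tendstoLocallyUniformlyOn_iff_forall_isCompact isOpen_ball).1 hbG _ hsub
      (isCompact_closedBall _ _)) (|ρ| * (η / 2) * δ ^ n) (by positivity)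
  refine ⟨100 / (δ * ‖κ‖), ?_⟩
  filter_upwards [hua, hub] with k hka hkb
  have hdiff : ∀ (s : ℝ) {f : ℂ → ℂ}, DifferentiableOn ℂ f (ball 0 R) →
      DifferentiableOn ℂ (fun z => (s : ℂ) * f (δ * κ * z)) (ball 0 2) := fun s f hf =>
    (hf.comp (by fun_prop) fun z hz => hsub (hmap z hz)).const_mul _
  have hB := norm_deriv_div_re_sub_le_of_close_pow hn
    (by rw [hη]; field_simp; exact le_rfl)
    (hdiff (δ ^ n * 1)⁻¹ (ha k)) (hdiff (δ ^ n * ρ)⁻¹ (hb k))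
    (fun z hz => norm_rescale_sub_pow_le hδ one_ne_zero (by simpa using h1 z hz)
      (by simpa [dist_eq_norm] using (hka _ (hmap z hz)).le))
    (fun z hz => norm_rescale_sub_pow_le hδ hρ0 (h2 z hz)
      (by simpa [dist_eq_norm] using (hkb _ (hmap z hz)).le))
    (fun z hz' h => by
      rw [Complex.re_ofReal_mul] at h ⊢
      rw [(hz k _ (hsub (hmap z hz'))).2 ((mul_eq_zero.1 h).resolve_left (by positivity)),
        mul_zero])
    (by
      rw [Complex.re_ofReal_mul, mul_zero]
      exact mul_ne_zero (by positivity) (h0 k))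
  rw [deriv_div_re_mul_comp_mul _ _ (by positivity), deriv_div_re_mul_comp_mul _ _ (by positivity),
    ← mul_sub, norm_mul, norm_mul, Complex.norm_real, Real.norm_of_nonneg hδ.le] at hB
  rw [le_div_iff₀ (by positivity)]
  linarith

theorem exists_norm_deriv_div_re_sub_le (N : ℕ) :
    ∃ C > (0 : ℝ), ∀ F G : ℂ → ℂ, Admissible N F → Admissible N G → (F 0).im = 0 → (G 0).im = 0 →
      (∀ z ∈ ball (0 : ℂ) 1, (F z).re = 0 ↔ (G z).re = 0) → (G 0).re ≠ 0 →
      ‖deriv F 0 / (F 0).re - deriv G 0 / (G 0).re‖ ≤ C := by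
  by_contra! H
  choose F G hF hG hFi hGi hz h0 hlt using fun k : ℕ => H (k + 1) (by positivity)
  obtain ⟨φ, l, f, hφ, hl, hlim, hf, hfi, hf0⟩ := Admissible.exists_subseq hF hFi
  obtain ⟨ψ, m, g, hψ, hm, hlim', hg, hgi, hg0⟩ :=
    Admissible.exists_subseq (fun k => hG (φ k)) (fun k => hGi (φ k))
  have hsub : ball (0 : ℂ) (1 / 4) ⊆ ball 0 1 := ball_subset_ball (by norm_num)
  obtain ⟨C, hC⟩ := exists_eventually_norm_deriv_div_re_sub_le
    (a := fun k z => l (ψ k) * F (φ (ψ k)) z) (b := fun k z => m k * G (φ (ψ k)) z)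
    (by norm_num : (0 : ℝ) < 1 / 4)
    (fun k => ((hF _).1.mono hsub).const_mul _) (fun k => ((hG _).1.mono hsub).const_mul _)
    (hlim.comp_tendsto hψ.tendsto_atTop) hlim' hf hg hfi hgi hf0 hg0
    (fun k z hzm => by
      simp only [Complex.re_ofReal_mul, mul_eq_zero, (hl _).ne', (hm _).ne', false_or]
      exact hz _ z (hsub hzm))
    (fun k => by
      rw [Complex.re_ofReal_mul]
      exact mul_ne_zero (hm k).ne' (h0 _))
  have hs : ∀ (a : ℂ → ℂ) {s : ℝ}, 0 < s →
      deriv (fun z => (s : ℂ) * a z) 0 / (((s : ℂ) * a 0).re : ℂ) = deriv a 0 / (a 0).re :=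
    fun a s hs => by simpa using deriv_div_re_mul_comp_mul a 1 hs.ne'
  obtain ⟨k, hk, hk'⟩ := (hC.and (eventually_ge_atTop ⌈C⌉₊)).exists
  rw [hs _ (hl _), hs _ (hm _)] at hk
  have h1 : k ≤ φ (ψ k) := (hφ.comp hψ).le_apply
  have h2 : C ≤ k := (Nat.le_ceil C).trans (by exact_mod_cast hk')
  have h3 : (k : ℝ) ≤ φ (ψ k) := by exact_mod_cast h1
  linarith [hlt (φ (ψ k))]

theorem HarmonicOnSet.exists_differentiableOn_re_eq {u : En 2 → ℝ} {r : ℝ}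
    (hu : HarmonicOnSet u (ball 0 r)) :
    ∃ F : ℂ → ℂ, DifferentiableOn ℂ F (ball 0 r) ∧ (F 0).im = 0 ∧
      ∀ z ∈ ball (0 : ℂ) r, (F z).re = u (Complex.orthonormalBasisOneI.repr z) := by
  set e := Complex.orthonormalBasisOneI.repr with he
  have hmem : ∀ {z : ℂ}, z ∈ ball (0 : ℂ) r → e z ∈ ball (0 : En 2) r := fun {z} hz => by
    rw [mem_ball_zero_iff] at hz ⊢
    rwa [e.norm_map]
  have hlap : ∀ z, Laplacian.laplacian (u ∘ e) z = laplacianAt u (e z) := fun z => by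
    have h2 := e.toContinuousLinearEquiv.iteratedFDerivWithin_comp_right u
      (uniqueDiffOn_univ (𝕜 := ℝ)) (x := z) (mem_univ _) 2
    rw [preimage_univ, iteratedFDerivWithin_univ, iteratedFDerivWithin_univ] at h2
    rw [InnerProductSpace.laplacian_eq_iteratedFDeriv_orthonormalBasis _
      Complex.orthonormalBasisOneI]
    refine Finset.sum_congr rfl fun i _ => ?_
    have h3 := congrArg (fun m => m ![Complex.orthonormalBasisOneI i,
      Complex.orthonormalBasisOneI i]) h2
    refine h3.trans ?_
    rw [ContinuousMultilinearMap.compContinuousLinearMap_apply]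
    congr 1
    funext j
    fin_cases j <;> exact Complex.orthonormalBasisOneI.repr_self i
  have hharm : InnerProductSpace.HarmonicOnNhd (u ∘ e) (ball (0 : ℂ) r) := fun z hz => by
    refine ⟨((hu.1.contDiffAt (isOpen_ball.mem_nhds (hmem hz)))).comp z
      e.toContinuousLinearEquiv.contDiff.contDiffAt, ?_⟩
    filter_upwards [isOpen_ball.mem_nhds hz] with w hw
    rw [hlap, hu.2 _ (hmem hw), Pi.zero_apply]
  obtain ⟨F, hF, hFu⟩ := hharm.exists_analyticOnNhd_ball_re_eq
  refine ⟨fun z => F z - ((F 0).im : ℂ) * Complex.I, hF.differentiableOn.sub_const _, by simp,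
    fun z hz => ?_⟩
  have := hFu hz
  simpa using this

theorem exists_coloring_joinedIn_of_ncard_lt {u : En 2 → ℝ} {Ω : Set (En 2)} {N : ℕ}
    (hΩ : IsOpen Ω) (hu : ContinuousOn u Ω) (hfin : (nodalComponents u Ω).Finite)
    (hN : (nodalComponents u Ω).ncard < N) :
    ∃ c : En 2 → Fin N, ∀ x ∈ Ω, ∀ y ∈ Ω, u x ≠ 0 → u y ≠ 0 → c x = c y →
      JoinedIn {z ∈ Ω | u z ≠ 0} x y := by
  have hS : Ω \ zeroSet u Ω = {z ∈ Ω | u z ≠ 0} := by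
    ext z
    simp only [zeroSet, Set.mem_sdiff, mem_ofPred_eq]
    tauto
  have hopen : IsOpen {z ∈ Ω | u z ≠ 0} := hu.isOpen_inter_preimage hΩ isOpen_ne
  set K : En 2 → Set (En 2) := connectedComponentIn {z ∈ Ω | u z ≠ 0} with hK
  have hmem : ∀ {x}, x ∈ {z ∈ Ω | u z ≠ 0} → K x ∈ nodalComponents u Ω :=
    fun {x} hx => ⟨x, hS ▸ hx, by rw [hS]⟩
  obtain ⟨f, hf⟩ : ∃ f : Set (En 2) → Fin N, InjOn f (nodalComponents u Ω) := by
    have : Nonempty (Fin N) := ⟨⟨0, by omega⟩⟩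
    obtain ⟨f, -, hf⟩ := (hfin.exists_injOn_of_encard_le (t := (univ : Set (Fin N))) (by
      rw [← hfin.cast_ncard_eq, encard_univ]
      simp [hN.le]))
    exact ⟨f, hf⟩
  refine ⟨fun x => f (K x), fun x hx y hy hx0 hy0 hxy => ?_⟩
  have hKxy := hf (hmem ⟨hx, hx0⟩) (hmem ⟨hy, hy0⟩) hxy
  have hxm : x ∈ {z ∈ Ω | u z ≠ 0} := ⟨hx, hx0⟩
  have hym : y ∈ K x := hKxy ▸ mem_connectedComponentIn (⟨hy, hy0⟩ : y ∈ {z ∈ Ω | u z ≠ 0})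
  have hpc := hopen.connectedComponentIn.isConnected_iff_isPathConnected.1
    (isConnected_connectedComponentIn_iff.2 hxm)
  exact (hpc.joinedIn x (mem_connectedComponentIn hxm) y hym).mono
    (connectedComponentIn_subset _ _)

theorem admissible_comp_mul {u : En 2 → ℝ} {r : ℝ} (hr : 0 < r) {N : ℕ} {F : ℂ → ℂ}
    (hF : DifferentiableOn ℂ F (ball 0 r))
    (hFu : ∀ z ∈ ball (0 : ℂ) r, (F z).re = u (Complex.orthonormalBasisOneI.repr z))
    (h0 : ∃ x ∈ ball (0 : En 2) r, u x ≠ 0)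
    (hc : ∃ c : En 2 → Fin N, ∀ x ∈ ball (0 : En 2) r, ∀ y ∈ ball (0 : En 2) r, u x ≠ 0 → u y ≠ 0 →
      c x = c y → JoinedIn {z ∈ ball (0 : En 2) r | u z ≠ 0} x y) :
    Admissible N (fun z => F (r * z)) := by
  set e := Complex.orthonormalBasisOneI.repr with he
  have hrc : (r : ℂ) ≠ 0 := by exact_mod_cast hr.ne'
  have hmem : ∀ {z : ℂ}, z ∈ ball (0 : ℂ) 1 → r * z ∈ ball (0 : ℂ) r := fun {z} hz => by
    rw [mem_ball_zero_iff] at hz ⊢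
    rw [norm_mul, Complex.norm_real, Real.norm_of_nonneg hr.le]
    nlinarith
  have hmem' : ∀ {x : En 2}, x ∈ ball (0 : En 2) r → (r : ℂ)⁻¹ * e.symm x ∈ ball (0 : ℂ) 1 :=
    fun {x} hx => by
      rw [mem_ball_zero_iff] at hx ⊢
      rwa [norm_mul, norm_inv, Complex.norm_real, Real.norm_of_nonneg hr.le, e.symm.norm_map,
        inv_mul_lt_iff₀ hr, mul_one]
  have hmeme : ∀ {z : ℂ}, z ∈ ball (0 : ℂ) r → e z ∈ ball (0 : En 2) r := fun {z} hz => by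
    rw [mem_ball_zero_iff] at hz ⊢
    rwa [e.norm_map]
  have hval : ∀ {x : En 2}, x ∈ ball (0 : En 2) r → (F (r * ((r : ℂ)⁻¹ * e.symm x))).re = u x :=
    fun {x} hx => by
      rw [hFu _ (hmem (hmem' hx)), mul_inv_cancel_left₀ hrc, e.apply_symm_apply]
  obtain ⟨c, hc⟩ := hc
  obtain ⟨x, hx, hx0⟩ := h0
  refine ⟨hF.comp (by fun_prop) fun z hz => hmem hz, ⟨_, hmem' hx, by rwa [hval hx]⟩,
    fun z => c (e (r * z)), fun z hz w hw hz0 hw0 hzw => ?_⟩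
  rw [hFu _ (hmem hz)] at hz0
  rw [hFu _ (hmem hw)] at hw0
  have hj := (hc _ (hmeme (hmem hz)) _ (hmeme (hmem hw)) hz0 hw0 hzw).map
    (f := fun x => (r : ℂ)⁻¹ * e.symm x) (by fun_prop)
  simp only [e.symm_apply_apply, inv_mul_cancel_left₀ hrc] at hj
  refine hj.mono ?_
  rintro _ ⟨y, ⟨hy, hy0⟩, rfl⟩
  exact ⟨hmem' hy, by rwa [hval hy]⟩

theorem exists_hasFDerivAt_re_div_re {F G : ℂ → ℂ} {f g : ℂ} {z : ℂ} (hF : HasDerivAt F f z)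
    (hG : HasDerivAt G g z) (hF0 : (F z).re ≠ 0) (hG0 : (G z).re ≠ 0) :
    ∃ L : ℂ →L[ℝ] ℝ, HasFDerivAt (fun w => (F w).re / (G w).re) L z ∧
      ∀ w, L w = (F z).re / (G z).re * ((f / (F z).re - g / (G z).re) * w).re := by
  have h1 : HasFDerivAt (fun w => (F w).re) (Complex.reCLM.comp (f • (1 : ℂ →L[ℝ] ℂ))) z :=
    Complex.reCLM.hasFDerivAt.comp z hF.complexToReal_fderiv
  have h2 : HasFDerivAt (fun w => (G w).re) (Complex.reCLM.comp (g • (1 : ℂ →L[ℝ] ℂ))) z :=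
    Complex.reCLM.hasFDerivAt.comp z hG.complexToReal_fderiv
  have h3 := h1.mul ((hasDerivAt_inv hG0).comp_hasFDerivAt z h2)
  refine ⟨_, h3.congr_of_eventuallyEq (.of_forall fun w => ?_), fun w => ?_⟩
  · simp [div_eq_mul_inv]
  · simp [Complex.div_ofReal_re, Complex.div_ofReal_im]
    field_simp
    ring

end

theorem stmt10 (N : ℕ) :
    ∃ C > (0 : ℝ), ∀ r : ℝ, 0 < r → ∀ u v : En 2 → ℝ,
      HarmonicOnSet u (ball 0 r) → HarmonicOnSet v (ball 0 r) →
      (∃ x ∈ ball (0 : En 2) r, u x ≠ 0) → (∃ x ∈ ball (0 : En 2) r, v x ≠ 0) →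
      zeroSet u (ball 0 r) = zeroSet v (ball 0 r) →
      (nodalComponents u (ball 0 r)).Finite →
      (nodalComponents u (ball 0 r)).ncard < N →
      v 0 ≠ 0 →
      ‖gradient (fun z => u z / v z) 0‖ ≤ C * r⁻¹ * |u 0 / v 0| := by
  obtain ⟨C, hC, H⟩ := exists_norm_deriv_div_re_sub_le N
  refine ⟨C, hC, fun r hr u v hu hv hu0 hv0 huv hfin hN hv00 => ?_⟩
  set e := Complex.orthonormalBasisOneI.repr with he
  have hnod : nodalComponents v (ball 0 r) = nodalComponents u (ball 0 r) := by
    simp only [nodalComponents, huv]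
  have hz : ∀ x ∈ ball (0 : En 2) r, u x = 0 ↔ v x = 0 := fun x hx => by
    have := congrArg (x ∈ ·) huv
    simpa [zeroSet, mem_ball_zero_iff.1 hx] using this
  have hmem : ∀ {z : ℂ}, z ∈ ball (0 : ℂ) r → e z ∈ ball (0 : En 2) r := fun {z} hz => by
    rw [mem_ball_zero_iff] at hz ⊢
    rwa [e.norm_map]
  have h0r : (0 : ℂ) ∈ ball 0 r := mem_ball_self hr
  have hu00 : u 0 ≠ 0 := fun h => hv00 ((hz 0 (mem_ball_self hr)).1 h)
  obtain ⟨F, hF, hFi, hFu⟩ := hu.exists_differentiableOn_re_eq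
  obtain ⟨G, hG, hGi, hGv⟩ := hv.exists_differentiableOn_re_eq
  have hFA := admissible_comp_mul hr hF hFu hu0
    (exists_coloring_joinedIn_of_ncard_lt isOpen_ball hu.1.continuousOn hfin hN)
  have hGA := admissible_comp_mul hr hG hGv hv0
    (exists_coloring_joinedIn_of_ncard_lt isOpen_ball hv.1.continuousOn (hnod ▸ hfin) (hnod ▸ hN))
  have hF0 : (F 0).re = u 0 := by rw [hFu 0 h0r, map_zero]
  have hG0 : (G 0).re = v 0 := by rw [hGv 0 h0r, map_zero]
  have hD := H _ _ hFA hGA (by rwa [mul_zero]) (by rwa [mul_zero]) (fun z hzm => by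
    have hrz : (r : ℂ) * z ∈ ball (0 : ℂ) r := by
      rw [mem_ball_zero_iff] at hzm ⊢
      rw [norm_mul, Complex.norm_real, Real.norm_of_nonneg hr.le]
      nlinarith
    rw [hFu _ hrz, hGv _ hrz]
    exact hz _ (hmem hrz)) (by rwa [mul_zero, hG0])
  rw [deriv_comp_mul_left, deriv_comp_mul_left, mul_zero, smul_eq_mul, smul_eq_mul, mul_div_assoc,
    mul_div_assoc, ← mul_sub, norm_mul, Complex.norm_real, Real.norm_of_nonneg hr.le] at hD
  obtain ⟨L, hL, hLw⟩ := exists_hasFDerivAt_re_div_re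
    (hF.differentiableAt (isOpen_ball.mem_nhds h0r)).hasDerivAt
    (hG.differentiableAt (isOpen_ball.mem_nhds h0r)).hasDerivAt
    (by rwa [hF0]) (by rwa [hG0])
  have hes : (e.symm : En 2 → ℂ) 0 = 0 := map_zero _
  have h1 : HasFDerivAt (fun z => u z / v z)
      (L.comp (e.symm.toContinuousLinearEquiv : En 2 →L[ℝ] ℂ)) 0 := by
    have h2 : HasFDerivAt ((fun w => (F w).re / (G w).re) ∘ e.symm)
        (L.comp (e.symm.toContinuousLinearEquiv : En 2 →L[ℝ] ℂ)) 0 :=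
      HasFDerivAt.comp 0 (by rwa [hes]) e.symm.toContinuousLinearEquiv.hasFDerivAt
    refine h2.congr_of_eventuallyEq ?_
    filter_upwards [ball_mem_nhds (0 : En 2) hr] with x hx
    have hx' : e.symm x ∈ ball (0 : ℂ) r := by
      rw [mem_ball_zero_iff] at hx ⊢
      rwa [e.symm.norm_map]
    simp only [Function.comp_apply]
    rw [hFu _ hx', hGv _ hx', e.apply_symm_apply]
  rw [gradient, LinearIsometryEquiv.norm_map, h1.fderiv]
  refine ContinuousLinearMap.opNorm_le_bound _ (by positivity) fun x => ?_
  change ‖L (e.symm x)‖ ≤ _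
  rw [hLw, norm_mul, Real.norm_eq_abs, Real.norm_eq_abs, hF0, hG0, mul_comm (C * r⁻¹), mul_assoc]
  refine mul_le_mul_of_nonneg_left ?_ (abs_nonneg _)
  refine (Complex.abs_re_le_norm _).trans ?_
  rw [norm_mul, e.symm.norm_map]
  refine mul_le_mul_of_nonneg_right ?_ (norm_nonneg _)
  rw [← div_eq_mul_inv, le_div_iff₀ hr, mul_comm]
  simpa [hF0, hG0] using hD
end
end

section
/- There exists a constant K > 1 depending only on the dimension n with the following property: for every harmonic function u on the open unit ball B₁ ⊂ ℝⁿ with Z(u) ∩ B_{1/2} ≠ ∅, and every point x ∈ B_{1/4} satisfying u(x) ≠ 0 and dist(x, Z(u)) < (4K)⁻¹, there exists a point x̃ with |x̃ − x| ≤ K · dist(x, Z(u)) and |u(x̃)| ≥ 2|u(x)|. -/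
open Metric Set Filter

noncomputable section

open scoped Topology RealInnerProductSpace

/-- Second derivative test at a local maximum. -/
lemma second_deriv_nonpos_of_isLocalMax {f f' : ℝ → ℝ} {q : ℝ}
    (h₁ : ∀ᶠ s in 𝓝 (0 : ℝ), HasDerivAt f (f' s) s) (h₂ : HasDerivAt f' q 0)
    (hm : IsLocalMax f 0) : q ≤ 0 := by
  by_contra! hq
  have h₀ : f' 0 = 0 := hm.hasDerivAt_eq_zero h₁.self_of_nhds
  have hg : ∀ᶠ s in 𝓝 (0 : ℝ),
      HasDerivAt (fun s => f s - q / 4 * s ^ 2) (f' s - q / 2 * s) s := by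
    filter_upwards [h₁] with s hs
    refine (hs.sub ((hasDerivAt_pow 2 s).const_mul (q / 4))).congr_deriv ?_
    push_cast
    ring
  have hg' : deriv (fun s => f s - q / 4 * s ^ 2) =ᶠ[𝓝 0] fun s => f' s - q / 2 * s :=
    hg.mono fun s hs => hs.deriv
  have hd : HasDerivAt (fun s => f' s - q / 2 * s) (q - q / 2) 0 :=
    (h₂.sub ((hasDerivAt_id (0 : ℝ)).const_mul (q / 2))).congr_deriv (by ring)
  have hmin : IsLocalMin (fun s => f s - q / 4 * s ^ 2) 0 := by
    apply isLocalMin_of_deriv_deriv_pos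
    · rw [hg'.deriv_eq, hd.deriv]
      linarith
    · rw [hg'.self_of_nhds]
      simp [h₀]
    · exact hg.self_of_nhds.continuousAt
  have hne : ∀ᶠ s in 𝓝[≠] (0 : ℝ), s ≠ 0 := eventually_mem_nhdsWithin
  obtain ⟨s, hs, hs₁, hs₂⟩ := (hne.and
    (nhdsWithin_le_nhds (hmin.and hm))).exists
  have : 0 < s ^ 2 := by positivity
  simp only [] at hs₁
  nlinarith

/-- First and second derivatives of a `C²` function along a line. -/
lemma ContDiffAt.hasDerivAt_along_line {E : Type*} [NormedAddCommGroup E] [NormedSpace ℝ E]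
    {f : E → ℝ} {c : E} (hf : ContDiffAt ℝ 2 f c) (v : E) :
    (∀ᶠ s in 𝓝 (0 : ℝ),
      HasDerivAt (fun s : ℝ => f (c + s • v)) (fderiv ℝ f (c + s • v) v) s) ∧
    HasDerivAt (fun s : ℝ => fderiv ℝ f (c + s • v) v) (iteratedFDeriv ℝ 2 f c ![v, v]) 0 := by
  have hline : ∀ s : ℝ, HasDerivAt (fun s : ℝ => c + s • v) v s := fun s => by
    simpa using ((hasDerivAt_id s).smul_const v).const_add c
  have hlim : Tendsto (fun s : ℝ => c + s • v) (𝓝 0) (𝓝 c) := by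
    simpa using (hline 0).continuousAt.tendsto
  constructor
  · have hd : ∀ᶠ y in 𝓝 c, DifferentiableAt ℝ f y :=
      (hf.eventually (by simp)).mono fun y hy => hy.differentiableAt (by simp)
    filter_upwards [hlim.eventually hd] with s hs
    exact hs.hasFDerivAt.comp_hasDerivAt s (hline s)
  · have hd : DifferentiableAt ℝ (fderiv ℝ f) (c + (0 : ℝ) • v) := by
      have h : ContDiffAt ℝ 1 (fderiv ℝ f) c := hf.fderiv_right (by norm_num)
      rw [zero_smul, add_zero]
      exact h.differentiableAt one_ne_zero
    have h₁ : HasDerivAt (fun s : ℝ => fderiv ℝ f (c + s • v))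
        (fderiv ℝ (fderiv ℝ f) (c + (0 : ℝ) • v) v) 0 :=
      hd.hasFDerivAt.comp_hasDerivAt (0 : ℝ) (hline 0)
    have h₂ : HasDerivAt (fun s : ℝ => fderiv ℝ f (c + s • v) v)
        (fderiv ℝ (fderiv ℝ f) (c + (0 : ℝ) • v) v v) 0 :=
      (ContinuousLinearMap.apply ℝ ℝ v).hasFDerivAt.comp_hasDerivAt (0 : ℝ) h₁
    rw [zero_smul, add_zero] at h₂
    rw [iteratedFDeriv_two_apply]
    exact h₂

lemma laplacianAt_eq_sum_orthonormalBasis {n : ℕ} (u : En n → ℝ) (x : En n)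
    (b : OrthonormalBasis (Fin n) ℝ (En n)) :
    laplacianAt u x = ∑ i, iteratedFDeriv ℝ 2 u x ![b i, b i] := by
  rw [← congrFun (InnerProductSpace.laplacian_eq_iteratedFDeriv_orthonormalBasis u b) x,
    congrFun (InnerProductSpace.laplacian_eq_iteratedFDeriv_orthonormalBasis u
      (EuclideanSpace.basisFun (Fin n) ℝ)) x]
  simp [laplacianAt]

/-- A harmonic function `u` with `|u| ≤ A` on a closed ball, antisymmetrized across a hyperplane
through the centre, is bounded by an explicit barrier on the half ball. -/
lemma antisymmetrization_le_barrier {n : ℕ} {u : En n → ℝ} {Ω : Set (En n)} (hΩ : IsOpen Ω)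
    (hu : HarmonicOnSet u Ω) {m : En n} {r A : ℝ} (hr : 0 < r) (hA : 0 < A)
    (hball : closedBall m r ⊆ Ω) (hbd : ∀ y ∈ closedBall m r, |u y| ≤ A)
    {e : En n} (he : ‖e‖ = 1) {w : En n} (hw : ‖w‖ ≤ r) (hwe : 0 ≤ ⟪w, e⟫) :
    u (m + w) - u (m + (ℝ ∙ e)ᗮ.reflection w) ≤
      2 * A * (‖w‖ ^ 2 / r ^ 2 + (n + 1) * (⟪w, e⟫ / r - ⟪w, e⟫ ^ 2 / r ^ 2)) := by
  set R := (ℝ ∙ e)ᗮ.reflection with hR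
  set φ : En n → ℝ := fun w =>
    2 * A * (‖w‖ ^ 2 / r ^ 2 + (n + 1) * (⟪w, e⟫ / r - ⟪w, e⟫ ^ 2 / r ^ 2)) with hφ
  set g : En n → ℝ := fun w => u (m + w) - u (m + R w) - φ w with hg
  have hmem : ∀ w : En n, ‖w‖ ≤ r → m + w ∈ closedBall m r := fun w hw => by
    simpa [mem_closedBall, dist_eq_norm] using hw
  have hcd : ∀ w : En n, ‖w‖ ≤ r → ContDiffAt ℝ 2 u (m + w) := fun w hw =>
    hu.1.contDiffAt (hΩ.mem_nhds (hball (hmem w hw)))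
  have hRn : ∀ w : En n, ‖R w‖ = ‖w‖ := fun w => R.norm_map w
  set S : Set (En n) := closedBall 0 r ∩ {w | 0 ≤ ⟪w, e⟫} with hS
  have hScomp : IsCompact S := (isCompact_closedBall _ _).inter_right
    (isClosed_le continuous_const (by fun_prop))
  have hgc : ∀ w : En n, ‖w‖ ≤ r → ContinuousAt g w := fun w hw => by
    have h₁ : ContinuousAt (fun w => u (m + w)) w :=
      ContinuousAt.comp (f := fun w => m + w) (hcd w hw).continuousAt (by fun_prop)
    have h₂ : ContinuousAt (fun w => u (m + R w)) w :=
      ContinuousAt.comp (f := fun w => m + R w)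
        (hcd (R w) ((hRn w).le.trans hw)).continuousAt (by fun_prop)
    exact (h₁.sub h₂).sub (by fun_prop)
  obtain ⟨w₀, hw₀, hmax⟩ := hScomp.exists_isMaxOn ⟨w, by simpa using hw, hwe⟩
    (f := g) fun w hw => (hgc w (by simpa using hw.1)).continuousWithinAt
  suffices hg₀ : g w₀ ≤ 0 by
    have : g w ≤ g w₀ := hmax ⟨by simpa using hw, hwe⟩
    simp only [hg, hφ] at this hg₀ ⊢
    linarith
  have hw₀r : ‖w₀‖ ≤ r := by simpa using hw₀.1
  have ht₀ : 0 ≤ ⟪w₀, e⟫ := hw₀.2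
  have htle : ⟪w₀, e⟫ ≤ r := by
    have := real_inner_le_norm w₀ e
    rw [he, mul_one] at this
    linarith
  have hpar : 0 ≤ ⟪w₀, e⟫ / r - ⟪w₀, e⟫ ^ 2 / r ^ 2 := by
    have h1 : ⟪w₀, e⟫ / r ≤ 1 := (div_le_one hr).2 htle
    have h0 : 0 ≤ ⟪w₀, e⟫ / r := by positivity
    rw [← div_pow]
    nlinarith
  rcases hw₀r.eq_or_lt with hsph | hlt
  · have h1 := abs_le.1 (hbd _ (hmem w₀ hw₀r))
    have h2 := abs_le.1 (hbd _ (hmem (R w₀) ((hRn w₀).le.trans hw₀r)))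
    have h3 : 2 * A * 1 ≤ φ w₀ := by
      simp only [hφ]
      gcongr
      rw [hsph, div_self (by positivity)]
      have : (0 : ℝ) ≤ (n + 1) * (⟪w₀, e⟫ / r - ⟪w₀, e⟫ ^ 2 / r ^ 2) := by positivity
      linarith
    simp only [hg]
    linarith
  rcases ht₀.eq_or_lt with hflat | hpos
  · have hRw : R w₀ = w₀ := by
      apply Submodule.reflection_mem_subspace_eq_self
      rw [Submodule.mem_orthogonal_singleton_iff_inner_left]
      exact hflat.symm
    simp only [hg, hφ, hRw, ← hflat]
    simp
    positivity
  exfalso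
  have hloc : IsLocalMax g w₀ := by
    have hS₀ : S ∈ 𝓝 w₀ := by
      apply inter_mem
      · exact mem_of_superset (isOpen_ball.mem_nhds (by simpa using hlt)) ball_subset_closedBall
      · exact ((continuousAt_const (y := (0 : ℝ))).eventually_lt
          (show ContinuousAt (fun w => ⟪w, e⟫) w₀ by fun_prop) hpos).mono fun _ h => le_of_lt h
    exact hmax.isLocalMax hS₀
  have hdir : ∀ b : En n, ‖b‖ = 1 →
      iteratedFDeriv ℝ 2 u (m + w₀) ![b, b] - iteratedFDeriv ℝ 2 u (m + R w₀) ![R b, R b] -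
        4 * A / r ^ 2 * (1 - (n + 1) * ⟪b, e⟫ ^ 2) ≤ 0 := fun b hb => by
    obtain ⟨h1, h1'⟩ := (hcd w₀ hw₀r).hasDerivAt_along_line b
    obtain ⟨h2, h2'⟩ := (hcd (R w₀) ((hRn w₀).le.trans hw₀r)).hasDerivAt_along_line (R b)
    have hφline : ∀ s : ℝ, φ (w₀ + s • b) = 2 * A * ((‖w₀‖ ^ 2 + 2 * ⟪w₀, b⟫ * s + s ^ 2) / r ^ 2 +
        (n + 1) * ((⟪w₀, e⟫ + ⟪b, e⟫ * s) / r - (⟪w₀, e⟫ + ⟪b, e⟫ * s) ^ 2 / r ^ 2)) := fun s => by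
      simp only [hφ, norm_add_sq_real, inner_add_left, inner_smul_left, inner_smul_right, norm_smul,
        hb, mul_one, Real.norm_eq_abs, sq_abs, RCLike.conj_to_real]
      ring
    have hq : ∀ s : ℝ, HasDerivAt (fun s : ℝ => φ (w₀ + s • b))
        (2 * A * ((2 * ⟪w₀, b⟫ + 2 * s) / r ^ 2 +
        (n + 1) * (⟪b, e⟫ / r - 2 * (⟪w₀, e⟫ + ⟪b, e⟫ * s) * ⟪b, e⟫ / r ^ 2))) s := fun s => by
      simp only [hφline]
      have hl := ((hasDerivAt_id s).const_mul ⟪b, e⟫).const_add ⟪w₀, e⟫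
      have hn := (((hasDerivAt_id s).const_mul (2 * ⟪w₀, b⟫)).const_add (‖w₀‖ ^ 2)).add
        (hasDerivAt_pow 2 s)
      refine (((hn.div_const (r ^ 2)).add (((hl.div_const r).sub
        ((hl.pow 2).div_const (r ^ 2))).const_mul ((n : ℝ) + 1))).const_mul (2 * A)).congr_deriv ?_
      simp
    have hq' : HasDerivAt (fun s : ℝ => 2 * A * ((2 * ⟪w₀, b⟫ + 2 * s) / r ^ 2 +
        (n + 1) * (⟪b, e⟫ / r - 2 * (⟪w₀, e⟫ + ⟪b, e⟫ * s) * ⟪b, e⟫ / r ^ 2)))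
        (4 * A / r ^ 2 * (1 - (n + 1) * ⟪b, e⟫ ^ 2)) 0 := by
      have hl := ((hasDerivAt_id (0 : ℝ)).const_mul ⟪b, e⟫).const_add ⟪w₀, e⟫
      have hn := ((hasDerivAt_id (0 : ℝ)).const_mul 2).const_add (2 * ⟪w₀, b⟫)
      refine (((hn.div_const (r ^ 2)).add (((((hl.const_mul 2).mul_const ⟪b, e⟫).div_const
        (r ^ 2)).const_sub (⟪b, e⟫ / r)).const_mul ((n : ℝ) + 1))).const_mul
          (2 * A)).congr_deriv ?_
      ring
    have hgl : ∀ s : ℝ, g (w₀ + s • b) =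
        u (m + w₀ + s • b) - u (m + R w₀ + s • R b) - φ (w₀ + s • b) := fun s => by
      simp [hg, add_assoc]
    refine second_deriv_nonpos_of_isLocalMax (f := fun s : ℝ => g (w₀ + s • b)) ?_
      ((h1'.sub h2').sub hq') ?_
    · simp only [hgl]
      filter_upwards [h1, h2] with s hs1 hs2
      exact (hs1.sub hs2).sub (hq s)
    · have hlim : Tendsto (fun s : ℝ => w₀ + s • b) (𝓝 0) (𝓝 w₀) := by
        have : Continuous fun s : ℝ => w₀ + s • b := by fun_prop
        simpa using this.tendsto 0
      have := hlim.eventually hloc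
      simpa [IsLocalMax, IsMaxFilter] using this
  set b := EuclideanSpace.basisFun (Fin n) ℝ
  have hsum := Finset.sum_nonpos fun i (_ : i ∈ Finset.univ) => hdir (b i) (b.norm_eq_one i)
  have hL1 := laplacianAt_eq_sum_orthonormalBasis u (m + w₀) b
  have hL2 := laplacianAt_eq_sum_orthonormalBasis u (m + R w₀) (b.map R)
  rw [hu.2 _ (hball (hmem _ hw₀r))] at hL1
  rw [hu.2 _ (hball (hmem _ ((hRn w₀).le.trans hw₀r)))] at hL2
  simp only [OrthonormalBasis.map_apply] at hL2
  rw [Finset.sum_sub_distrib, Finset.sum_sub_distrib, ← hL1, ← hL2, ← Finset.mul_sum,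
    Finset.sum_sub_distrib, ← Finset.mul_sum, b.sum_sq_inner_right, he] at hsum
  have : 0 < 4 * A / r ^ 2 := by positivity
  simp at hsum
  linarith

/-- Quantitative continuity of bounded harmonic functions. -/
lemma HarmonicOnSet.sub_le_of_abs_le {n : ℕ} {u : En n → ℝ} {Ω : Set (En n)} (hΩ : IsOpen Ω)
    (hu : HarmonicOnSet u Ω) {m p : En n} {r A : ℝ} (hr : 0 < r) (hA : 0 < A)
    (hball : closedBall m r ⊆ Ω) (hbd : ∀ y ∈ closedBall m r, |u y| ≤ A)
    (hp : p ≠ 0) (hpr : ‖p‖ ≤ r) :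
    u (m + p) - u (m - p) ≤ 2 * A * (n + 2) * (‖p‖ / r) := by
  have hp' : 0 < ‖p‖ := norm_pos_iff.2 hp
  set e : En n := ‖p‖⁻¹ • p with he
  have hpe : ⟪p, e⟫ = ‖p‖ := by
    rw [he, inner_smul_right, real_inner_self_eq_norm_sq]
    field_simp
  have hne : ‖e‖ = 1 := by
    rw [he, norm_smul, norm_inv, norm_norm, inv_mul_cancel₀ hp'.ne']
  have hRp : (ℝ ∙ e)ᗮ.reflection p = -p := by
    have hpe' : p = ‖p‖ • e := by rw [he, smul_smul, mul_inv_cancel₀ hp'.ne', one_smul]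
    rw [hpe', map_smul, Submodule.reflection_orthogonalComplement_singleton_eq_neg, smul_neg]
  have h := antisymmetrization_le_barrier hΩ hu hr hA hball hbd hne hpr (by rw [hpe]; positivity)
  rw [hpe, hRp, ← sub_eq_add_neg, ← div_pow] at h
  refine h.trans ?_
  rw [mul_assoc (2 * A)]
  gcongr
  have h0 : 0 ≤ ‖p‖ / r := by positivity
  have h1 : ‖p‖ / r ≤ 1 := (div_le_one hr).2 hpr
  have hn : (0 : ℝ) ≤ n := n.cast_nonneg
  have : 0 ≤ (n : ℝ) * (‖p‖ / r) ^ 2 := by positivity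
  nlinarith

theorem stmt11 (n : ℕ) :
    ∃ K : ℝ, 1 < K ∧ ∀ u : En n → ℝ,
      HarmonicOnSet u (ball 0 1) →
      (zeroSet u (ball 0 1) ∩ ball (0 : En n) (1/2)).Nonempty →
      ∀ x ∈ ball (0 : En n) (1/4), u x ≠ 0 →
        infDist x (zeroSet u (ball 0 1)) < (4 * K)⁻¹ →
        ∃ x' ∈ ball (0 : En n) 1,
          dist x' x ≤ K * infDist x (zeroSet u (ball 0 1)) ∧ 2 * |u x| ≤ |u x'| := by
  have hn : (0 : ℝ) ≤ n := n.cast_nonneg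
  refine ⟨8 * (n + 2), by linarith, ?_⟩
  set K : ℝ := 8 * (n + 2) with hK
  have hK16 : 16 ≤ K := by linarith
  intro u hu hne x hx hux hd
  set Z := zeroSet u (ball 0 1) with hZ
  have hZne : Z.Nonempty := hne.mono inter_subset_left
  set d := infDist x Z
  have hx1 : x ∈ ball (0 : En n) 1 := ball_subset_ball (by norm_num) hx
  have hd0 : 0 < d := by
    refine (infDist_pos_iff_notMem_closure hZne).1 fun hcl => ?_
    have hev : ∀ᶠ y in 𝓝 x, u y ≠ 0 :=
      (hu.1.contDiffAt (isOpen_ball.mem_nhds hx1)).continuousAt.eventually_ne hux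
    obtain ⟨y, hy, hyZ⟩ := mem_closure_iff_nhds.1 hcl _ hev
    exact hy hyZ.2
  obtain ⟨z, hz, hxz⟩ := (infDist_lt_iff hZne).1 (show infDist x Z < 2 * d by linarith)
  by_contra! hcon
  have hKd : K * d < 1 / 4 := by
    calc K * d < K * (4 * K)⁻¹ := by gcongr
      _ = 1 / 4 := by field_simp
  have hM : 0 < |u x| := abs_pos.2 hux
  set p : En n := (2⁻¹ : ℝ) • (x - z) with hp
  set m : En n := (2⁻¹ : ℝ) • (x + z) with hm
  have hmp : m + p = x := by rw [hm, hp]; module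
  have hmp' : m - p = z := by rw [hm, hp]; module
  have hpd : ‖p‖ < d := by
    rw [hp, norm_smul, ← dist_eq_norm]
    norm_num
    linarith
  have hp0 : p ≠ 0 := by
    intro h
    apply hux
    have hxz : x = z := by rw [← hmp, ← hmp', h, add_zero, sub_zero]
    rw [hxz]
    exact hz.2
  have hnear : ∀ y ∈ closedBall m (K * d / 2), y ∈ ball (0 : En n) 1 ∧ dist y x ≤ K * d := by
    intro y hy
    have hmx : dist m x = ‖p‖ := by rw [← hmp, dist_self_add_right]
    have hyx : dist y x ≤ K * d := by
      have := dist_triangle y m x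
      have := mem_closedBall.1 hy
      nlinarith
    refine ⟨?_, hyx⟩
    have := dist_triangle y x 0
    have := mem_ball.1 hx
    rw [mem_ball]
    linarith
  have hball : closedBall m (K * d / 2) ⊆ ball 0 1 := fun y hy => (hnear y hy).1
  have hbd : ∀ y ∈ closedBall m (K * d / 2), |u y| ≤ 2 * |u x| := fun y hy =>
    (hcon y (hnear y hy).1 (hnear y hy).2).le
  have hr : 0 < K * d / 2 := by positivity
  have hpr : ‖p‖ ≤ K * d / 2 := by nlinarith
  have h1 := hu.sub_le_of_abs_le isOpen_ball hr (by positivity : 0 < 2 * |u x|) hball hbd hp0 hpr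
  have h2 := hu.sub_le_of_abs_le isOpen_ball hr (by positivity : 0 < 2 * |u x|) hball hbd
    (neg_ne_zero.2 hp0) (by rwa [norm_neg])
  rw [norm_neg, sub_neg_eq_add, ← sub_eq_add_neg] at h2
  rw [hmp, hmp', hz.2] at h1 h2
  have hle : |u x| ≤ 2 * (2 * |u x|) * (n + 2) * (‖p‖ / (K * d / 2)) :=
    abs_le'.2 ⟨by linarith, by linarith⟩
  have hlt : 2 * (2 * |u x|) * (n + 2) * (‖p‖ / (K * d / 2)) < |u x| := by
    calc 2 * (2 * |u x|) * (n + 2) * (‖p‖ / (K * d / 2))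
        < 2 * (2 * |u x|) * (n + 2) * (d / (K * d / 2)) := by gcongr
      _ = |u x| := by rw [hK]; field_simp; ring
  linarith
end
end
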